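/- arXiv:1206.1671 — 2 statements merged into one kernel-verified Lean document; each statement's English description precedes it below -/
import Mathlib

section
/- For every nonempty bounded open set A ⊂ ℝ^d, the limiting derivative martingale measure does not possess a moment of order 1: E[M'(A)] = +∞, where M'(A) is the almost sure limit as t → ∞ of M'_t(A) = ∫_A (√(2d)·t − X_t(x)) e^{√(2d)·X_t(x) − d·t} dx. -/
open MeasureTheory ProbabilityTheory Filter

noncomputable section

open scoped ENNReal NNReal Topology

/-!
For a barrier `β ≥ 0` let `Z_n` be the integral over `A` of `(β + c n - X_n) e^{c X_n - c² n / 2}`,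
`c = √(2 d)`, restricted to the points whose path has stayed below `β + c j` for all integers
`j ≤ n`. The exponential weight turns the distance of the path to the barrier into a standard
Gaussian walk killed below `0`, for which the identity is subharmonic; hence `E Z_n ≥ β |A|`.

The second moment of `Z_n` is bounded uniformly in `n`: two points at distance `e^{-s}` decouple at
time `s`, so it is controlled by the Green function of the killed walk, which is bounded by a
superharmonic majorant. Finally `Z_n ≤ 2 M'_n + F_n`, where `F_n` is the mass near or below the
critical level. Comparing `X_n` with its value at the center of balls of radius `e^{-n}` shows that
`F_n` tends to `0` in probability. Uniform integrability of `Z_n` gives `2 E[M'(A)] ≥ β |A|` for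
every `β`.
-/

section KilledWalk

/-- Transition operator of the standard Gaussian random walk killed on leaving `[0, ∞)`. -/
def killedStep (φ : ℝ → ℝ≥0∞) (b : ℝ) : ℝ≥0∞ :=
  ∫⁻ x, (Set.Ici 0).indicator φ (b + x) ∂gaussianReal 0 1

variable {φ ψ : ℝ → ℝ≥0∞}

lemma measurable_killedStep (hφ : Measurable φ) : Measurable (killedStep φ) :=
  Measurable.lintegral_prod_right' (f := fun p : ℝ × ℝ ↦ (Set.Ici 0).indicator φ (p.1 + p.2))
    ((hφ.indicator measurableSet_Ici).comp measurable_add)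

lemma measurable_iterate_killedStep (hφ : Measurable φ) (n : ℕ) :
    Measurable (killedStep^[n] φ) := by
  induction n with
  | zero => exact hφ
  | succ n ih => rw [Function.iterate_succ_apply']; exact measurable_killedStep ih

lemma killedStep_le_killedStep (h : ∀ b, 0 ≤ b → φ b ≤ ψ b) (b : ℝ) :
    killedStep φ b ≤ killedStep ψ b :=
  lintegral_mono fun x ↦ Set.indicator_le_indicator' (h (b + x))

lemma monotone_killedStep : Monotone killedStep :=
  fun _ _ h ↦ killedStep_le_killedStep fun b _ ↦ h b

lemma killedStep_finset_sum {ι : Type*} (s : Finset ι) {f : ι → ℝ → ℝ≥0∞}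
    (hf : ∀ i ∈ s, Measurable (f i)) :
    killedStep (∑ i ∈ s, f i) = ∑ i ∈ s, killedStep (f i) := by
  ext b
  simp only [killedStep, Finset.indicator_sum, Finset.sum_apply]
  exact lintegral_finsetSum _ fun i hi ↦
    ((hf i hi).indicator measurableSet_Ici).comp (measurable_const_add b)

lemma sum_iterate_killedStep_le (hφ : Measurable φ)
    (h : ∀ b, 0 ≤ b → killedStep ψ b + φ b ≤ ψ b) (n : ℕ) {b : ℝ} (hb : 0 ≤ b) :
    ∑ s ∈ Finset.range n, killedStep^[s] φ b ≤ ψ b := by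
  induction n generalizing b with
  | zero => simp
  | succ n ih =>
    have hsum : ∑ s ∈ Finset.range n, killedStep^[s + 1] φ b
        = killedStep (∑ s ∈ Finset.range n, killedStep^[s] φ) b := by
      rw [killedStep_finset_sum _ fun s _ ↦ measurable_iterate_killedStep hφ s,
        Finset.sum_apply]
      simp only [Function.iterate_succ_apply']
    rw [Finset.sum_range_succ', hsum]
    exact (add_le_add_left (killedStep_le_killedStep
      (fun x hx ↦ by simpa only [Finset.sum_apply] using ih hx) b) _).trans (h b hb)

lemma integrable_id_gaussianReal (m : ℝ) (v : ℝ≥0) :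
    Integrable (fun x : ℝ ↦ x) (gaussianReal m v) :=
  memLp_one_iff_integrable.1 (memLp_id_gaussianReal 1)

lemma integral_exp_mul_gaussianReal (v : ℝ≥0) (t : ℝ) :
    ∫ x, Real.exp (t * x) ∂gaussianReal 0 v = Real.exp (v * t ^ 2 / 2) := by
  simpa [mgf] using congrFun (mgf_id_gaussianReal (μ := 0) (v := v)) t

lemma lintegral_sub_mul_exp_gaussianReal (c : ℝ) {f : ℝ → ℝ≥0∞} (hf : Measurable f) :
    ∫⁻ x, f (c - x) * ENNReal.ofReal (Real.exp (c * x - c ^ 2 / 2)) ∂gaussianReal 0 1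
      = ∫⁻ x, f x ∂gaussianReal 0 1 := by
  rw [gaussianReal_of_var_ne_zero _ one_ne_zero,
    lintegral_withDensity_eq_lintegral_mul _ (measurable_gaussianPDF _ _) (by fun_prop),
    lintegral_withDensity_eq_lintegral_mul _ (measurable_gaussianPDF _ _) hf,
    ← lintegral_sub_left_eq_self (gaussianPDF 0 1 * f) c]
  refine lintegral_congr fun x ↦ ?_
  simp only [Pi.mul_apply, gaussianPDF, gaussianPDFReal]
  rw [mul_comm (f _), ← mul_assoc, ← ENNReal.ofReal_mul (by positivity), mul_assoc, ← Real.exp_add]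
  congr 4
  push_cast
  ring

lemma ofReal_integral_le_lintegral_ofReal {α : Type*} [MeasurableSpace α] {μ : Measure α}
    {f : α → ℝ} (hf : Integrable f μ) :
    ENNReal.ofReal (∫ x, f x ∂μ) ≤ ∫⁻ x, ENNReal.ofReal (f x) ∂μ := by
  rw [integral_eq_lintegral_pos_part_sub_lintegral_neg_part hf]
  exact (ENNReal.ofReal_le_ofReal (sub_le_self _ ENNReal.toReal_nonneg)).trans
    ENNReal.ofReal_toReal_le

lemma ofReal_le_killedStep_ofReal : ENNReal.ofReal ≤ killedStep ENNReal.ofReal := by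
  intro b
  have hid := integrable_id_gaussianReal 0 1
  have hint : Integrable (fun x : ℝ ↦ b + x) (gaussianReal 0 1) := (integrable_const b).add hid
  calc ENNReal.ofReal b = ENNReal.ofReal (∫ x, (b + x) ∂gaussianReal 0 1) := by
        rw [integral_add (integrable_const _) hid, integral_id_gaussianReal]; simp
    _ ≤ ∫⁻ x, ENNReal.ofReal (b + x) ∂gaussianReal 0 1 := ofReal_integral_le_lintegral_ofReal hint
    _ = killedStep ENNReal.ofReal b := by
        refine lintegral_congr fun x ↦ ?_
        rcases le_or_gt 0 (b + x) with h | h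
        · rw [Set.indicator_of_mem (Set.mem_Ici.2 h)]
        · rw [Set.indicator_of_notMem (by simpa using h), ENNReal.ofReal_of_nonpos h.le]

lemma ofReal_le_iterate_killedStep_ofReal (n : ℕ) :
    ENNReal.ofReal ≤ killedStep^[n] ENNReal.ofReal :=
  monotone_killedStep.monotone_iterate_of_le_map ofReal_le_killedStep_ofReal (Nat.zero_le n)

/-- Superharmonic majorant of the Green function of the killed Gaussian walk for the potential
`b ↦ exp (-b)`; the constants leave enough room for the overshoot below `0`. -/
def greenMajorant (b : ℝ) : ℝ := b + 4 * (36 - Real.exp (-b))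

lemma measurable_greenMajorant : Measurable greenMajorant := by
  unfold greenMajorant; fun_prop

variable {b : ℝ}

lemma le_greenMajorant (hb : 0 ≤ b) : b ≤ greenMajorant b := by
  have : Real.exp (-b) ≤ 1 := Real.exp_le_one_iff.2 (by linarith)
  unfold greenMajorant; linarith

lemma greenMajorant_sq_mul_exp_le {c : ℝ} (hc : 7 / 5 ≤ c) (hb : 0 ≤ b) :
    greenMajorant b ^ 2 * Real.exp (-(c * b)) ≤ 149 ^ 2 * Real.exp (-b) := by
  have hlin : greenMajorant b ≤ 149 * Real.exp (b / 5) := by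
    have := Real.add_one_le_exp (b / 5)
    have := Real.exp_pos (-b)
    unfold greenMajorant; linarith
  calc greenMajorant b ^ 2 * Real.exp (-(c * b))
      ≤ (149 * Real.exp (b / 5)) ^ 2 * Real.exp (-(7 / 5 * b)) := by
        have := hb.trans (le_greenMajorant hb)
        gcongr
    _ = 149 ^ 2 * Real.exp (-b) := by
        rw [mul_pow, ← Real.exp_nat_mul, mul_assoc, ← Real.exp_add]; congr 2; push_cast; ring

/-- Upper bound for `greenMajorant (b + x)` that stays nonnegative for `b + x < 0`. -/
def greenMajorantBound (b x : ℝ) : ℝ :=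
  b + x + 4 * (36 - Real.exp (-b) * Real.exp (-1 * x) + Real.exp (-b) / 36 * Real.exp (-2 * x))

lemma integrable_greenMajorantBound (b : ℝ) :
    Integrable (greenMajorantBound b) (gaussianReal 0 1) :=
  ((integrable_const b).add (integrable_id_gaussianReal 0 1)).add <| (((integrable_const _).sub
    ((integrable_exp_mul_gaussianReal _).const_mul _)).add
      ((integrable_exp_mul_gaussianReal _).const_mul _)).const_mul _

lemma integral_greenMajorantBound (b : ℝ) :
    ∫ x, greenMajorantBound b x ∂gaussianReal 0 1
      = b + 4 * (36 - Real.exp (-b) * Real.exp (1 / 2) + Real.exp (-b) / 36 * Real.exp 2) := by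
  have hid := integrable_id_gaussianReal 0 1
  have hexp (t : ℝ) := integrable_exp_mul_gaussianReal (μ := 0) (v := 1) t
  have h₁ := (hexp (-1)).const_mul (Real.exp (-b))
  have h₂ := (hexp (-2)).const_mul (Real.exp (-b) / 36)
  have h₀ : Integrable (fun x : ℝ ↦ b + x) (gaussianReal 0 1) := (integrable_const b).add hid
  have h₃ : Integrable (fun x ↦ 36 - Real.exp (-b) * Real.exp (-1 * x)) (gaussianReal 0 1) :=
    (integrable_const _).sub h₁
  unfold greenMajorantBound
  rw [integral_add h₀, integral_add (integrable_const _) hid,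
    integral_const_mul, integral_add h₃ h₂, integral_sub (integrable_const _) h₁,
    integral_const_mul, integral_const_mul, integral_exp_mul_gaussianReal,
    integral_exp_mul_gaussianReal, integral_id_gaussianReal]
  · norm_num
  · exact (h₃.add h₂).const_mul 4

lemma greenMajorantBound_nonneg_and_le (hb : 0 ≤ b) (x : ℝ) :
    0 ≤ greenMajorantBound b x ∧ greenMajorant (b + x) ≤ greenMajorantBound b x := by
  set T := Real.exp (-(b + x)) with hT
  have hT₁ : Real.exp (-b) * Real.exp (-1 * x) = T := by
    rw [hT, ← Real.exp_add]; congr 1; ring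
  have hT₂ : Real.exp (-b) / 36 * Real.exp (-2 * x) = T ^ 2 * Real.exp b / 36 := by
    rw [hT, div_mul_eq_mul_div, ← Real.exp_nat_mul, ← Real.exp_add, ← Real.exp_add]
    congr 2; push_cast; ring
  have hlin : 1 - T ≤ b + x := by linarith [Real.add_one_le_exp (-(b + x))]
  have hsq : T ^ 2 ≤ T ^ 2 * Real.exp b := le_mul_of_one_le_right (sq_nonneg T) (Real.one_le_exp hb)
  have hT₀ : 0 < T := Real.exp_pos _
  rw [greenMajorantBound, hT₁, hT₂, greenMajorant, ← hT]
  constructor <;> nlinarith [sq_nonneg (T - 36), hT₀]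

lemma exp_two_le_nine : Real.exp 2 ≤ 9 := by
  have h : Real.exp 2 = Real.exp 1 ^ 2 := by rw [← Real.exp_nat_mul]; norm_num
  nlinarith [Real.exp_one_lt_three, Real.exp_pos 1]

lemma killedStep_greenMajorant_add_exp_le (hb : 0 ≤ b) :
    killedStep (fun x ↦ ENNReal.ofReal (greenMajorant x)) b + ENNReal.ofReal (Real.exp (-b))
      ≤ ENNReal.ofReal (greenMajorant b) := by
  have hbound := greenMajorantBound_nonneg_and_le hb
  have hstep : killedStep (fun x ↦ ENNReal.ofReal (greenMajorant x)) b
      ≤ ENNReal.ofReal (∫ x, greenMajorantBound b x ∂gaussianReal 0 1) := by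
    rw [ofReal_integral_eq_lintegral_ofReal (integrable_greenMajorantBound b)
      (Eventually.of_forall fun x ↦ (hbound x).1)]
    exact lintegral_mono fun x ↦ (Set.indicator_le_self _ _ _).trans
      (ENNReal.ofReal_le_ofReal (hbound x).2)
  have hhalf : (3 / 2 : ℝ) ≤ Real.exp (1 / 2) := by linarith [Real.add_one_le_exp (1 / 2 : ℝ)]
  calc killedStep (fun x ↦ ENNReal.ofReal (greenMajorant x)) b + ENNReal.ofReal (Real.exp (-b))
      ≤ ENNReal.ofReal (∫ x, greenMajorantBound b x ∂gaussianReal 0 1 + Real.exp (-b)) := by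
        rw [ENNReal.ofReal_add (integral_nonneg fun x ↦ (hbound x).1) (Real.exp_pos _).le]
        exact add_le_add_left hstep _
    _ ≤ ENNReal.ofReal (greenMajorant b) := by
        refine ENNReal.ofReal_le_ofReal ?_
        rw [integral_greenMajorantBound, greenMajorant]
        nlinarith [Real.exp_pos (-b), exp_two_le_nine]

lemma sum_iterate_killedStep_exp_neg_le (n : ℕ) (hb : 0 ≤ b) :
    ∑ s ∈ Finset.range n, killedStep^[s] (fun x ↦ ENNReal.ofReal (Real.exp (-x))) b
      ≤ ENNReal.ofReal (greenMajorant b) :=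
  sum_iterate_killedStep_le (ψ := fun x ↦ ENNReal.ofReal (greenMajorant x)) (by fun_prop)
    (fun _ hb ↦ killedStep_greenMajorant_add_exp_le hb) n hb

end KilledWalk

section Barrier

/-- Distance at time `n` from the path `p` to the barrier `β + c n`. -/
def barrierGap (c β : ℝ) (n : ℕ) (p : ℕ → ℝ) : ℝ := β + c * n - p n

/-- The function `φ` of the gap to the barrier at time `n`, weighted by the exponential martingale
`exp (c p n - c² n / 2)` and killed as soon as the path exceeds the barrier. For `φ = id` this is
the density of the truncated derivative martingale. -/
def barrierFunctional (c β : ℝ) (φ : ℝ → ℝ≥0∞) (n : ℕ) (p : ℕ → ℝ) : ℝ≥0∞ :=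
  open Classical in
  if ∀ j ≤ n, 0 ≤ barrierGap c β j p then
    ENNReal.ofReal (Real.exp (c * p n - c ^ 2 / 2 * n)) * φ (barrierGap c β n p)
  else 0

/-- The path `p` frozen after time `n`. -/
def stoppedPath (n : ℕ) (p : ℕ → ℝ) : ℕ → ℝ := fun j ↦ p (min j n)

/-- Integrand of `killedStep`, seen from the path: the gap moves from `b` to `b + (c - x)` when the
path makes a step `x`, and the exponential martingale is multiplied by `exp (c x - c² / 2)`. -/
def tiltedStep (c : ℝ) (φ : ℝ → ℝ≥0∞) (x b : ℝ) : ℝ≥0∞ :=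
  (Set.Ici 0).indicator φ (b + (c - x)) * ENNReal.ofReal (Real.exp (c * x - c ^ 2 / 2))

variable {c β : ℝ} {φ ψ : ℝ → ℝ≥0∞} {n : ℕ} {p : ℕ → ℝ}

@[fun_prop]
lemma measurable_barrierGap (c β : ℝ) (n : ℕ) : Measurable (barrierGap c β n) := by
  unfold barrierGap; fun_prop

lemma measurableSet_forall_barrierGap_nonneg (c β : ℝ) (n : ℕ) :
    MeasurableSet {p : ℕ → ℝ | ∀ j ≤ n, 0 ≤ barrierGap c β j p} := by
  simp only [Set.ofPred_forall]
  exact MeasurableSet.iInter fun j ↦ MeasurableSet.iInter fun _ ↦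
    measurableSet_le measurable_const (measurable_barrierGap c β j)

lemma measurable_barrierFunctional_uncurry {α : Type*} [MeasurableSpace α]
    {f : α → ℝ → ℝ≥0∞} (hf : Measurable (Function.uncurry f)) (c β : ℝ) (n : ℕ) :
    Measurable fun q : α × (ℕ → ℝ) ↦ barrierFunctional c β (f q.1) n q.2 := by
  have h : Measurable fun q : α × (ℕ → ℝ) ↦
      ENNReal.ofReal (Real.exp (c * q.2 n - c ^ 2 / 2 * n)) * f q.1 (barrierGap c β n q.2) :=
    Measurable.mul (by fun_prop) (hf.comp (by fun_prop : Measurable fun q : α × (ℕ → ℝ) ↦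
      (q.1, barrierGap c β n q.2)))
  exact h.ite (measurable_snd (measurableSet_forall_barrierGap_nonneg c β n)) measurable_const

lemma measurable_barrierFunctional (hφ : Measurable φ) (c β : ℝ) (n : ℕ) :
    Measurable (barrierFunctional c β φ n) :=
  (measurable_barrierFunctional_uncurry (f := fun _ : Unit ↦ φ) (hφ.comp measurable_snd) c β n).comp
    (measurable_prodMk_left (x := ()))

lemma barrierFunctional_mono (h : ∀ b, 0 ≤ b → φ b ≤ ψ b) :
    barrierFunctional c β φ n p ≤ barrierFunctional c β ψ n p := by
  unfold barrierFunctional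
  split_ifs with hp
  · gcongr
    exact h _ (hp n le_rfl)
  · exact le_rfl

lemma barrierFunctional_stoppedPath :
    barrierFunctional c β φ n (stoppedPath n p) = barrierFunctional c β φ n p := by
  have hgap (j : ℕ) (hj : j ≤ n) : barrierGap c β j (stoppedPath n p) = barrierGap c β j p := by
    simp [barrierGap, stoppedPath, hj]
  have hmem : (∀ j ≤ n, 0 ≤ barrierGap c β j (stoppedPath n p)) ↔
      ∀ j ≤ n, 0 ≤ barrierGap c β j p :=
    forall₂_congr fun j hj ↦ by rw [hgap j hj]
  simp [barrierFunctional, hmem, hgap n le_rfl, stoppedPath]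

lemma barrierFunctional_zero (hβ : 0 ≤ β) (hp : p 0 = 0) : barrierFunctional c β φ 0 p = φ β := by
  simp [barrierFunctional, barrierGap, hp, hβ]

lemma lintegral_barrierFunctional {α : Type*} [MeasurableSpace α] (μ : Measure α)
    (f : α → ℝ → ℝ≥0∞) :
    ∫⁻ a, barrierFunctional c β (f a) n p ∂μ
      = barrierFunctional c β (fun b ↦ ∫⁻ a, f a b ∂μ) n p := by
  by_cases h : ∀ j ≤ n, 0 ≤ barrierGap c β j p
  · simp only [barrierFunctional, if_pos h, lintegral_const_mul' _ _ ENNReal.ofReal_ne_top]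
  · simp only [barrierFunctional, if_neg h, lintegral_zero]

lemma measurable_tiltedStep (c : ℝ) (hφ : Measurable φ) :
    Measurable (Function.uncurry (tiltedStep c φ)) := by
  have h := hφ.indicator (measurableSet_Ici (a := 0))
  unfold tiltedStep Function.uncurry
  fun_prop

lemma lintegral_tiltedStep (c : ℝ) (hφ : Measurable φ) (b : ℝ) :
    ∫⁻ x, tiltedStep c φ x b ∂gaussianReal 0 1 = killedStep φ b :=
  lintegral_sub_mul_exp_gaussianReal c
    ((hφ.indicator measurableSet_Ici).comp (measurable_const_add b))

lemma lintegral_barrierFunctional_tiltedStep (hφ : Measurable φ) :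
    ∫⁻ x, barrierFunctional c β (tiltedStep c φ x) n p ∂gaussianReal 0 1
      = barrierFunctional c β (killedStep φ) n p := by
  rw [lintegral_barrierFunctional]
  simp only [lintegral_tiltedStep c hφ]

lemma barrierFunctional_succ (c β : ℝ) (φ : ℝ → ℝ≥0∞) (n : ℕ) (p : ℕ → ℝ) :
    barrierFunctional c β φ (n + 1) p
      = barrierFunctional c β (tiltedStep c φ (p (n + 1) - p n)) n p := by
  have hgap : barrierGap c β n p + (c - (p (n + 1) - p n)) = barrierGap c β (n + 1) p := by
    simp only [barrierGap]; push_cast; ring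
  have hexp : Real.exp (c * p (n + 1) - c ^ 2 / 2 * (n + 1 : ℕ))
      = Real.exp (c * p n - c ^ 2 / 2 * n)
        * Real.exp (c * (p (n + 1) - p n) - c ^ 2 / 2) := by
    rw [← Real.exp_add]; congr 1; push_cast; ring
  have hmem : (∀ j ≤ n + 1, 0 ≤ barrierGap c β j p) ↔
      (∀ j ≤ n, 0 ≤ barrierGap c β j p) ∧ 0 ≤ barrierGap c β (n + 1) p := by
    simp only [← Order.lt_add_one_iff, Nat.forall_lt_succ_right]
  simp only [barrierFunctional, tiltedStep, hmem, Set.indicator_apply, Set.mem_Ici, hgap, hexp,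
    ENNReal.ofReal_mul (Real.exp_pos _).le, ite_and]
  split_ifs
  · ring
  · simp
  · rfl

lemma barrierFunctional_greenMajorant_sq_le (hc : 7 / 5 ≤ c) (n : ℕ) (p : ℕ → ℝ) :
    barrierFunctional c β (fun b ↦ ENNReal.ofReal (greenMajorant b)) n p ^ 2
      ≤ ENNReal.ofReal (149 ^ 2 * Real.exp (c * β) * Real.exp (c ^ 2 / 2 * n))
        * barrierFunctional c β (fun b ↦ ENNReal.ofReal (Real.exp (-b))) n p := by
  by_cases h : ∀ j ≤ n, 0 ≤ barrierGap c β j p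
  · simp only [barrierFunctional, if_pos h]
    set b := barrierGap c β n p with hb
    have hexp : Real.exp (c * p n - c ^ 2 / 2 * n)
        = Real.exp (c * β) * Real.exp (c ^ 2 / 2 * n) * Real.exp (-(c * b)) := by
      rw [← Real.exp_add, ← Real.exp_add, hb, barrierGap]; congr 1; ring
    rw [← ENNReal.ofReal_mul (Real.exp_pos _).le, ← ENNReal.ofReal_mul (Real.exp_pos _).le,
      ← ENNReal.ofReal_mul (by positivity),
      ← ENNReal.ofReal_pow (mul_nonneg (Real.exp_pos _).le
        ((h n le_rfl).trans (le_greenMajorant (h n le_rfl))))]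
    refine ENNReal.ofReal_le_ofReal ?_
    calc (Real.exp (c * p n - c ^ 2 / 2 * n) * greenMajorant b) ^ 2
        = Real.exp (c * β) * Real.exp (c ^ 2 / 2 * n) * Real.exp (c * p n - c ^ 2 / 2 * n)
          * (greenMajorant b ^ 2 * Real.exp (-(c * b))) := by rw [mul_pow, sq, hexp]; ring
      _ ≤ Real.exp (c * β) * Real.exp (c ^ 2 / 2 * n) * Real.exp (c * p n - c ^ 2 / 2 * n)
          * (149 ^ 2 * Real.exp (-b)) :=
        mul_le_mul_of_nonneg_left (greenMajorant_sq_mul_exp_le hc (h n le_rfl)) (by positivity)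
      _ = _ := by ring
  · simp [barrierFunctional, if_neg h]

end Barrier

section GaussianWalk

lemma lintegral_comp_prodMk_of_indepFun {Ω α γ : Type*} [MeasurableSpace Ω] [MeasurableSpace α]
    [MeasurableSpace γ] {P : Measure Ω} [IsFiniteMeasure P] {U : Ω → α} {V : Ω → γ}
    (hU : AEMeasurable U P) (hV : AEMeasurable V P) (h : IndepFun U V P)
    {f : α × γ → ℝ≥0∞} (hf : Measurable f) :
    ∫⁻ ω, f (U ω, V ω) ∂P = ∫⁻ ω, ∫⁻ a, f (a, V ω) ∂P.map U ∂P := by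
  rw [← lintegral_map' hf.aemeasurable (hU.prodMk hV),
    (indepFun_iff_map_prod_eq_prod_map_map hU hV).1 h, lintegral_prod_symm _ hf.aemeasurable,
    lintegral_map' hf.lintegral_prod_left'.aemeasurable hV]

variable {Ω : Type*} [MeasurableSpace Ω]

/-- `U` is a standard Gaussian random walk started at `0`. -/
structure IsGaussianWalk (P : Measure Ω) (U : ℕ → Ω → ℝ) : Prop where
  measurable : ∀ n, Measurable (U n)
  zero : U 0 =ᵐ[P] 0
  hasLaw_increment : ∀ n, HasLaw (fun ω ↦ U (n + 1) ω - U n ω) (gaussianReal 0 1) P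
  indepFun_increment : ∀ n,
    IndepFun (fun ω ↦ U (n + 1) ω - U n ω) (fun ω ↦ stoppedPath n (U · ω)) P

lemma measurable_stoppedPath {U : ℕ → Ω → ℝ} (hU : ∀ n, Measurable (U n)) (n : ℕ) :
    Measurable fun ω ↦ stoppedPath n (U · ω) :=
  measurable_pi_lambda _ fun _ ↦ hU _

variable {P : Measure Ω} {U V : ℕ → Ω → ℝ}

lemma IsGaussianWalk.measurable_path (hU : IsGaussianWalk P U) : Measurable fun ω ↦ (U · ω) :=
  measurable_pi_lambda _ hU.measurable

variable [IsProbabilityMeasure P] {c β : ℝ} {φ : ℝ → ℝ≥0∞}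

lemma IsGaussianWalk.lintegral_barrierFunctional_succ (hU : IsGaussianWalk P U)
    (hφ : Measurable φ) (n : ℕ) :
    ∫⁻ ω, barrierFunctional c β φ (n + 1) (U · ω) ∂P
      = ∫⁻ ω, barrierFunctional c β (killedStep φ) n (U · ω) ∂P := by
  have hmeas := measurable_barrierFunctional_uncurry (measurable_tiltedStep c hφ) c β n
  have h := lintegral_comp_prodMk_of_indepFun (hU.hasLaw_increment n).aemeasurable
    (measurable_stoppedPath hU.measurable n).aemeasurable (hU.indepFun_increment n) hmeas
  simp only [barrierFunctional_succ]
  simpa only [barrierFunctional_stoppedPath, (hU.hasLaw_increment n).map_eq,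
    lintegral_barrierFunctional_tiltedStep hφ] using h

lemma IsGaussianWalk.lintegral_barrierFunctional (hU : IsGaussianWalk P U) (hβ : 0 ≤ β)
    (hφ : Measurable φ) (n : ℕ) :
    ∫⁻ ω, barrierFunctional c β φ n (U · ω) ∂P = killedStep^[n] φ β := by
  induction n generalizing φ with
  | zero =>
    have h : ∀ᵐ ω ∂P, barrierFunctional c β φ 0 (U · ω) = φ β :=
      hU.zero.mono fun ω hω ↦ barrierFunctional_zero hβ hω
    simp [lintegral_congr_ae h]
  | succ n ih =>
    rw [hU.lintegral_barrierFunctional_succ hφ, ih (measurable_killedStep hφ),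
      Function.iterate_succ_apply]

lemma IsGaussianWalk.ofReal_le_lintegral_barrierFunctional (hU : IsGaussianWalk P U)
    (hβ : 0 ≤ β) (n : ℕ) :
    ENNReal.ofReal β ≤ ∫⁻ ω, barrierFunctional c β ENNReal.ofReal n (U · ω) ∂P := by
  rw [hU.lintegral_barrierFunctional hβ ENNReal.measurable_ofReal]
  exact ofReal_le_iterate_killedStep_ofReal n β

lemma lintegral_barrierFunctional_mul_succ (hU : IsGaussianWalk P U) (hV : IsGaussianWalk P V)
    {n : ℕ}
    (hUV : IndepFun (fun ω ↦ U (n + 1) ω - U n ω) (fun ω ↦ V (n + 1) ω - V n ω) P)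
    (hpast : IndepFun (fun ω ↦ (U (n + 1) ω - U n ω, V (n + 1) ω - V n ω))
      (fun ω ↦ (stoppedPath n (U · ω), stoppedPath n (V · ω))) P)
    (hφ : Measurable φ) :
    ∫⁻ ω, barrierFunctional c β φ (n + 1) (U · ω) * barrierFunctional c β φ (n + 1) (V · ω) ∂P
      = ∫⁻ ω, barrierFunctional c β (killedStep φ) n (U · ω)
          * barrierFunctional c β (killedStep φ) n (V · ω) ∂P := by
  have hF := measurable_barrierFunctional_uncurry (measurable_tiltedStep c hφ) c β n
  have hF' (q : ℕ → ℝ) : AEMeasurable (fun x ↦ barrierFunctional c β (tiltedStep c φ x) n q)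
      (gaussianReal 0 1) := (hF.comp measurable_prodMk_right).aemeasurable
  have hUm := (hU.hasLaw_increment n).aemeasurable
  have hVm := (hV.hasLaw_increment n).aemeasurable
  have hFU : Measurable fun q : (ℝ × ℝ) × ((ℕ → ℝ) × (ℕ → ℝ)) ↦
      barrierFunctional c β (tiltedStep c φ q.1.1) n q.2.1 :=
    hF.comp (by fun_prop : Measurable fun q : (ℝ × ℝ) × ((ℕ → ℝ) × (ℕ → ℝ)) ↦ (q.1.1, q.2.1))
  have hFV : Measurable fun q : (ℝ × ℝ) × ((ℕ → ℝ) × (ℕ → ℝ)) ↦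
      barrierFunctional c β (tiltedStep c φ q.1.2) n q.2.2 :=
    hF.comp (by fun_prop : Measurable fun q : (ℝ × ℝ) × ((ℕ → ℝ) × (ℕ → ℝ)) ↦ (q.1.2, q.2.2))
  have h := lintegral_comp_prodMk_of_indepFun (hUm.prodMk hVm)
    ((measurable_stoppedPath hU.measurable n).prodMk
      (measurable_stoppedPath hV.measurable n)).aemeasurable hpast (hFU.mul hFV)
  simp only [barrierFunctional_succ]
  simpa only [Pi.mul_apply, barrierFunctional_stoppedPath,
    (indepFun_iff_map_prod_eq_prod_map_map hUm hVm).1 hUV, (hU.hasLaw_increment n).map_eq,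
    (hV.hasLaw_increment n).map_eq, lintegral_prod_mul (hF' _) (hF' _),
    lintegral_barrierFunctional_tiltedStep hφ] using h

lemma IsGaussianWalk.lintegral_barrierFunctional_greenMajorant_sq_le (hU : IsGaussianWalk P U)
    (hβ : 0 ≤ β) (hc : 7 / 5 ≤ c) (n : ℕ) :
    ∫⁻ ω, barrierFunctional c β (fun b ↦ ENNReal.ofReal (greenMajorant b)) n (U · ω) ^ 2 ∂P
      ≤ ENNReal.ofReal (149 ^ 2 * Real.exp (c * β) * Real.exp (c ^ 2 / 2 * n))
        * killedStep^[n] (fun b ↦ ENNReal.ofReal (Real.exp (-b))) β := by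
  refine (lintegral_mono fun ω ↦ barrierFunctional_greenMajorant_sq_le hc n _).trans_eq ?_
  rw [lintegral_const_mul' _ _ ENNReal.ofReal_ne_top,
    hU.lintegral_barrierFunctional hβ (by fun_prop)]

lemma ennreal_mul_le_sq_add_sq (a b : ℝ≥0∞) : a * b ≤ a ^ 2 + b ^ 2 := by
  rw [sq, sq]
  rcases le_total a b with h | h
  · exact (mul_le_mul_left h b).trans le_add_self
  · exact (mul_le_mul_right h a).trans le_self_add

lemma lintegral_barrierFunctional_mul_le_of_superharmonic (hU : IsGaussianWalk P U)
    (hV : IsGaussianWalk P V) (hφ : Measurable φ) (hsuper : ∀ b, 0 ≤ b → killedStep φ b ≤ φ b)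
    {s n : ℕ} (hsn : s ≤ n)
    (hUV : ∀ m, s ≤ m → m < n →
      IndepFun (fun ω ↦ U (m + 1) ω - U m ω) (fun ω ↦ V (m + 1) ω - V m ω) P)
    (hpast : ∀ m, IndepFun (fun ω ↦ (U (m + 1) ω - U m ω, V (m + 1) ω - V m ω))
      (fun ω ↦ (stoppedPath m (U · ω), stoppedPath m (V · ω))) P) :
    ∫⁻ ω, barrierFunctional c β φ n (U · ω) * barrierFunctional c β φ n (V · ω) ∂P
      ≤ ∫⁻ ω, barrierFunctional c β φ s (U · ω) * barrierFunctional c β φ s (V · ω) ∂P := by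
  have hle : ∀ m p, barrierFunctional c β (killedStep φ) m p ≤ barrierFunctional c β φ m p :=
    fun _ _ ↦ barrierFunctional_mono hsuper
  induction n, hsn using Nat.le_induction with
  | base => exact le_rfl
  | succ m hm ih =>
    rw [lintegral_barrierFunctional_mul_succ hU hV (hUV m hm m.lt_succ_self) (hpast m) hφ]
    exact (lintegral_mono fun ω ↦ mul_le_mul' (hle m _) (hle m _)).trans
      (ih fun i hi him ↦ hUV i hi (him.trans m.lt_succ_self))

/-- After the branching time `s` the superharmonicity of `greenMajorant` applies to both walks
separately, which leaves the diagonal term at time `s`. -/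
lemma lintegral_barrierFunctional_mul_le (hU : IsGaussianWalk P U) (hV : IsGaussianWalk P V)
    (hβ : 0 ≤ β) (hc : 7 / 5 ≤ c) {s n : ℕ} (hsn : s ≤ n)
    (hUV : ∀ m, s ≤ m → m < n →
      IndepFun (fun ω ↦ U (m + 1) ω - U m ω) (fun ω ↦ V (m + 1) ω - V m ω) P)
    (hpast : ∀ m, IndepFun (fun ω ↦ (U (m + 1) ω - U m ω, V (m + 1) ω - V m ω))
      (fun ω ↦ (stoppedPath m (U · ω), stoppedPath m (V · ω))) P) :
    ∫⁻ ω, barrierFunctional c β ENNReal.ofReal n (U · ω)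
        * barrierFunctional c β ENNReal.ofReal n (V · ω) ∂P
      ≤ 2 * ENNReal.ofReal (149 ^ 2 * Real.exp (c * β) * Real.exp (c ^ 2 / 2 * s))
        * killedStep^[s] (fun b ↦ ENNReal.ofReal (Real.exp (-b))) β := by
  set G : ℝ → ℝ≥0∞ := fun b ↦ ENNReal.ofReal (greenMajorant b)
  have hG : Measurable G := measurable_greenMajorant.ennreal_ofReal
  have hle : ∀ p, barrierFunctional c β ENNReal.ofReal n p ≤ barrierFunctional c β G n p := fun p ↦
    barrierFunctional_mono fun b hb ↦ ENNReal.ofReal_le_ofReal (le_greenMajorant hb)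
  calc ∫⁻ ω, barrierFunctional c β ENNReal.ofReal n (U · ω)
        * barrierFunctional c β ENNReal.ofReal n (V · ω) ∂P
      ≤ ∫⁻ ω, barrierFunctional c β G n (U · ω) * barrierFunctional c β G n (V · ω) ∂P :=
        lintegral_mono fun ω ↦ mul_le_mul' (hle _) (hle _)
    _ ≤ ∫⁻ ω, barrierFunctional c β G s (U · ω) * barrierFunctional c β G s (V · ω) ∂P :=
        lintegral_barrierFunctional_mul_le_of_superharmonic hU hV hG
          (fun b hb ↦ le_self_add.trans (killedStep_greenMajorant_add_exp_le hb)) hsn hUV hpast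
    _ ≤ ∫⁻ ω, (barrierFunctional c β G s (U · ω) ^ 2
          + barrierFunctional c β G s (V · ω) ^ 2) ∂P :=
        lintegral_mono fun ω ↦ ennreal_mul_le_sq_add_sq _ _
    _ = ∫⁻ ω, barrierFunctional c β G s (U · ω) ^ 2 ∂P
          + ∫⁻ ω, barrierFunctional c β G s (V · ω) ^ 2 ∂P :=
        lintegral_add_left
          (((measurable_barrierFunctional hG c β s).comp hU.measurable_path).pow_const 2) _
    _ ≤ _ := add_le_add (hU.lintegral_barrierFunctional_greenMajorant_sq_le hβ hc s)
        (hV.lintegral_barrierFunctional_greenMajorant_sq_le hβ hc s)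
    _ = _ := by rw [← two_mul, ← mul_assoc]

end GaussianWalk

section BranchingField

variable {E Ω : Type*} [NormedAddCommGroup E] [MeasurableSpace Ω]

/-- `Y` is a family of standard Gaussian random walks indexed by the points of `E`, whose
increments at time `n` decouple at distance `R e⁻ⁿ`, and which at time `n` are comparable on balls
of radius `e⁻ⁿ`: there the difference `Y n x - Y n y` is a Gaussian variable with variance at most
`2 L` independent of `Y n x`, up to a multiple of order `L / n` of `Y n x`. These are the only
properties of a star-scale invariant field, observed at integer times, that the argument uses. -/
structure IsBranchingField (P : Measure Ω) (Y : ℕ → E → Ω → ℝ) (R L : ℝ) : Prop where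
  walk : ∀ x, IsGaussianWalk P (Y · x)
  indepFun_past : ∀ n x y,
    IndepFun (fun ω ↦ (Y (n + 1) x ω - Y n x ω, Y (n + 1) y ω - Y n y ω))
      (fun ω ↦ (stoppedPath n (Y · x ω), stoppedPath n (Y · y ω))) P
  indepFun_increment : ∀ (n : ℕ) x y, R * Real.exp (-n) ≤ ‖x - y‖ →
    IndepFun (fun ω ↦ Y (n + 1) x ω - Y n x ω) (fun ω ↦ Y (n + 1) y ω - Y n y ω) P
  comparison : ∀ (n : ℕ) x y, 1 ≤ n → ‖x - y‖ ≤ Real.exp (-n) →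
    ∃ (a : ℝ) (v : ℝ≥0), 0 ≤ a ∧ a * n ≤ L ∧ v ≤ 2 * L ∧
      HasLaw (fun ω ↦ Y n x ω - Y n y ω - a * Y n x ω) (gaussianReal 0 v) P ∧
      IndepFun (fun ω ↦ Y n x ω - Y n y ω - a * Y n x ω) (Y n x) P

/-- The mass of `A` for the derivative martingale measure at time `n`, truncated to the points
whose path has stayed below the barrier `β + c j`. -/
def truncatedMass [MeasurableSpace E] (c β : ℝ) (Y : ℕ → E → Ω → ℝ) (μ : Measure E) (A : Set E)
    (n : ℕ) (ω : Ω) : ℝ≥0∞ :=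
  ∫⁻ x in A, barrierFunctional c β ENNReal.ofReal n (Y · x ω) ∂μ

lemma exists_scale {R r : ℝ} (hR : 0 ≤ R) (hr : r ≤ R) (n : ℕ) :
    ∃ s ≤ n, r ≤ R * Real.exp 1 * Real.exp (-s) ∧ (s < n → R * Real.exp (-s) ≤ r) := by
  induction n with
  | zero =>
    refine ⟨0, le_rfl, hr.trans ?_, fun h ↦ absurd h (lt_irrefl 0)⟩
    simpa using le_mul_of_one_le_right hR (Real.one_le_exp zero_le_one)
  | succ n ih =>
    obtain ⟨s, hsn, hs, hs'⟩ := ih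
    rcases hsn.lt_or_eq with hlt | rfl
    · exact ⟨s, by omega, hs, fun _ ↦ hs' hlt⟩
    rcases le_total (R * Real.exp (-s)) r with h | h
    · exact ⟨s, by omega, hs, fun _ ↦ h⟩
    · refine ⟨s + 1, le_rfl, h.trans_eq ?_, fun h ↦ absurd h (lt_irrefl _)⟩
      rw [mul_assoc, ← Real.exp_add]
      congr 2
      push_cast; ring

lemma lintegral_sq_lintegral {α : Type*} [MeasurableSpace α] {μ : Measure α} [SFinite μ]
    {P : Measure Ω} [SFinite P] {f : α → Ω → ℝ≥0∞} (hf : Measurable (Function.uncurry f)) :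
    ∫⁻ ω, (∫⁻ x, f x ω ∂μ) ^ 2 ∂P = ∫⁻ x, ∫⁻ y, ∫⁻ ω, f x ω * f y ω ∂P ∂μ ∂μ := by
  have hfx (ω : Ω) : Measurable fun x ↦ f x ω := hf.comp measurable_prodMk_right
  calc ∫⁻ ω, (∫⁻ x, f x ω ∂μ) ^ 2 ∂P
      = ∫⁻ ω, ∫⁻ x, ∫⁻ y, f x ω * f y ω ∂μ ∂μ ∂P := by
        simp only [sq, ← lintegral_mul_const _ (hfx _), ← lintegral_const_mul _ (hfx _)]
    _ = ∫⁻ x, ∫⁻ ω, ∫⁻ y, f x ω * f y ω ∂μ ∂P ∂μ :=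
        lintegral_lintegral_swap <| Measurable.aemeasurable <| Measurable.lintegral_prod_right' <|
          (hf.comp (by fun_prop : Measurable fun r : (Ω × α) × α ↦ (r.1.2, r.1.1))).mul
            (hf.comp (by fun_prop : Measurable fun r : (Ω × α) × α ↦ (r.2, r.1.1)))
    _ = ∫⁻ x, ∫⁻ y, ∫⁻ ω, f x ω * f y ω ∂P ∂μ ∂μ :=
        lintegral_congr fun x ↦ lintegral_lintegral_swap <| Measurable.aemeasurable <|
          (hf.comp (by fun_prop : Measurable fun r : Ω × α ↦ (x, r.1))).mul
            (hf.comp (by fun_prop : Measurable fun r : Ω × α ↦ (r.2, r.1)))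

lemma measurable_barrierFunctional_field {α : Type*} [MeasurableSpace α] {Y : ℕ → α → Ω → ℝ}
    (hYm : ∀ n, Measurable (Function.uncurry (Y n))) (c β : ℝ) (n : ℕ) :
    Measurable (Function.uncurry fun x ω ↦ barrierFunctional c β ENNReal.ofReal n (Y · x ω)) :=
  (measurable_barrierFunctional ENNReal.measurable_ofReal c β n).comp
    (measurable_pi_lambda (fun q : α × Ω ↦ (Y · q.1 q.2)) hYm)

lemma measurable_truncatedMass {α : Type*} [MeasurableSpace α] {Y : ℕ → α → Ω → ℝ}
    {μ : Measure α} [SFinite μ] (hYm : ∀ n, Measurable (Function.uncurry (Y n))) (c β : ℝ)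
    (A : Set α) (n : ℕ) : Measurable (truncatedMass c β Y μ A n) :=
  (measurable_barrierFunctional_field hYm c β n).lintegral_prod_left'

section Moments

variable {P : Measure Ω} [IsProbabilityMeasure P] {Y : ℕ → E → Ω → ℝ} {R L c β : ℝ}

/-- The sum over `s` locates the scale `e⁻ˢ` of `x - y`. -/
lemma IsBranchingField.lintegral_barrierFunctional_mul_le_sum (hY : IsBranchingField P Y R L)
    (hβ : 0 ≤ β) (hc : 7 / 5 ≤ c) {r : ℝ} (hRr : R ≤ r) {x y : E} (hxy : ‖x - y‖ ≤ r) (n : ℕ) :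
    ∫⁻ ω, barrierFunctional c β ENNReal.ofReal n (Y · x ω)
        * barrierFunctional c β ENNReal.ofReal n (Y · y ω) ∂P
      ≤ ∑ s ∈ Finset.range (n + 1),
        (Metric.closedBall x (r * Real.exp 1 * Real.exp (-s))).indicator
          (fun _ ↦ 2 * ENNReal.ofReal (149 ^ 2 * Real.exp (c * β) * Real.exp (c ^ 2 / 2 * s))
            * killedStep^[s] (fun b ↦ ENNReal.ofReal (Real.exp (-b))) β) y := by
  have hr : 0 ≤ r := (norm_nonneg _).trans hxy
  obtain ⟨s, hsn, hball, hfar⟩ := exists_scale hr hxy n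
  have hmem : y ∈ Metric.closedBall x (r * Real.exp 1 * Real.exp (-s)) := by
    rwa [Metric.mem_closedBall', dist_eq_norm]
  have hdecouple (m : ℕ) (hsm : s ≤ m) (hmn : m < n) : R * Real.exp (-m) ≤ ‖x - y‖ :=
    calc R * Real.exp (-m) ≤ r * Real.exp (-m) := by gcongr
      _ ≤ r * Real.exp (-s) := by gcongr
      _ ≤ ‖x - y‖ := hfar (hsm.trans_lt hmn)
  refine le_trans ?_ (Finset.single_le_sum (fun _ _ ↦ zero_le)
    (Finset.mem_range.2 (Nat.lt_succ_of_le hsn)))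
  rw [Set.indicator_of_mem hmem]
  exact lintegral_barrierFunctional_mul_le (hY.walk x) (hY.walk y) hβ hc hsn
    (fun m hsm hmn ↦ hY.indepFun_increment m x y (hdecouple m hsm hmn))
    (fun m ↦ hY.indepFun_past m x y)

variable [MeasurableSpace E]

variable {μ : Measure E}

lemma IsBranchingField.le_lintegral_truncatedMass [SFinite μ] (hY : IsBranchingField P Y R L)
    (hYm : ∀ n, Measurable (Function.uncurry (Y n))) (hβ : 0 ≤ β) (A : Set E) (n : ℕ) :
    ENNReal.ofReal β * μ A ≤ ∫⁻ ω, truncatedMass c β Y μ A n ω ∂P := by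
  unfold truncatedMass
  rw [← setLIntegral_const, ← lintegral_lintegral_swap
    (measurable_barrierFunctional_field hYm c β n).aemeasurable]
  exact lintegral_mono fun x ↦ (hY.walk x).ofReal_le_lintegral_barrierFunctional hβ n

variable [NormedSpace ℝ E] [FiniteDimensional ℝ E] [BorelSpace E] [μ.IsAddHaarMeasure]

lemma ofReal_mul_exp_mul_addHaar_closedBall {K r : ℝ} (hK : 0 ≤ K) (hr : 0 ≤ r) (s : ℝ) (x : E) :
    ENNReal.ofReal (K * Real.exp (Module.finrank ℝ E * s))
        * μ (Metric.closedBall x (r * Real.exp (-s)))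
      = ENNReal.ofReal (K * r ^ Module.finrank ℝ E) * μ (Metric.closedBall 0 1) := by
  rw [Measure.addHaar_closedBall' _ _ (by positivity), ← mul_assoc,
    ← ENNReal.ofReal_mul (by positivity), mul_pow, ← Real.exp_nat_mul]
  congr 2
  rw [mul_neg, Real.exp_neg]
  field_simp

/-- The expected squared mass at scale `e⁻ˢ` is `exp (c² s / 2)`, which for `c² = 2 d` is exactly
compensated by the volume `e⁻ᵈˢ` of the ball, so that only the Green function is left. -/
lemma setLIntegral_sum_indicator_closedBall_le (hβ : 0 ≤ β)
    (hcd : c ^ 2 = 2 * Module.finrank ℝ E) {r : ℝ} (hr : 0 ≤ r) (A : Set E) (x : E) (n : ℕ) :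
    ∫⁻ y in A, ∑ s ∈ Finset.range n,
        (Metric.closedBall x (r * Real.exp 1 * Real.exp (-s))).indicator
        (fun _ ↦ 2 * ENNReal.ofReal (149 ^ 2 * Real.exp (c * β) * Real.exp (c ^ 2 / 2 * s))
          * killedStep^[s] (fun b ↦ ENNReal.ofReal (Real.exp (-b))) β) y ∂μ
      ≤ 2 * (ENNReal.ofReal (149 ^ 2 * Real.exp (c * β) * (r * Real.exp 1) ^ Module.finrank ℝ E)
        * μ (Metric.closedBall 0 1)) * ENNReal.ofReal (greenMajorant β) := by
  have hball (s : ℕ) := Metric.isClosed_closedBall.measurableSet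
    (s := Metric.closedBall x (r * Real.exp 1 * Real.exp (-s)))
  rw [lintegral_finsetSum _ fun s _ ↦ measurable_const.indicator (hball s)]
  calc _ ≤ ∑ s ∈ Finset.range n, 2 * (ENNReal.ofReal
            (149 ^ 2 * Real.exp (c * β) * (r * Real.exp 1) ^ Module.finrank ℝ E)
          * μ (Metric.closedBall 0 1))
          * killedStep^[s] (fun b ↦ ENNReal.ofReal (Real.exp (-b))) β := by
        refine Finset.sum_le_sum fun s _ ↦ (setLIntegral_le_lintegral _ _).trans_eq ?_
        rw [lintegral_indicator_const (hball s),
          show c ^ 2 / 2 * s = Module.finrank ℝ E * s by rw [hcd]; ring,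
          ← ofReal_mul_exp_mul_addHaar_closedBall (by positivity) (by positivity) s x]
        ring
    _ ≤ _ := by
        rw [← Finset.mul_sum]
        gcongr
        exact sum_iterate_killedStep_exp_neg_le n hβ

lemma IsBranchingField.exists_lintegral_truncatedMass_sq_le (hY : IsBranchingField P Y R L)
    (hYm : ∀ n, Measurable (Function.uncurry (Y n))) (hβ : 0 ≤ β) (hc : 7 / 5 ≤ c)
    (hcd : c ^ 2 = 2 * Module.finrank ℝ E) {A : Set E} (hA : MeasurableSet A)
    (hAb : Bornology.IsBounded A) :
    ∃ C ≠ ∞, ∀ n, ∫⁻ ω, truncatedMass c β Y μ A n ω ^ 2 ∂P ≤ C := by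
  set r : ℝ := max R (Metric.diam A)
  have hr : 0 ≤ r := Metric.diam_nonneg.trans (le_max_right _ _)
  have hAr : ∀ x ∈ A, ∀ y ∈ A, ‖x - y‖ ≤ r := fun x hx y hy ↦
    (dist_eq_norm x y ▸ Metric.dist_le_diam_of_mem hAb hx hy).trans (le_max_right _ _)
  refine ⟨2 * (ENNReal.ofReal (149 ^ 2 * Real.exp (c * β) * (r * Real.exp 1) ^ Module.finrank ℝ E)
    * μ (Metric.closedBall 0 1)) * ENNReal.ofReal (greenMajorant β) * μ A, ?_, fun n ↦ ?_⟩
  · have := (measure_closedBall_lt_top (μ := μ) (x := (0 : E)) (r := 1)).ne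
    have := hAb.measure_lt_top (μ := μ).ne
    finiteness
  · unfold truncatedMass
    rw [lintegral_sq_lintegral (measurable_barrierFunctional_field hYm c β n), ← setLIntegral_const]
    refine setLIntegral_mono' hA fun x hx ↦ ?_
    exact (setLIntegral_mono' hA fun y hy ↦ hY.lintegral_barrierFunctional_mul_le_sum hβ hc
      (le_max_left _ _) (hAr x hx y hy) n).trans
      (setLIntegral_sum_indicator_closedBall_le hβ hcd hr A x (n + 1))

end Moments

end BranchingField

section NearCritical

/-- Weight of a point whose path is at distance `u` below the critical line `c n` at time `n`. It
dominates the error made when the truncated density is replaced by twice the signed density of the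
derivative martingale, see `barrierFunctional_add_ofReal_neg_le`. -/
def nearCriticalWeight (β : ℝ) : ℝ → ℝ≥0∞ :=
  (Set.Iio β).indicator fun u ↦ ENNReal.ofReal (3 * (β + |u|))

/-- The density `exp (c w - c² n / 2)` of the exponential martingale at time `n` and value `w`. -/
def criticalDensity (c : ℝ) (n : ℕ) (w : ℝ) : ℝ≥0∞ :=
  ENNReal.ofReal (Real.exp (c * w - c ^ 2 / 2 * n))

@[fun_prop]
lemma measurable_nearCriticalWeight (β : ℝ) : Measurable (nearCriticalWeight β) :=
  Measurable.indicator (by fun_prop) measurableSet_Iio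

@[fun_prop]
lemma measurable_criticalDensity (c : ℝ) (n : ℕ) : Measurable (criticalDensity c n) := by
  unfold criticalDensity; fun_prop

lemma criticalDensity_ne_zero (c : ℝ) (n : ℕ) (w : ℝ) : criticalDensity c n w ≠ 0 := by
  simp [criticalDensity, Real.exp_pos]

lemma criticalDensity_ne_top (c : ℝ) (n : ℕ) (w : ℝ) : criticalDensity c n w ≠ ∞ :=
  ENNReal.ofReal_ne_top

lemma criticalDensity_mul_inv (c : ℝ) (n : ℕ) (w z : ℝ) :
    criticalDensity c n w * (criticalDensity c n z)⁻¹
      = ENNReal.ofReal (Real.exp (c * (w - z))) := by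
  rw [criticalDensity, criticalDensity, ← ENNReal.ofReal_inv_of_pos (Real.exp_pos _),
    ← ENNReal.ofReal_mul (Real.exp_pos _).le, ← Real.exp_neg, ← Real.exp_add]
  congr 2
  ring

lemma lintegral_exp_mul_gaussianReal (v : ℝ≥0) (t : ℝ) :
    ∫⁻ x, ENNReal.ofReal (Real.exp (t * x)) ∂gaussianReal 0 v
      = ENNReal.ofReal (Real.exp (v * t ^ 2 / 2)) := by
  rw [← ofReal_integral_eq_lintegral_ofReal (integrable_exp_mul_gaussianReal t)
    (Eventually.of_forall fun _ ↦ (Real.exp_pos _).le), integral_exp_mul_gaussianReal]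

lemma lintegral_criticalDensity_gaussianReal (c : ℝ) (n : ℕ) :
    ∫⁻ w, criticalDensity c n w ∂gaussianReal 0 n = 1 := by
  simp only [criticalDensity, sub_eq_add_neg, Real.exp_add, ENNReal.ofReal_mul (Real.exp_pos _).le]
  rw [lintegral_mul_const _ (by fun_prop), lintegral_exp_mul_gaussianReal,
    ← ENNReal.ofReal_mul (Real.exp_pos _).le, ← Real.exp_add, ← ENNReal.ofReal_one, ← Real.exp_zero]
  congr 2
  push_cast; ring

lemma lintegral_exp_neg_mul_abs_ne_top {a : ℝ} (ha : 0 < a) :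
    ∫⁻ u : ℝ, ENNReal.ofReal (Real.exp (-(a * |u|))) ≠ ∞ := by
  have hneg : IntegrableOn (fun u : ℝ ↦ Real.exp (-(a * |u|))) (Set.Iic 0) :=
    (integrableOn_exp_mul_Iic ha 0).congr_fun
      (fun u (hu : u ≤ 0) ↦ by simp [abs_of_nonpos hu]) measurableSet_Iic
  have hpos : IntegrableOn (fun u : ℝ ↦ Real.exp (-(a * |u|))) (Set.Ioi 0) :=
    (exp_neg_integrableOn_Ioi 0 ha).congr_fun
      (fun u (hu : 0 < u) ↦ by simp [abs_of_pos hu]) measurableSet_Ioi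
  have h : Integrable fun u : ℝ ↦ Real.exp (-(a * |u|)) := by
    simpa [Set.Iic_union_Ioi] using hneg.union hpos
  rw [← ofReal_integral_eq_lintegral_ofReal h
    (Eventually.of_forall fun _ ↦ (Real.exp_pos _).le)]
  exact ENNReal.ofReal_ne_top

lemma gaussianPDFReal_const_mul_sub_le {v : ℝ≥0} (hv : v ≠ 0) (c u : ℝ) :
    gaussianPDFReal 0 v (c * v - u)
      ≤ Real.exp (-(c ^ 2 / 2 * v)) * (Real.sqrt v)⁻¹ * Real.exp (c * u) := by
  have hv' : (0 : ℝ) < v := by positivity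
  rw [mul_comm (Real.exp _) (Real.sqrt v)⁻¹, mul_assoc, ← Real.exp_add, gaussianPDFReal]
  gcongr
  · nlinarith [Real.pi_gt_three]
  · rw [neg_div, neg_le, le_div_iff₀ (by positivity)]
    nlinarith [sq_nonneg u]

/-- Below the level `β` the Gaussian density contributes `exp (c u)`, which beats the factors
`exp (-a c u)` and `exp (|u| / 2)` as `u → -∞` because `c > 1`. -/
lemma nearCritical_exponent_le {c β L a u v : ℝ} (hc : 7 / 5 ≤ c) (hβ : 0 ≤ β) (ha : 0 ≤ a)
    (ha' : a ≤ 1 / 2) (hav : a * v ≤ L) (hu : u < β) :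
    c * u + c * a * (c * v - u) + |u| / 2 ≤ c ^ 2 * L + 2 * c * β - 1 / 5 * |u| := by
  have h₁ : c ^ 2 * (a * v) ≤ c ^ 2 * L := by gcongr
  have h₂ : -(a * u) ≤ |u| / 2 := by
    nlinarith [neg_le_abs u, abs_nonneg u]
  have h₃ : c * -(a * u) ≤ c * (|u| / 2) := by gcongr
  have h₄ : u + |u| / 2 ≤ 2 * β - |u| / 2 := by
    rcases abs_cases u with h | h <;> linarith
  have h₅ : c * (u + |u| / 2) ≤ c * (2 * β - |u| / 2) := by gcongr
  have h₆ : 7 / 5 * |u| ≤ c * |u| := by gcongr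
  linarith

lemma gaussianPDF_mul_nearCriticalWeight_le {c β L a : ℝ} {v : ℝ≥0} (hc : 7 / 5 ≤ c) (hβ : 0 ≤ β)
    (hv : v ≠ 0) (ha : 0 ≤ a) (ha' : a ≤ 1 / 2) (hav : a * v ≤ L) (u : ℝ) :
    gaussianPDF 0 v (c * v - u)
        * (nearCriticalWeight β u * ENNReal.ofReal (Real.exp (c * a * (c * v - u))))
      ≤ ENNReal.ofReal (Real.exp (-(c ^ 2 / 2 * v)) * (Real.sqrt v)⁻¹)
        * (ENNReal.ofReal (3 * (β + 2) * Real.exp (c ^ 2 * L + 2 * c * β))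
          * ENNReal.ofReal (Real.exp (-(1 / 5 * |u|)))) := by
  by_cases hu : u < β
  swap
  · simp [nearCriticalWeight, hu]
  have hweight : β + |u| ≤ (β + 2) * Real.exp (|u| / 2) := by
    nlinarith [Real.add_one_le_exp (|u| / 2),
      Real.one_le_exp (show 0 ≤ |u| / 2 by positivity)]
  rw [nearCriticalWeight, Set.indicator_of_mem (Set.mem_Iio.2 hu), gaussianPDF,
    ← ENNReal.ofReal_mul (by positivity), ← ENNReal.ofReal_mul (gaussianPDFReal_nonneg _ _ _),
    ← ENNReal.ofReal_mul (by positivity), ← ENNReal.ofReal_mul (by positivity)]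
  refine ENNReal.ofReal_le_ofReal ?_
  calc gaussianPDFReal 0 v (c * v - u) * (3 * (β + |u|) * Real.exp (c * a * (c * v - u)))
      ≤ Real.exp (-(c ^ 2 / 2 * v)) * (Real.sqrt v)⁻¹ * Real.exp (c * u)
          * (3 * ((β + 2) * Real.exp (|u| / 2)) * Real.exp (c * a * (c * v - u))) := by
        gcongr
        exact gaussianPDFReal_const_mul_sub_le hv c u
    _ = Real.exp (-(c ^ 2 / 2 * v)) * (Real.sqrt v)⁻¹
          * (3 * (β + 2) * Real.exp (c * u + c * a * (c * v - u) + |u| / 2)) := by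
        rw [Real.exp_add, Real.exp_add]; ring
    _ ≤ Real.exp (-(c ^ 2 / 2 * v)) * (Real.sqrt v)⁻¹
          * (3 * (β + 2) * Real.exp (c ^ 2 * L + 2 * c * β - 1 / 5 * |u|)) := by
        gcongr
        exact nearCritical_exponent_le hc hβ ha ha' hav hu
    _ = _ := by rw [sub_eq_add_neg, Real.exp_add]; ring

lemma exists_lintegral_nearCriticalWeight_gaussianReal_le {c β : ℝ} (hc : 7 / 5 ≤ c) (hβ : 0 ≤ β)
    (L : ℝ) :
    ∃ C ≠ ∞, ∀ (v : ℝ≥0) (a : ℝ), v ≠ 0 → 0 ≤ a → a ≤ 1 / 2 → a * v ≤ L →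
      ∫⁻ w, nearCriticalWeight β (c * v - w) * ENNReal.ofReal (Real.exp (c * a * w))
          ∂gaussianReal 0 v
        ≤ ENNReal.ofReal (Real.exp (-(c ^ 2 / 2 * v)) * (Real.sqrt v)⁻¹) * C := by
  refine ⟨_, ENNReal.mul_ne_top (ENNReal.ofReal_ne_top
    (r := 3 * (β + 2) * Real.exp (c ^ 2 * L + 2 * c * β)))
    (lintegral_exp_neg_mul_abs_ne_top (a := 1 / 5) (by norm_num)), fun v a hv ha ha' hav ↦ ?_⟩
  rw [gaussianReal_of_var_ne_zero _ hv,
    lintegral_withDensity_eq_lintegral_mul _ (measurable_gaussianPDF _ _) (by fun_prop),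
    ← lintegral_sub_left_eq_self _ (c * v), ← lintegral_const_mul' _ _ ENNReal.ofReal_ne_top,
    ← lintegral_const_mul' _ _ ENNReal.ofReal_ne_top]
  refine lintegral_mono fun u ↦ ?_
  simpa only [Pi.mul_apply, sub_sub_cancel] using
    gaussianPDF_mul_nearCriticalWeight_le hc hβ hv ha ha' hav u

end NearCritical

section NearCriticalMass

variable {Ω : Type*} [MeasurableSpace Ω] {P : Measure Ω}

lemma IsGaussianWalk.hasLaw [IsProbabilityMeasure P] {U : ℕ → Ω → ℝ} (hU : IsGaussianWalk P U)
    (n : ℕ) : HasLaw (U n) (gaussianReal 0 n) P := by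
  refine ⟨(hU.measurable n).aemeasurable, ?_⟩
  induction n with
  | zero => simp [Measure.map_congr hU.zero, Pi.zero_def, Measure.map_const]
  | succ n ih =>
    have hindep : IndepFun (fun ω ↦ U (n + 1) ω - U n ω) (U n) P := by
      simpa [Function.comp_def, stoppedPath] using
        (hU.indepFun_increment n).comp measurable_id (measurable_pi_apply n)
    have h := gaussianReal_add_gaussianReal_of_indepFun hindep (hU.hasLaw_increment n).map_eq ih
    have hsum : (fun ω ↦ U (n + 1) ω - U n ω) + U n = U (n + 1) := by ext; simp
    simpa [hsum, add_comm] using h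

variable {E : Type*}

/-- The mass of the points of `A` near or below the critical level `c n` at time `n`. -/
def nearCriticalMass [MeasurableSpace E] (c β : ℝ) (Y : ℕ → E → Ω → ℝ) (μ : Measure E) (A : Set E)
    (n : ℕ) (ω : Ω) : ℝ≥0∞ :=
  ∫⁻ x in A, nearCriticalWeight β (c * n - Y n x ω) * criticalDensity c n (Y n x ω) ∂μ

variable [NormedAddCommGroup E]

lemma IsBranchingField.exists_lintegral_nearCriticalWeight_mul_le [IsProbabilityMeasure P]
    {Y : ℕ → E → Ω → ℝ} {R L c β : ℝ} (hY : IsBranchingField P Y R L) (hc : 7 / 5 ≤ c)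
    (hβ : 0 ≤ β) :
    ∃ C ≠ ∞, ∀ n : ℕ, 1 ≤ n → 2 * L ≤ n → ∀ x y, ‖x - y‖ ≤ Real.exp (-n) →
      ∫⁻ ω, nearCriticalWeight β (c * n - Y n x ω) * criticalDensity c n (Y n x ω)
          * (criticalDensity c n (Y n y ω))⁻¹ ∂P
        ≤ ENNReal.ofReal (Real.exp (-(c ^ 2 / 2 * n)) * (Real.sqrt n)⁻¹) * C := by
  obtain ⟨C, hC, hweight⟩ := exists_lintegral_nearCriticalWeight_gaussianReal_le hc hβ L
  refine ⟨C * ENNReal.ofReal (Real.exp (L * c ^ 2)), ENNReal.mul_ne_top hC ENNReal.ofReal_ne_top,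
    fun n hn hLn x y hxy ↦ ?_⟩
  obtain ⟨a, v, ha, haL, hv, hlaw, hindep⟩ := hY.comparison n x y hn hxy
  have hn' : (1 : ℝ) ≤ n := by exact_mod_cast hn
  have ha' : a ≤ 1 / 2 := by nlinarith
  have hx := (hY.walk x).hasLaw n
  let f : ℝ → ℝ≥0∞ := fun w ↦ 
    nearCriticalWeight β (c * n - w) * ENNReal.ofReal (Real.exp (c * a * w))
  let g : ℝ → ℝ≥0∞ := fun z ↦ ENNReal.ofReal (Real.exp (c * z))
  have hf : Measurable f := by fun_prop
  have hg : Measurable g := by fun_prop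
  have hsplit (w z : ℝ) : nearCriticalWeight β (c * n - w) * criticalDensity c n w
      * (criticalDensity c n z)⁻¹ = f w * g (w - z - a * w) := by
    rw [mul_assoc, criticalDensity_mul_inv, mul_assoc, ← ENNReal.ofReal_mul (Real.exp_pos _).le,
      ← Real.exp_add]
    congr 3
    ring
  calc ∫⁻ ω, nearCriticalWeight β (c * n - Y n x ω) * criticalDensity c n (Y n x ω)
          * (criticalDensity c n (Y n y ω))⁻¹ ∂P
      = ∫⁻ ω, f (Y n x ω) * g (Y n x ω - Y n y ω - a * Y n x ω) ∂P := by simp only [hsplit]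
    _ = (∫⁻ ω, f (Y n x ω) ∂P) * ∫⁻ ω, g (Y n x ω - Y n y ω - a * Y n x ω) ∂P :=
        lintegral_mul_eq_lintegral_mul_lintegral_of_indepFun''
          (hf.comp_aemeasurable hx.aemeasurable)
          (hg.comp_aemeasurable hlaw.aemeasurable) (hindep.symm.comp hf hg)
    _ = (∫⁻ w, f w ∂gaussianReal 0 n) * ∫⁻ z, g z ∂gaussianReal 0 v := by
        rw [← hx.lintegral_comp hf.aemeasurable, ← hlaw.lintegral_comp hg.aemeasurable]
    _ ≤ ENNReal.ofReal (Real.exp (-(c ^ 2 / 2 * n)) * (Real.sqrt n)⁻¹) * C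
          * ENNReal.ofReal (Real.exp (L * c ^ 2)) := by
        gcongr
        · exact_mod_cast hweight n a (by positivity) ha ha' (by exact_mod_cast haL)
        · rw [lintegral_exp_mul_gaussianReal]
          refine ENNReal.ofReal_le_ofReal (Real.exp_le_exp.2 ?_)
          nlinarith [sq_nonneg c]
    _ = _ := mul_assoc _ _ _

lemma measure_univ_sq_le_lintegral_mul_lintegral_inv {α : Type*} [MeasurableSpace α]
    {μ : Measure α} {f : α → ℝ≥0∞} (hf : AEMeasurable f μ) (h0 : ∀ x, f x ≠ 0)
    (htop : ∀ x, f x ≠ ∞) :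
    μ Set.univ ^ 2 ≤ (∫⁻ x, f x ∂μ) * ∫⁻ x, (f x)⁻¹ ∂μ := by
  have h := ENNReal.lintegral_mul_norm_pow_le hf hf.inv (p := 1 / 2) (q := 1 / 2)
    (by norm_num) (by norm_num) (by norm_num)
  have hone (x : α) : f x ^ (1 / 2 : ℝ) * (f⁻¹) x ^ (1 / 2 : ℝ) = 1 := by
    rw [Pi.inv_apply, ← ENNReal.mul_rpow_of_nonneg _ _ (by norm_num),
      ENNReal.mul_inv_cancel (h0 x) (htop x), ENNReal.one_rpow]
  simp only [hone, lintegral_one, ← ENNReal.mul_rpow_of_nonneg _ _ (show (0:ℝ) ≤ 1 / 2 by norm_num)]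
    at h
  calc μ Set.univ ^ 2 ≤ (((∫⁻ x, f x ∂μ) * ∫⁻ x, (f⁻¹) x ∂μ) ^ (1 / 2 : ℝ)) ^ 2 := by gcongr
    _ = _ := by rw [← ENNReal.rpow_natCast, ← ENNReal.rpow_mul]; norm_num

variable [MeasurableSpace E]

/-- Averaging the comparison of `x` with `x + h` over a ball of `h`s, by the Cauchy–Schwarz
inequality for `f ^ (1 / 2) * f ^ (-1 / 2)`. -/
lemma setLIntegral_mul_measure_closedBall_sq_le [BorelSpace E] [SecondCountableTopology E]
    {μ : Measure E} [SFinite μ] [μ.IsAddLeftInvariant] {A : Set E} (hA : MeasurableSet A) {r : ℝ}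
    {f g : E → ℝ≥0∞} (hf : Measurable f) (hg : Measurable g) (h0 : ∀ x, f x ≠ 0)
    (htop : ∀ x, f x ≠ ∞) :
    (∫⁻ x in A, g x ∂μ) * μ (Metric.closedBall 0 r) ^ 2
      ≤ (∫⁻ x in Metric.cthickening r A, f x ∂μ)
        * ∫⁻ x in A, ∫⁻ h in Metric.closedBall 0 r, g x * (f (x + h))⁻¹ ∂μ ∂μ := by
  have hfg : Measurable fun p : E × E ↦ g p.1 * (f (p.1 + p.2))⁻¹ := by fun_prop
  rw [← lintegral_mul_const _ hg, ← lintegral_const_mul _ hfg.lintegral_prod_right']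
  refine setLIntegral_mono' hA fun x hx ↦ ?_
  have hball : ∫⁻ h in Metric.closedBall 0 r, f (x + h) ∂μ
      ≤ ∫⁻ y in Metric.cthickening r A, f y ∂μ := by
    have h := (measurePreserving_add_left μ x).setLIntegral_comp_preimage
      (Metric.isClosed_closedBall (x := x) (ε := r)).measurableSet hf
    rw [preimage_add_closedBall, sub_self] at h
    rw [h]
    exact lintegral_mono_set (Metric.closedBall_subset_cthickening hx r)
  calc g x * μ (Metric.closedBall 0 r) ^ 2
      ≤ g x * ((∫⁻ h in Metric.closedBall 0 r, f (x + h) ∂μ)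
          * ∫⁻ h in Metric.closedBall 0 r, (f (x + h))⁻¹ ∂μ) := by
        gcongr
        simpa using measure_univ_sq_le_lintegral_mul_lintegral_inv
          (μ := μ.restrict (Metric.closedBall 0 r)) (f := fun h ↦ f (x + h)) (by fun_prop)
          (fun _ ↦ h0 _) (fun _ ↦ htop _)
    _ ≤ g x * ((∫⁻ y in Metric.cthickening r A, f y ∂μ)
          * ∫⁻ h in Metric.closedBall 0 r, (f (x + h))⁻¹ ∂μ) := by gcongr
    _ = (∫⁻ y in Metric.cthickening r A, f y ∂μ)
          * ∫⁻ h in Metric.closedBall 0 r, g x * (f (x + h))⁻¹ ∂μ := by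
        rw [lintegral_const_mul _ (by fun_prop)]
        ring

lemma lintegral_lintegral_lintegral_rotate {α γ : Type*} [MeasurableSpace α] [MeasurableSpace γ]
    [SFinite P] {μ : Measure α} [SFinite μ] {ν : Measure γ} [SFinite ν] {f : α → γ → Ω → ℝ≥0∞}
    (hf : Measurable fun q : (α × γ) × Ω ↦ f q.1.1 q.1.2 q.2) :
    ∫⁻ ω, ∫⁻ x, ∫⁻ y, f x y ω ∂ν ∂μ ∂P = ∫⁻ x, ∫⁻ y, ∫⁻ ω, f x y ω ∂P ∂ν ∂μ := by
  rw [lintegral_lintegral_swap]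
  · refine lintegral_congr fun x ↦ lintegral_lintegral_swap (Measurable.aemeasurable ?_)
    exact hf.comp (by fun_prop : Measurable fun r : Ω × γ ↦ ((x, r.2), r.1))
  · refine (Measurable.lintegral_prod_right' (f := fun r : (Ω × α) × γ ↦ f r.1.2 r.2 r.1.1)
      ?_).aemeasurable
    exact hf.comp (by fun_prop : Measurable fun r : (Ω × α) × γ ↦ ((r.1.2, r.2), r.1.1))

lemma tendsto_lintegral_min_of_le_mul {F W D : ℕ → Ω → ℝ≥0∞} (h : ∀ n ω, F n ω ≤ W n ω * D n ω)
    (hW : ∀ n, Measurable (W n)) {g : ℝ≥0∞} (hg : g ≠ ∞) (hWg : ∀ n, ∫⁻ ω, W n ω ∂P ≤ g)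
    (hD : Tendsto (fun n ↦ ∫⁻ ω, D n ω ∂P) atTop (𝓝 0)) {K : ℝ≥0∞} (hK : K ≠ ∞) :
    Tendsto (fun n ↦ ∫⁻ ω, min (F n ω) K ∂P) atTop (𝓝 0) := by
  have hpoint (T : ℝ≥0∞) (hT0 : T ≠ 0) (hT : T ≠ ∞) (n : ℕ) (ω : Ω) :
      min (F n ω) K ≤ T * D n ω + K * T⁻¹ * W n ω := by
    rcases le_total (W n ω) T with hle | hle
    · exact (min_le_left _ _).trans ((h n ω).trans (le_add_right (by gcongr)))
    · refine (min_le_right _ _).trans (le_add_left ?_)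
      calc K = K * T⁻¹ * T := by rw [mul_assoc, ENNReal.inv_mul_cancel hT0 hT, mul_one]
        _ ≤ K * T⁻¹ * W n ω := by gcongr
  have hint (T : ℝ≥0∞) (hT0 : T ≠ 0) (hT : T ≠ ∞) (n : ℕ) :
      ∫⁻ ω, min (F n ω) K ∂P ≤ T * ∫⁻ ω, D n ω ∂P + K * T⁻¹ * g := by
    refine (lintegral_mono (hpoint T hT0 hT n)).trans ?_
    rw [lintegral_add_right _ ((hW n).const_mul _), lintegral_const_mul' _ _ hT,
      lintegral_const_mul _ (hW n)]
    gcongr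
    exact hWg n
  refine ENNReal.tendsto_nhds_zero.2 fun ε hε ↦ ?_
  have hTlim : Tendsto (fun m : ℕ ↦ K * (m : ℝ≥0∞)⁻¹ * g) atTop (𝓝 0) := by
    simpa using ENNReal.Tendsto.mul_const
      (ENNReal.Tendsto.const_mul ENNReal.tendsto_inv_nat_nhds_zero (.inr hK)) (.inr hg)
  obtain ⟨m, hmε, hm⟩ := ((hTlim.eventually_lt_const hε).and (eventually_ge_atTop 1)).exists
  have hnlim : Tendsto (fun n ↦ (m : ℝ≥0∞) * ∫⁻ ω, D n ω ∂P + K * (m : ℝ≥0∞)⁻¹ * g) atTop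
      (𝓝 (K * (m : ℝ≥0∞)⁻¹ * g)) := by
    simpa using (ENNReal.Tendsto.const_mul hD (.inr (ENNReal.natCast_ne_top m))).add_const
      (K * (m : ℝ≥0∞)⁻¹ * g)
  filter_upwards [hnlim.eventually_lt_const hmε] with n hn
  exact (hint m (by positivity) (ENNReal.natCast_ne_top m) n).trans hn.le

section Field

variable [IsProbabilityMeasure P] {Y : ℕ → E → Ω → ℝ} {R L c β : ℝ} {μ : Measure E}

lemma IsBranchingField.lintegral_setLIntegral_criticalDensity [SFinite μ]
    (hY : IsBranchingField P Y R L) (hYm : ∀ n, Measurable (Function.uncurry (Y n))) (c : ℝ)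
    (A : Set E) (n : ℕ) :
    ∫⁻ ω, ∫⁻ x in A, criticalDensity c n (Y n x ω) ∂μ ∂P = μ A := by
  rw [← lintegral_lintegral_swap (f := fun x ω ↦ criticalDensity c n (Y n x ω))
    ((measurable_criticalDensity c n).comp (hYm n)).aemeasurable]
  simp only [((hY.walk _).hasLaw n).lintegral_comp (measurable_criticalDensity c n).aemeasurable,
    lintegral_criticalDensity_gaussianReal, setLIntegral_one]

/-- The error in comparing the points of `A` with the points at distance at most `e⁻ⁿ`. -/
def comparisonMass (c β : ℝ) (Y : ℕ → E → Ω → ℝ) (μ : Measure E) (A : Set E) (n : ℕ) (ω : Ω) :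
    ℝ≥0∞ :=
  (∫⁻ x in A, ∫⁻ h in Metric.closedBall 0 (Real.exp (-n)),
      nearCriticalWeight β (c * n - Y n x ω) * criticalDensity c n (Y n x ω)
        * (criticalDensity c n (Y n (x + h) ω))⁻¹ ∂μ ∂μ)
    / μ (Metric.closedBall 0 (Real.exp (-n))) ^ 2

variable [BorelSpace E] [NormedSpace ℝ E] [FiniteDimensional ℝ E] [μ.IsAddHaarMeasure]

lemma nearCriticalMass_le_mul_comparisonMass
    (hYm : ∀ n, Measurable (Function.uncurry (Y n))) {A : Set E} (hA : MeasurableSet A) (n : ℕ)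
    (ω : Ω) :
    nearCriticalMass c β Y μ A n ω
      ≤ (∫⁻ x in Metric.cthickening 1 A, criticalDensity c n (Y n x ω) ∂μ)
        * comparisonMass c β Y μ A n ω := by
  have hYω : Measurable fun x ↦ Y n x ω := (hYm n).comp measurable_prodMk_right
  have hball : μ (Metric.closedBall 0 (Real.exp (-n))) ^ 2 ≠ 0 :=
    pow_ne_zero _ (Metric.measure_closedBall_pos μ 0 (Real.exp_pos _)).ne'
  rw [comparisonMass, ← mul_div_assoc, ENNReal.le_div_iff_mul_le (.inl hball)
    (.inl (ENNReal.pow_ne_top measure_closedBall_lt_top.ne))]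
  refine (setLIntegral_mul_measure_closedBall_sq_le hA (f := fun x ↦ criticalDensity c n (Y n x ω))
    (by fun_prop) (by fun_prop) (fun _ ↦ criticalDensity_ne_zero _ _ _)
    (fun _ ↦ criticalDensity_ne_top _ _ _)).trans ?_
  gcongr
  exact Metric.cthickening_mono (Real.exp_le_one_iff.2 (by simp)) A

lemma ofReal_exp_neg_eq_addHaar_closedBall_mul_inv (hcd : c ^ 2 = 2 * Module.finrank ℝ E)
    (n : ℕ) :
    ENNReal.ofReal (Real.exp (-(c ^ 2 / 2 * n)))
      = μ (Metric.closedBall 0 (Real.exp (-n))) * (μ (Metric.closedBall 0 1))⁻¹ := by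
  rw [Measure.addHaar_closedBall' μ 0 (Real.exp_pos _).le, mul_assoc, ENNReal.mul_inv_cancel
    (Metric.measure_closedBall_pos μ 0 one_pos).ne' measure_closedBall_lt_top.ne, mul_one,
    ← Real.exp_nat_mul, hcd]
  congr 2
  ring

lemma lintegral_comparisonMass_le {C : ℝ≥0∞}
    (hYm : ∀ n, Measurable (Function.uncurry (Y n))) {A : Set E} {n : ℕ}
    (hcd : c ^ 2 = 2 * Module.finrank ℝ E)
    (hpair : ∀ x y, ‖x - y‖ ≤ Real.exp (-n) →
      ∫⁻ ω, nearCriticalWeight β (c * n - Y n x ω) * criticalDensity c n (Y n x ω)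
          * (criticalDensity c n (Y n y ω))⁻¹ ∂P
        ≤ ENNReal.ofReal (Real.exp (-(c ^ 2 / 2 * n)) * (Real.sqrt n)⁻¹) * C) :
    ∫⁻ ω, comparisonMass c β Y μ A n ω ∂P
      ≤ ENNReal.ofReal (Real.sqrt n)⁻¹ * (C * μ A / μ (Metric.closedBall 0 1)) := by
  have hmeas : Measurable fun q : (E × E) × Ω ↦ nearCriticalWeight β (c * n - Y n q.1.1 q.2)
      * criticalDensity c n (Y n q.1.1 q.2)
      * (criticalDensity c n (Y n (q.1.1 + q.1.2) q.2))⁻¹ := by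
    have hx : Measurable fun q : (E × E) × Ω ↦ Y n q.1.1 q.2 :=
      (hYm n).comp (by fun_prop : Measurable fun q : (E × E) × Ω ↦ (q.1.1, q.2))
    have hxh : Measurable fun q : (E × E) × Ω ↦ Y n (q.1.1 + q.1.2) q.2 :=
      (hYm n).comp (by fun_prop : Measurable fun q : (E × E) × Ω ↦ (q.1.1 + q.1.2, q.2))
    exact ((by fun_prop : Measurable fun w ↦ nearCriticalWeight β (c * n - w)
      * criticalDensity c n w).comp hx).mul
        ((by fun_prop : Measurable fun w ↦ (criticalDensity c n w)⁻¹).comp hxh)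
  have hb₁ := ofReal_exp_neg_eq_addHaar_closedBall_mul_inv (μ := μ) hcd n
  set b := μ (Metric.closedBall 0 (Real.exp (-n)))
  have hb0 : b ≠ 0 := (Metric.measure_closedBall_pos μ 0 (Real.exp_pos _)).ne'
  have hb : b ≠ ∞ := measure_closedBall_lt_top.ne
  simp only [comparisonMass, div_eq_mul_inv]
  rw [lintegral_mul_const' _ _ (ENNReal.inv_ne_top.2 (pow_ne_zero 2 hb0)),
    lintegral_lintegral_lintegral_rotate hmeas]
  calc _ ≤ (∫⁻ _ in A, ∫⁻ _ in Metric.closedBall 0 (Real.exp (-n)),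
            ENNReal.ofReal (Real.exp (-(c ^ 2 / 2 * n)) * (Real.sqrt n)⁻¹) * C ∂μ ∂μ)
          * (b ^ 2)⁻¹ := by
        refine mul_le_mul_left (lintegral_mono fun x ↦ ?_) _
        refine setLIntegral_mono' Metric.isClosed_closedBall.measurableSet fun h hh ↦ ?_
        exact hpair x (x + h) (by simpa using hh)
    _ = ENNReal.ofReal (Real.sqrt n)⁻¹ * (C * μ A * (μ (Metric.closedBall 0 1))⁻¹)
          * (b ^ 2 * (b ^ 2)⁻¹) := by
        rw [setLIntegral_const, setLIntegral_const, ENNReal.ofReal_mul (Real.exp_pos _).le, hb₁]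
        ring
    _ = _ := by rw [ENNReal.mul_inv_cancel (pow_ne_zero _ hb0) (ENNReal.pow_ne_top hb), mul_one]

lemma IsBranchingField.tendsto_lintegral_min_nearCriticalMass (hY : IsBranchingField P Y R L)
    (hYm : ∀ n, Measurable (Function.uncurry (Y n))) (hβ : 0 ≤ β) (hc : 7 / 5 ≤ c)
    (hcd : c ^ 2 = 2 * Module.finrank ℝ E) {A : Set E} (hA : MeasurableSet A)
    (hAb : Bornology.IsBounded A) {K : ℝ≥0∞} (hK : K ≠ ∞) :
    Tendsto (fun n ↦ ∫⁻ ω, min (nearCriticalMass c β Y μ A n ω) K ∂P) atTop (𝓝 0) := by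
  obtain ⟨C, hC, hpair⟩ := hY.exists_lintegral_nearCriticalWeight_mul_le hc hβ
  refine tendsto_lintegral_min_of_le_mul
    (fun n ω ↦ nearCriticalMass_le_mul_comparisonMass hYm hA n ω)
    (fun n ↦ ((measurable_criticalDensity c n).comp (hYm n)).lintegral_prod_left')
    hAb.cthickening.measure_lt_top.ne
    (fun n ↦ (hY.lintegral_setLIntegral_criticalDensity hYm c _ n).le) ?_ hK
  have hsqrt : Tendsto (fun n : ℕ ↦ (Real.sqrt n)⁻¹) atTop (𝓝 0) :=
    tendsto_inv_atTop_zero.comp (Real.tendsto_sqrt_atTop.comp tendsto_natCast_atTop_atTop)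
  have hA' : C * μ A / μ (Metric.closedBall 0 1) ≠ ∞ :=
    ENNReal.div_ne_top (ENNReal.mul_ne_top hC hAb.measure_lt_top.ne)
      (Metric.measure_closedBall_pos μ 0 one_pos).ne'
  have hbound := ENNReal.Tendsto.mul_const (ENNReal.tendsto_ofReal hsqrt) (.inr hA')
  rw [ENNReal.ofReal_zero, zero_mul] at hbound
  refine tendsto_of_tendsto_of_tendsto_of_le_of_le' tendsto_const_nhds hbound
    (.of_forall fun _ ↦ zero_le) ?_
  filter_upwards [eventually_ge_atTop 1, eventually_ge_atTop ⌈2 * L⌉₊] with n hn hnL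
  exact lintegral_comparisonMass_le hYm hcd (hpair n hn (Nat.ceil_le.1 hnL))

end Field

end NearCriticalMass

section FirstMoment

lemma lintegral_le_ofReal_integral_add {α : Type*} [MeasurableSpace α] {μ : Measure α}
    {f : α → ℝ} (hf : Integrable f μ) {z w : α → ℝ≥0∞}
    (h : ∀ x, z x + ENNReal.ofReal (-f x) ≤ ENNReal.ofReal (f x) + w x) :
    ∫⁻ x, z x ∂μ ≤ ENNReal.ofReal (∫ x, f x ∂μ) + ∫⁻ x, w x ∂μ := by
  have hpos : ∫⁻ x, ENNReal.ofReal (f x) ∂μ ≠ ∞ := hf.lintegral_lt_top.ne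
  have hneg : ∫⁻ x, ENNReal.ofReal (-f x) ∂μ ≠ ∞ := hf.neg.lintegral_lt_top.ne
  have hle : ∫⁻ x, ENNReal.ofReal (f x) ∂μ
      ≤ ENNReal.ofReal (∫ x, f x ∂μ) + ∫⁻ x, ENNReal.ofReal (-f x) ∂μ := by
    rw [integral_eq_lintegral_pos_part_sub_lintegral_neg_part hf,
      ENNReal.ofReal_sub _ ENNReal.toReal_nonneg, ENNReal.ofReal_toReal hpos,
      ENNReal.ofReal_toReal hneg]
    exact le_tsub_add
  refine ENNReal.le_of_add_le_add_right hneg ?_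
  calc ∫⁻ x, z x ∂μ + ∫⁻ x, ENNReal.ofReal (-f x) ∂μ
      = ∫⁻ x, z x + ENNReal.ofReal (-f x) ∂μ :=
        (lintegral_add_right' _ hf.aemeasurable.neg.ennreal_ofReal).symm
    _ ≤ ∫⁻ x, ENNReal.ofReal (f x) + w x ∂μ := lintegral_mono h
    _ = ∫⁻ x, ENNReal.ofReal (f x) ∂μ + ∫⁻ x, w x ∂μ :=
        lintegral_add_left' hf.aemeasurable.ennreal_ofReal _
    _ ≤ ENNReal.ofReal (∫ x, f x ∂μ) + ∫⁻ x, ENNReal.ofReal (-f x) ∂μ + ∫⁻ x, w x ∂μ := by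
        gcongr
    _ = _ := add_right_comm _ _ _

/-- Above the level `β` the truncated density is at most twice the signed one; below it, all
the terms are absorbed by the error. -/
lemma barrierFunctional_add_ofReal_neg_le {c β : ℝ} (hβ : 0 ≤ β) (n : ℕ) (p : ℕ → ℝ) :
    barrierFunctional c β ENNReal.ofReal n p
        + ENNReal.ofReal (-(2 * ((c * n - p n) * Real.exp (c * p n - c ^ 2 / 2 * n))))
      ≤ ENNReal.ofReal (2 * ((c * n - p n) * Real.exp (c * p n - c ^ 2 / 2 * n)))
        + nearCriticalWeight β (c * n - p n) * criticalDensity c n (p n) := by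
  have hkill : barrierFunctional c β ENNReal.ofReal n p
      ≤ ENNReal.ofReal (Real.exp (c * p n - c ^ 2 / 2 * n))
        * ENNReal.ofReal (β + (c * n - p n)) := by
    unfold barrierFunctional barrierGap
    split_ifs
    · rw [add_sub_assoc]
    · exact zero_le
  set u := c * n - p n
  set e := Real.exp (c * p n - c ^ 2 / 2 * n) with he
  have he0 : 0 ≤ e := (Real.exp_pos _).le
  refine (add_le_add_left hkill _).trans ?_
  rw [← ENNReal.ofReal_mul he0, nearCriticalWeight, criticalDensity, ← he]
  rcases lt_or_ge u β with hu | hu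
  · rw [Set.indicator_of_mem (Set.mem_Iio.2 hu), ← ENNReal.ofReal_mul (by positivity)]
    refine le_add_left ?_
    rcases le_total 0 u with h | h
    · rw [ENNReal.ofReal_of_nonpos (neg_nonpos.2 (by positivity)), add_zero, abs_of_nonneg h]
      exact ENNReal.ofReal_le_ofReal (by nlinarith [mul_nonneg he0 (add_nonneg hβ h)])
    · have hsum : e * (β + u) ≤ e * β := by gcongr; linarith
      rw [abs_of_nonpos h]
      calc _ ≤ ENNReal.ofReal (e * β) + ENNReal.ofReal (-(2 * (u * e))) := by gcongr
        _ = ENNReal.ofReal (e * β + -(2 * (u * e))) :=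
          (ENNReal.ofReal_add (by positivity) (by nlinarith)).symm
        _ ≤ _ := ENNReal.ofReal_le_ofReal (by nlinarith [mul_nonneg he0 hβ])
  · have h : 0 ≤ u := hβ.trans hu
    rw [ENNReal.ofReal_of_nonpos (neg_nonpos.2 (by positivity)), add_zero]
    refine le_add_right (ENNReal.ofReal_le_ofReal ?_)
    nlinarith

lemma le_min_add_min_add_inv_mul_sq {z m f K : ℝ≥0∞} (h : z ≤ m + f) (hK0 : K ≠ 0) (hK : K ≠ ∞) :
    z ≤ min m K + (min f K + K⁻¹ * z ^ 2) := by
  rcases le_total z K with hz | hz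
  · rw [← add_assoc]
    refine le_add_right ((le_min h hz).trans ?_)
    rcases le_total m K with hm | hm <;> rcases le_total f K with hf | hf <;> simp [hm, hf]
  · refine le_add_left (le_add_left ?_)
    calc z = K⁻¹ * K * z := by rw [ENNReal.inv_mul_cancel hK0 hK, one_mul]
      _ ≤ K⁻¹ * z * z := by gcongr
      _ = K⁻¹ * z ^ 2 := by ring

variable {Ω : Type*} [MeasurableSpace Ω] {P : Measure Ω}

lemma le_lintegral_ofReal_of_le_ofReal_add [IsFiniteMeasure P] {Z F : ℕ → Ω → ℝ≥0∞}
    {M : ℕ → Ω → ℝ} {M' : Ω → ℝ} {a C : ℝ≥0∞} (hZm : ∀ n, Measurable (Z n))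
    (hMm : ∀ n, Measurable (M n)) (hle : ∀ n ω, Z n ω ≤ ENNReal.ofReal (M n ω) + F n ω)
    (ha : ∀ n, a ≤ ∫⁻ ω, Z n ω ∂P) (hC : C ≠ ∞) (hZC : ∀ n, ∫⁻ ω, Z n ω ^ 2 ∂P ≤ C)
    (hF : ∀ K ≠ ∞, Tendsto (fun n ↦ ∫⁻ ω, min (F n ω) K ∂P) atTop (𝓝 0))
    (hM : ∀ᵐ ω ∂P, Tendsto (M · ω) atTop (𝓝 (M' ω))) :
    a ≤ ∫⁻ ω, ENNReal.ofReal (M' ω) ∂P := by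
  have hstep (K : ℝ≥0∞) (hK0 : K ≠ 0) (hK : K ≠ ∞) (n : ℕ) :
      a ≤ ∫⁻ ω, min (ENNReal.ofReal (M n ω)) K ∂P + (∫⁻ ω, min (F n ω) K ∂P + K⁻¹ * C) := by
    refine (ha n).trans ((lintegral_mono fun ω ↦
      le_min_add_min_add_inv_mul_sq (hle n ω) hK0 hK).trans ?_)
    rw [lintegral_add_left ((hMm n).ennreal_ofReal.min measurable_const),
      lintegral_add_right _ (((hZm n).pow_const 2).const_mul _),
      lintegral_const_mul _ ((hZm n).pow_const 2)]
    gcongr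
    exact hZC n
  have hlim (K : ℝ≥0∞) (hK0 : K ≠ 0) (hK : K ≠ ∞) :
      a ≤ ∫⁻ ω, ENNReal.ofReal (M' ω) ∂P + K⁻¹ * C := by
    have hdom : Tendsto (fun n ↦ ∫⁻ ω, min (ENNReal.ofReal (M n ω)) K ∂P) atTop
        (𝓝 (∫⁻ ω, min (ENNReal.ofReal (M' ω)) K ∂P)) :=
      tendsto_lintegral_of_dominated_convergence (fun _ ↦ K)
        (fun n ↦ (hMm n).ennreal_ofReal.min measurable_const)
        (fun n ↦ .of_forall fun ω ↦ min_le_right _ _)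
        (by rw [lintegral_const]; finiteness)
        (hM.mono fun ω hω ↦ (ENNReal.tendsto_ofReal hω).min tendsto_const_nhds)
    have hsum := hdom.add ((hF K hK).add_const (K⁻¹ * C))
    rw [zero_add] at hsum
    refine (ge_of_tendsto' hsum (hstep K hK0 hK)).trans ?_
    gcongr
    exact min_le_left _ _
  have hK : Tendsto (fun K : ℕ ↦ ∫⁻ ω, ENNReal.ofReal (M' ω) ∂P + (K : ℝ≥0∞)⁻¹ * C) atTop
      (𝓝 (∫⁻ ω, ENNReal.ofReal (M' ω) ∂P)) := by
    simpa using (ENNReal.Tendsto.mul_const ENNReal.tendsto_inv_nat_nhds_zero (.inr hC)).const_add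
      (∫⁻ ω, ENNReal.ofReal (M' ω) ∂P)
  refine ge_of_tendsto hK ?_
  filter_upwards [eventually_ge_atTop 1] with K hK1
  exact hlim K (by positivity) (ENNReal.natCast_ne_top K)

variable {E : Type*} [MeasurableSpace E] {μ : Measure E}

/-- The mass of `A` for the derivative martingale measure `M'ₙ`. -/
def derivativeMass (c : ℝ) (Y : ℕ → E → Ω → ℝ) (μ : Measure E) (A : Set E) (n : ℕ) (ω : Ω) : ℝ :=
  ∫ x in A, (c * n - Y n x ω) * Real.exp (c * Y n x ω - c ^ 2 / 2 * n) ∂μ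

lemma measurable_derivativeMass [SFinite μ] {Y : ℕ → E → Ω → ℝ}
    (hYm : ∀ n, Measurable (Function.uncurry (Y n))) (c : ℝ) (A : Set E) (n : ℕ) :
    Measurable (derivativeMass c Y μ A n) := by
  have h := hYm n
  refine (StronglyMeasurable.integral_prod_left
    (f := fun x ω ↦ (c * n - Y n x ω) * Real.exp (c * Y n x ω - c ^ 2 / 2 * n)) ?_).measurable
  exact Measurable.stronglyMeasurable (by unfold Function.uncurry at *; fun_prop)

variable [NormedAddCommGroup E] [NormedSpace ℝ E] [FiniteDimensional ℝ E] [BorelSpace E]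
  [μ.IsAddHaarMeasure]

lemma truncatedMass_le_ofReal_derivativeMass_add {Ω : Type*} {Y : ℕ → E → Ω → ℝ} {c β : ℝ}
    (hβ : 0 ≤ β)
    {A : Set E} (hAb : Bornology.IsBounded A) {n : ℕ} {ω : Ω} (hYc : Continuous (Y n · ω)) :
    truncatedMass c β Y μ A n ω
      ≤ ENNReal.ofReal (2 * derivativeMass c Y μ A n ω) + nearCriticalMass c β Y μ A n ω := by
  have hcont : Continuous fun x ↦
      2 * ((c * n - Y n x ω) * Real.exp (c * Y n x ω - c ^ 2 / 2 * n)) := by fun_prop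
  have hint := (hcont.locallyIntegrable (μ := μ)).integrableOn_isCompact hAb.isCompact_closure
    |>.mono_set subset_closure
  rw [derivativeMass, ← integral_const_mul]
  exact lintegral_le_ofReal_integral_add hint fun x ↦
    barrierFunctional_add_ofReal_neg_le hβ n (Y · x ω)

theorem IsBranchingField.lintegral_ofReal_eq_top [IsProbabilityMeasure P] {Y : ℕ → E → Ω → ℝ}
    {R L c : ℝ} (hY : IsBranchingField P Y R L) (hYm : ∀ n, Measurable (Function.uncurry (Y n)))
    (hYc : ∀ n ω, Continuous (Y n · ω)) (hc : 7 / 5 ≤ c) (hcd : c ^ 2 = 2 * Module.finrank ℝ E)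
    {A : Set E} (hA : MeasurableSet A) (hAb : Bornology.IsBounded A) (hA0 : μ A ≠ 0) {M' : Ω → ℝ}
    (hM : ∀ᵐ ω ∂P, Tendsto (derivativeMass c Y μ A · ω) atTop (𝓝 (M' ω))) :
    ∫⁻ ω, ENNReal.ofReal (M' ω) ∂P = ∞ := by
  have hle (m : ℕ) : (m : ℝ≥0∞) * μ A ≤ ∫⁻ ω, ENNReal.ofReal (2 * M' ω) ∂P := by
    have hm : (0 : ℝ) ≤ m := m.cast_nonneg
    obtain ⟨C, hC, hZC⟩ := hY.exists_lintegral_truncatedMass_sq_le (μ := μ) hYm hm hc hcd hA hAb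
    rw [← ENNReal.ofReal_natCast]
    exact le_lintegral_ofReal_of_le_ofReal_add (fun n ↦ measurable_truncatedMass hYm c m A n)
      (fun n ↦ (measurable_derivativeMass hYm c A n).const_mul 2)
      (fun n ω ↦ truncatedMass_le_ofReal_derivativeMass_add hm hAb (hYc n ω))
      (hY.le_lintegral_truncatedMass hYm hm A) hC hZC
      (fun K hK ↦ hY.tendsto_lintegral_min_nearCriticalMass hYm hm hc hcd hA hAb hK)
      (hM.mono fun ω hω ↦ hω.const_mul 2)
  have htop : ∫⁻ ω, ENNReal.ofReal (2 * M' ω) ∂P = ∞ := by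
    have hlim := ENNReal.Tendsto.mul_const ENNReal.tendsto_nat_nhds_top (.inl ENNReal.top_ne_zero)
      (b := μ A)
    rw [ENNReal.top_mul hA0] at hlim
    exact top_le_iff.1 (le_of_tendsto' hlim hle)
  simp only [ENNReal.ofReal_mul zero_le_two] at htop
  rw [lintegral_const_mul' _ _ ENNReal.ofReal_ne_top] at htop
  exact ((ENNReal.mul_eq_top.1 htop).resolve_right fun h ↦ ENNReal.ofReal_ne_top h.1).2

end FirstMoment

section GaussianSpace

variable {Ω : Type*} [MeasurableSpace Ω] {P : Measure Ω} {S : Submodule ℝ (Ω → ℝ)} {U V : Ω → ℝ}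

/-- A Gaussian space: a linear space of random variables all of whose elements are centered
Gaussian, possibly with variance zero. -/
def IsCenteredGaussianSpace (P : Measure Ω) (S : Submodule ℝ (Ω → ℝ)) : Prop :=
  ∀ U ∈ S, ∃ v : ℝ≥0, HasLaw U (gaussianReal 0 v) P

namespace IsCenteredGaussianSpace

lemma memLp_two (hS : IsCenteredGaussianSpace P S) (hU : U ∈ S) : MemLp U 2 P := by
  obtain ⟨v, hv⟩ := hS U hU
  exact (memLp_map_measure_iff aestronglyMeasurable_id hv.aemeasurable).1
    (hv.map_eq ▸ memLp_id_gaussianReal 2)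

lemma integral_eq_zero (hS : IsCenteredGaussianSpace P S) (hU : U ∈ S) : ∫ ω, U ω ∂P = 0 := by
  obtain ⟨v, hv⟩ := hS U hU
  rw [hv.integral_eq, integral_id_gaussianReal]

lemma hasLaw_of_variance_eq (hS : IsCenteredGaussianSpace P S) (hU : U ∈ S) {v : ℝ≥0}
    (hv : Var[U; P] = v) : HasLaw U (gaussianReal 0 v) P := by
  obtain ⟨w, hw⟩ := hS U hU
  have hwv : (w : ℝ) = v := by rw [← hv, hw.variance_eq, variance_id_gaussianReal]
  rwa [← NNReal.coe_injective hwv]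

lemma indepFun_of_covariance_eq_zero (hS : IsCenteredGaussianSpace P S) (hU : U ∈ S) (hV : V ∈ S)
    (h : cov[U, V; P] = 0) : IndepFun U V P := by
  have hgauss : HasGaussianLaw (fun ω ↦ (U ω, V ω)) P := by
    refine ⟨isGaussian_of_map_eq_gaussianReal fun l ↦ ⟨0, ?_⟩⟩
    obtain ⟨v, hv⟩ := hS (l (1, 0) • U + l (0, 1) • V)
      (S.add_mem (S.smul_mem _ hU) (S.smul_mem _ hV))
    refine ⟨v, ?_⟩
    rw [AEMeasurable.map_map_of_aemeasurable l.continuous.aemeasurable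
      ((hS.memLp_two hU).aemeasurable.prodMk (hS.memLp_two hV).aemeasurable), ← hv.map_eq]
    congr 1
    ext ω
    calc l (U ω, V ω) = l (U ω • (1, 0) + V ω • (0, 1)) := by simp
      _ = l (1, 0) * U ω + l (0, 1) * V ω := by
        rw [map_add, map_smul, map_smul, smul_eq_mul, smul_eq_mul, mul_comm, mul_comm (V ω)]
  exact hgauss.indepFun_of_covariance_eq_zero h

variable [IsProbabilityMeasure P]

lemma covariance_eq_integral (hS : IsCenteredGaussianSpace P S) (hU : U ∈ S) (hV : V ∈ S) :
    cov[U, V; P] = ∫ ω, U ω * V ω ∂P := by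
  rw [covariance_eq_sub (hS.memLp_two hU) (hS.memLp_two hV), hS.integral_eq_zero hU, zero_mul,
    sub_zero]
  rfl

/-- Gaussian regression: the residual is uncorrelated with `U`, hence independent of it. -/
lemma exists_indepFun_sub_sub_mul (hS : IsCenteredGaussianSpace P S) (hU : U ∈ S) (hV : V ∈ S)
    {v L : ℝ} (hv : 0 < v) (hUv : Var[U; P] = v) (hVv : Var[V; P] = v)
    (hle : cov[U, V; P] ≤ v) (hL : v - cov[U, V; P] ≤ L) :
    ∃ (a : ℝ) (w : ℝ≥0), 0 ≤ a ∧ a * v ≤ L ∧ w ≤ 2 * L ∧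
      HasLaw (fun ω ↦ U ω - V ω - a * U ω) (gaussianReal 0 w) P ∧
      IndepFun (fun ω ↦ U ω - V ω - a * U ω) U P := by
  set q := cov[U, V; P] with hq
  set a := (v - q) / v
  have hav : a * v = v - q := div_mul_cancel₀ _ hv.ne'
  have ha0 : 0 ≤ a := div_nonneg (sub_nonneg.2 hle) hv.le
  have hU2 := hS.memLp_two hU
  have hV2 := hS.memLp_two hV
  have hW : (fun ω ↦ U ω - V ω - a * U ω) = (1 - a) • U - V := by
    ext ω
    simp only [Pi.sub_apply, Pi.smul_apply, smul_eq_mul]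
    ring
  have hWS : (1 - a) • U - V ∈ S := S.sub_mem (S.smul_mem _ hU) hV
  have hWU : cov[(1 - a) • U - V, U; P] = 0 := by
    rw [covariance_sub_left (hU2.const_smul _) hV2 hU2, covariance_smul_left,
      covariance_self hU2.aemeasurable, hUv, covariance_comm, ← hq]
    linarith
  have hWW : Var[(1 - a) • U - V; P] = v - (1 - a) * q := by
    rw [← covariance_self (hS.memLp_two hWS).aemeasurable,
      covariance_sub_right (hS.memLp_two hWS) (hU2.const_smul _) hV2, covariance_smul_right, hWU,
      covariance_sub_left (hU2.const_smul _) hV2 hV2, covariance_smul_left,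
      covariance_self hV2.aemeasurable, hVv, ← hq]
    ring
  obtain ⟨w, hw⟩ := hS _ hWS
  have hwv : (w : ℝ) = v - (1 - a) * q := by
    rw [← hWW, hw.variance_eq, variance_id_gaussianReal]
  refine ⟨a, w, ha0, hav ▸ hL, ?_, hW ▸ hw, hW ▸ hS.indepFun_of_covariance_eq_zero hWS hU hWU⟩
  nlinarith [mul_nonneg ha0 (sub_nonneg.2 hle)]

end IsCenteredGaussianSpace

end GaussianSpace

section ScaleCovariance

variable {E : Type*} [NormedAddCommGroup E] [NormedSpace ℝ E] {k : E → ℝ} {t : ℝ}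

/-- The covariance function `K_t` of the star-scale invariant field with seed `k`. -/
def scaleCovariance (k : E → ℝ) (t : ℝ) (z : E) : ℝ :=
  ∫ u in Set.Icc 1 (Real.exp t), k (u • z) / u

lemma integrableOn_comp_smul_div (hk : Continuous k) (t : ℝ) (z : E) :
    IntegrableOn (fun u : ℝ ↦ k (u • z) / u) (Set.Icc 1 (Real.exp t)) := by
  refine ContinuousOn.integrableOn_compact isCompact_Icc (.div (by fun_prop) (by fun_prop) ?_)
  exact fun u hu ↦ (zero_lt_one.trans_le hu.1).ne'

lemma scaleCovariance_zero_right (hk0 : k 0 = 1) (ht : 0 ≤ t) : scaleCovariance k t 0 = t := by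
  simp only [scaleCovariance, smul_zero, hk0]
  rw [integral_Icc_eq_integral_Ioc, ← intervalIntegral.integral_of_le (Real.one_le_exp ht),
    integral_one_div_of_pos one_pos (Real.exp_pos t)]
  simp

lemma scaleCovariance_le (hk : Continuous k) (hk0 : k 0 = 1) (hk1 : ∀ z, k z ≤ 1) (ht : 0 ≤ t)
    (z : E) : scaleCovariance k t z ≤ t := by
  refine le_of_le_of_eq ?_ (scaleCovariance_zero_right hk0 ht)
  refine setIntegral_mono_on (integrableOn_comp_smul_div hk t z) (integrableOn_comp_smul_div hk t 0)
    measurableSet_Icc fun u hu ↦ ?_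
  rw [smul_zero, hk0]
  exact div_le_div_of_nonneg_right (hk1 _) (zero_le_one.trans hu.1)

lemma sub_scaleCovariance_le {L : ℝ≥0} (hk : LipschitzWith L k) (hk0 : k 0 = 1) (ht : 0 ≤ t)
    {z : E} (hz : ‖z‖ ≤ Real.exp (-t)) : t - scaleCovariance k t z ≤ L := by
  have hint := integrableOn_comp_smul_div hk.continuous t
  have hpoint : ∀ u ∈ Set.Icc 1 (Real.exp t), k (u • 0) / u - k (u • z) / u ≤ L * ‖z‖ := by
    intro u hu
    have hu0 : 0 < u := zero_lt_one.trans_le hu.1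
    rw [← sub_div, div_le_iff₀ hu0]
    calc k (u • 0) - k (u • z) ≤ dist (k (u • 0)) (k (u • z)) := le_abs_self _
      _ ≤ L * dist (u • 0) (u • z) := hk.dist_le_mul _ _
      _ = L * ‖z‖ * u := by
        rw [smul_zero, dist_zero_left, norm_smul, Real.norm_of_nonneg hu0.le]; ring
  calc t - scaleCovariance k t z = scaleCovariance k t 0 - scaleCovariance k t z := by
        rw [scaleCovariance_zero_right hk0 ht]
    _ = ∫ u in Set.Icc 1 (Real.exp t), k (u • 0) / u - k (u • z) / u :=
        (integral_sub (hint 0) (hint z)).symm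
    _ ≤ ∫ _ in Set.Icc 1 (Real.exp t), L * ‖z‖ :=
        setIntegral_mono_on ((hint 0).sub (hint z)) (integrableOn_const (by simp))
          measurableSet_Icc hpoint
    _ = (Real.exp t - 1) * (L * ‖z‖) := by
        simp [Real.one_le_exp ht]
    _ ≤ Real.exp t * (L * Real.exp (-t)) := by gcongr; linarith
    _ = L := by rw [mul_left_comm, ← Real.exp_add, add_neg_cancel, Real.exp_zero, mul_one]

lemma scaleCovariance_eq_of_le {R : ℝ} (hR : ∀ z, R ≤ ‖z‖ → k z = 0) {s : ℝ} (hst : s ≤ t) {z : E}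
    (hz : R * Real.exp (-s) ≤ ‖z‖) : scaleCovariance k t z = scaleCovariance k s z := by
  refine setIntegral_eq_of_subset_of_forall_sdiff_eq_zero measurableSet_Icc
    (Set.Icc_subset_Icc_right (Real.exp_le_exp.2 hst)) fun u hu ↦ ?_
  have hu0 : 0 < u := zero_lt_one.trans_le hu.1.1
  have hsu : Real.exp s ≤ u := le_of_not_gt fun h ↦ hu.2 ⟨hu.1.1, h.le⟩
  rw [hR (u • z), zero_div]
  calc R = Real.exp s * (R * Real.exp (-s)) := by
        rw [mul_left_comm, ← Real.exp_add, add_neg_cancel, Real.exp_zero, mul_one]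
    _ ≤ Real.exp s * ‖z‖ := by gcongr
    _ ≤ u * ‖z‖ := by gcongr
    _ = ‖u • z‖ := by rw [norm_smul, Real.norm_of_nonneg hu0.le]

end ScaleCovariance

section FieldSpan

variable {T E Ω : Type*}

/-- The linear span of the values `X t x` of a random field, a space of random variables. -/
def fieldSpan (X : T → E → Ω → ℝ) : Submodule ℝ (Ω → ℝ) :=
  Submodule.span ℝ (Set.range (Function.uncurry X))

lemma mem_fieldSpan (X : T → E → Ω → ℝ) (t : T) (x : E) : X t x ∈ fieldSpan X :=
  Submodule.subset_span ⟨(t, x), rfl⟩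

end FieldSpan

section StarScale

variable {E Ω : Type*} [MeasurableSpace Ω] {P : Measure Ω}

lemma exists_continuous_modification [TopologicalSpace E] {Y : ℕ → E → Ω → ℝ}
    (hYm : ∀ n x, Measurable (Y n x)) (hYc : ∀ᵐ ω ∂P, ∀ n, Continuous (Y n · ω)) :
    ∃ Z : ℕ → E → Ω → ℝ, (∀ n x, Measurable (Z n x)) ∧ (∀ n ω, Continuous (Z n · ω)) ∧
      ∀ᵐ ω ∂P, ∀ n x, Z n x ω = Y n x ω := by
  set N := toMeasurable P {ω | ¬ ∀ n, Continuous (Y n · ω)} with hN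
  have hN0 : P N = 0 := by rw [hN, measure_toMeasurable]; exact hYc
  have hYN (ω : Ω) (hω : ω ∉ N) : ∀ n, Continuous (Y n · ω) :=
    not_not.1 fun h ↦ hω (subset_toMeasurable P _ h)
  refine ⟨fun n x ↦ Nᶜ.indicator (Y n x),
    fun n x ↦ (hYm n x).indicator (measurableSet_toMeasurable _ _).compl, fun n ω ↦ ?_, ?_⟩
  · by_cases hω : ω ∈ N
    · simpa [hω] using continuous_const
    · simpa [hω] using hYN ω hω n
  · filter_upwards [measure_eq_zero_iff_ae_notMem.1 hN0] with ω hω n x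
    exact Set.indicator_of_mem hω _

lemma IsGaussianWalk.congr {U V : ℕ → Ω → ℝ} (hU : IsGaussianWalk P U)
    (hV : ∀ n, Measurable (V n)) (hVU : ∀ᵐ ω ∂P, ∀ n, V n ω = U n ω) : IsGaussianWalk P V where
  measurable := hV
  zero := by filter_upwards [hVU, hU.zero] with ω h h0; rw [h, h0]
  hasLaw_increment n := (hU.hasLaw_increment n).congr <| by
    filter_upwards [hVU] with ω h; simp only [h]
  indepFun_increment n := (hU.indepFun_increment n).congr
    (by filter_upwards [hVU] with ω h; simp only [h])
    (by filter_upwards [hVU] with ω h; simp only [h])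

lemma IsBranchingField.congr [NormedAddCommGroup E] {Y Z : ℕ → E → Ω → ℝ} {R L : ℝ}
    (hY : IsBranchingField P Y R L) (hZ : ∀ n x, Measurable (Z n x))
    (hZY : ∀ᵐ ω ∂P, ∀ n x, Z n x ω = Y n x ω) : IsBranchingField P Z R L where
  walk x := (hY.walk x).congr (hZ · x) (hZY.mono fun _ h n ↦ h n x)
  indepFun_past n x y := (hY.indepFun_past n x y).congr
    (by filter_upwards [hZY] with ω h; simp only [h])
    (by filter_upwards [hZY] with ω h; simp only [h])
  indepFun_increment n x y hxy := (hY.indepFun_increment n x y hxy).congr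
    (by filter_upwards [hZY] with ω h; simp only [h])
    (by filter_upwards [hZY] with ω h; simp only [h])
  comparison n x y hn hxy := by
    obtain ⟨a, v, ha, han, hv, hlaw, hind⟩ := hY.comparison n x y hn hxy
    have hdiff : (fun ω ↦ Z n x ω - Z n y ω - a * Z n x ω)
        =ᵐ[P] fun ω ↦ Y n x ω - Y n y ω - a * Y n x ω := by
      filter_upwards [hZY] with ω h; simp only [h]
    exact ⟨a, v, ha, han, hv, hlaw.congr hdiff,
      hind.congr hdiff.symm (hZY.mono fun ω h ↦ (h n x).symm)⟩

variable [NormedAddCommGroup E] [NormedSpace ℝ E]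

/-- `X` is the star-scale invariant Gaussian field with seed covariance `k`: a Gaussian process on
time × space with covariances `K_t`, independent increments in time and continuous fields. -/
structure IsStarScaleField (P : Measure Ω) (k : E → ℝ) (X : ℝ → E → Ω → ℝ) : Prop where
  measurable : ∀ t x, Measurable (X t x)
  gaussian : ∀ (n : ℕ) (c : Fin n → ℝ) (t : Fin n → ℝ) (x : Fin n → E),
    ∃ v : ℝ≥0, P.map (fun ω ↦ ∑ i, c i * X (t i) (x i) ω) = gaussianReal 0 v
  integral_mul : ∀ t, 0 ≤ t → ∀ x y, ∫ ω, X t x ω * X t y ω ∂P = scaleCovariance k t (x - y)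
  continuous : ∀ᵐ ω ∂P, ∀ t, Continuous (X t · ω)
  indep : ∀ s t, 0 ≤ s → s < t →
    Indep (⨆ x, MeasurableSpace.comap (fun ω ↦ X t x ω - X s x ω) inferInstance)
      (⨆ u ∈ Set.Icc 0 s, ⨆ x, MeasurableSpace.comap (X u x) inferInstance) P

namespace IsStarScaleField

variable {k : E → ℝ} {X : ℝ → E → Ω → ℝ}

lemma isCenteredGaussianSpace (hX : IsStarScaleField P k X) :
    IsCenteredGaussianSpace P (fieldSpan X) := by
  intro U hU
  obtain ⟨n, c, g, rfl⟩ := Submodule.mem_span_set'.1 hU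
  choose p hp using fun i ↦ (g i).2
  have hsum : ∑ i, c i • (g i : Ω → ℝ) = fun ω ↦ ∑ i, c i * X (p i).1 (p i).2 ω := by
    ext ω
    simp [← hp, Function.uncurry]
  obtain ⟨v, hv⟩ := hX.gaussian n c (fun i ↦ (p i).1) (fun i ↦ (p i).2)
  exact ⟨v, hsum ▸ ⟨(Finset.measurable_sum _ fun i _ ↦
    (hX.measurable _ _).const_mul _).aemeasurable, hv⟩⟩

lemma memLp_two (hX : IsStarScaleField P k X) (t : ℝ) (x : E) : MemLp (X t x) 2 P :=
  hX.isCenteredGaussianSpace.memLp_two (mem_fieldSpan X t x)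

lemma indepFun_increment_stoppedPath (hX : IsStarScaleField P k X) (n : ℕ) (x y : E) :
    IndepFun (fun ω ↦ (X (n + 1 : ℕ) x ω - X n x ω, X (n + 1 : ℕ) y ω - X n y ω))
      (fun ω ↦ (stoppedPath n (fun j ↦ X j x ω), stoppedPath n (fun j ↦ X j y ω))) P := by
  have hn : (n : ℝ) < (n + 1 : ℕ) := Nat.cast_lt.2 n.lt_succ_self
  have hincr (z : E) : Measurable[⨆ x, MeasurableSpace.comap
      (fun ω ↦ X (n + 1 : ℕ) x ω - X n x ω) inferInstance]
      fun ω ↦ X (n + 1 : ℕ) z ω - X n z ω :=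
    measurable_iff_comap_le.2 (le_iSup_of_le z le_rfl)
  have hpast (z : E) : Measurable[⨆ u ∈ Set.Icc (0 : ℝ) n, ⨆ x,
      MeasurableSpace.comap (X u x) inferInstance] fun ω ↦ stoppedPath n (fun j ↦ X j z ω) := by
    refine @measurable_pi_lambda _ _ _ (_) _ _ fun j ↦ measurable_iff_comap_le.2 ?_
    exact le_iSup₂_of_le ((min j n : ℕ) : ℝ) ⟨Nat.cast_nonneg _, Nat.cast_le.2 (min_le_right _ _)⟩
      (le_iSup_of_le z le_rfl)
  rw [IndepFun_iff_Indep]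
  exact indep_of_indep_of_le_left (indep_of_indep_of_le_right (hX.indep n _ n.cast_nonneg hn)
    (@Measurable.prodMk _ _ _ _ _ (_) _ _ (hpast x) (hpast y)).comap_le)
    (@Measurable.prodMk _ _ _ _ _ (_) _ _ (hincr x) (hincr y)).comap_le

lemma covariance_sub_eq_zero (hX : IsStarScaleField P k X) {s t : ℝ} (hs : 0 ≤ s) (hst : s < t)
    (x y : E) : cov[X t x - X s x, X s y; P] = 0 := by
  have hind : IndepFun (X t x - X s x) (X s y) P := by
    rw [IndepFun_iff_Indep]
    exact indep_of_indep_of_le_left (indep_of_indep_of_le_right (hX.indep s t hs hst)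
      (le_iSup₂_of_le s ⟨hs, le_rfl⟩ (le_iSup_of_le y le_rfl))) (le_iSup_of_le x le_rfl)
  exact hind.covariance_eq_zero ((hX.memLp_two t x).sub (hX.memLp_two s x)) (hX.memLp_two s y)

variable [IsProbabilityMeasure P]

lemma covariance_eq (hX : IsStarScaleField P k X) {t : ℝ} (ht : 0 ≤ t) (x y : E) :
    cov[X t x, X t y; P] = scaleCovariance k t (x - y) := by
  rw [hX.isCenteredGaussianSpace.covariance_eq_integral (mem_fieldSpan X t x) (mem_fieldSpan X t y),
    hX.integral_mul t ht]

lemma variance_eq (hX : IsStarScaleField P k X) (hk0 : k 0 = 1) {t : ℝ} (ht : 0 ≤ t) (x : E) :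
    Var[X t x; P] = t := by
  rw [← covariance_self (hX.measurable t x).aemeasurable, hX.covariance_eq ht, sub_self,
    scaleCovariance_zero_right hk0 ht]

lemma covariance_sub_sub (hX : IsStarScaleField P k X) {s t : ℝ} (hs : 0 ≤ s) (hst : s < t)
    (x y : E) : cov[X t x - X s x, X t y - X s y; P]
      = scaleCovariance k t (x - y) - scaleCovariance k s (x - y) := by
  have hmem := hX.memLp_two
  have hts : cov[X s x, X t y - X s y; P] = 0 := by
    rw [covariance_comm, hX.covariance_sub_eq_zero hs hst]
  have hst' : cov[X t x, X s y; P] = scaleCovariance k s (x - y) := by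
    rw [← hX.covariance_eq hs, ← sub_eq_zero,
      ← covariance_sub_left (hmem t x) (hmem s x) (hmem s y), hX.covariance_sub_eq_zero hs hst]
  rw [covariance_sub_left (hmem t x) (hmem s x) ((hmem t y).sub (hmem s y)), hts, sub_zero,
    covariance_sub_right (hmem t x) (hmem t y) (hmem s y), hX.covariance_eq (hs.trans hst.le),
    hst']

lemma isGaussianWalk (hX : IsStarScaleField P k X) (hk0 : k 0 = 1) (x : E) :
    IsGaussianWalk P (fun n : ℕ ↦ X n x) where
  measurable n := hX.measurable n x
  zero := by
    have hlaw := hX.isCenteredGaussianSpace.hasLaw_of_variance_eq (v := 0)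
      (mem_fieldSpan X (0 : ℕ) x) (by simpa using hX.variance_eq hk0 le_rfl x)
    rw [gaussianReal_zero_var] at hlaw
    exact hlaw.ae_eq_of_dirac
  hasLaw_increment n := by
    have hn : (n : ℝ) < (n + 1 : ℕ) := Nat.cast_lt.2 n.lt_succ_self
    refine hX.isCenteredGaussianSpace.hasLaw_of_variance_eq
      (Submodule.sub_mem _ (mem_fieldSpan X _ x) (mem_fieldSpan X n x)) ?_
    rw [← covariance_self ((hX.measurable _ x).sub (hX.measurable _ x)).aemeasurable,
      hX.covariance_sub_sub n.cast_nonneg hn, sub_self, scaleCovariance_zero_right hk0,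
      scaleCovariance_zero_right hk0 n.cast_nonneg]
    · simp
    · exact (n + 1).cast_nonneg
  indepFun_increment n :=
    (hX.indepFun_increment_stoppedPath n x x).comp measurable_fst measurable_fst

lemma isBranchingField (hX : IsStarScaleField P k X) {L : ℝ≥0} (hkL : LipschitzWith L k)
    (hk0 : k 0 = 1) (hk1 : ∀ z, k z ≤ 1) {R : ℝ} (hR : ∀ z, R ≤ ‖z‖ → k z = 0) :
    IsBranchingField P (fun n : ℕ ↦ X n) R L where
  walk x := hX.isGaussianWalk hk0 x
  indepFun_past := hX.indepFun_increment_stoppedPath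
  indepFun_increment n x y hxy := by
    have hn : (n : ℝ) < (n + 1 : ℕ) := Nat.cast_lt.2 n.lt_succ_self
    refine hX.isCenteredGaussianSpace.indepFun_of_covariance_eq_zero
      (Submodule.sub_mem _ (mem_fieldSpan X _ x) (mem_fieldSpan X n x))
      (Submodule.sub_mem _ (mem_fieldSpan X _ y) (mem_fieldSpan X n y)) ?_
    refine (hX.covariance_sub_sub n.cast_nonneg hn x y).trans ?_
    rw [scaleCovariance_eq_of_le hR hn.le hxy, sub_self]
  comparison n x y hn hxy := by
    have hn0 : (0 : ℝ) < n := by exact_mod_cast hn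
    refine hX.isCenteredGaussianSpace.exists_indepFun_sub_sub_mul (mem_fieldSpan X n x)
      (mem_fieldSpan X n y) hn0 (hX.variance_eq hk0 hn0.le x) (hX.variance_eq hk0 hn0.le y) ?_ ?_
    · rw [hX.covariance_eq hn0.le]
      exact scaleCovariance_le hkL.continuous hk0 hk1 hn0.le _
    · rw [hX.covariance_eq hn0.le]
      exact sub_scaleCovariance_le hkL hk0 hn0.le hxy

end IsStarScaleField

theorem derivative_measure_infinite_first_moment_general [IsProbabilityMeasure P]
    [FiniteDimensional ℝ E] [Nontrivial E] [MeasurableSpace E] [BorelSpace E] {μ : Measure E}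
    [μ.IsAddHaarMeasure] {k : E → ℝ} {X : ℝ → E → Ω → ℝ} (hX : IsStarScaleField P k X)
    {L : ℝ≥0} (hkL : LipschitzWith L k) (hk0 : k 0 = 1) (hk1 : ∀ z, k z ≤ 1)
    (hksupp : HasCompactSupport k) {A : Set E} (hA : MeasurableSet A)
    (hAb : Bornology.IsBounded A) (hA0 : μ A ≠ 0) {M' : Ω → ℝ}
    (hM : ∀ᵐ ω ∂P, Tendsto (fun n : ℕ ↦
      ∫ x in A, (√(2 * Module.finrank ℝ E) * n - X n x ω) *
        Real.exp (√(2 * Module.finrank ℝ E) * X n x ω - Module.finrank ℝ E * n) ∂μ)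
      atTop (𝓝 (M' ω))) :
    ∫⁻ ω, ENNReal.ofReal (M' ω) ∂P = ∞ := by
  obtain ⟨R, -, hR⟩ := hksupp.exists_pos_le_norm
  obtain ⟨Z, hZm, hZc, hZX⟩ := exists_continuous_modification (Y := fun n : ℕ ↦ X n)
    (fun n ↦ hX.measurable n) (hX.continuous.mono fun ω h n ↦ h n)
  set c := √(2 * Module.finrank ℝ E)
  have hcd : c ^ 2 = 2 * Module.finrank ℝ E := Real.sq_sqrt (by positivity)
  have hc : 7 / 5 ≤ c := by
    have hd : (1 : ℝ) ≤ Module.finrank ℝ E := by exact_mod_cast Module.finrank_pos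
    exact Real.le_sqrt_of_sq_le (by linarith)
  refine ((hX.isBranchingField hkL hk0 hk1 hR).congr hZm hZX).lintegral_ofReal_eq_top (μ := μ)
    (fun n ↦ measurable_uncurry_of_continuous_of_measurable (hZc n) (hZm n))
    hZc hc hcd hA hAb hA0 ?_
  filter_upwards [hM, hZX] with ω h hω
  simpa only [derivativeMass, hω, hcd, mul_div_cancel_left₀ _ (two_ne_zero' ℝ)] using h

end StarScale

theorem derivative_measure_infinite_first_moment
    {d : ℕ} (hd : 1 ≤ d)
    {Ω : Type*} [m0 : MeasurableSpace Ω] (P : Measure Ω) [IsProbabilityMeasure P]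
    (k : EuclideanSpace ℝ (Fin d) → ℝ)
    (hk1 : ContDiff ℝ 1 k) (hk0 : k 0 = 1) (hkb : ∀ z, |k z| ≤ 1)
    (hksupp : HasCompactSupport k)
    (hkpd : ∀ (n : ℕ) (z : Fin n → EuclideanSpace ℝ (Fin d)) (c : Fin n → ℝ),
      0 ≤ ∑ i, ∑ j, c i * c j * k (z i - z j))
    (X : ℝ → EuclideanSpace ℝ (Fin d) → Ω → ℝ)
    (hXmeas : ∀ t x, Measurable (X t x))
    (hXgauss : ∀ (n : ℕ) (c : Fin n → ℝ) (t : Fin n → ℝ)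
        (x : Fin n → EuclideanSpace ℝ (Fin d)),
      ∃ v : NNReal,
        Measure.map (fun ω => ∑ i, c i * X (t i) (x i) ω) P = gaussianReal 0 v)
    (hXcent : ∀ t x, ∫ ω, X t x ω ∂P = 0)
    (hXcov : ∀ t, 0 ≤ t → ∀ x y : EuclideanSpace ℝ (Fin d),
      ∫ ω, X t x ω * X t y ω ∂P = ∫ u in Set.Icc (1:ℝ) (Real.exp t), k (u • (x - y)) / u)
    (hXcont : ∀ᵐ ω ∂P, Continuous fun p : ℝ × EuclideanSpace ℝ (Fin d) => X p.1 p.2 ω)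
    (hXindep : ∀ s t : ℝ, 0 ≤ s → s < t →
      Indep (⨆ x : EuclideanSpace ℝ (Fin d),
          MeasurableSpace.comap (fun ω => X t x ω - X s x ω) inferInstance)
        (⨆ u ∈ Set.Icc (0:ℝ) s, ⨆ x : EuclideanSpace ℝ (Fin d),
          MeasurableSpace.comap (X u x) inferInstance) P)
    :
    ∀ A : Set (EuclideanSpace ℝ (Fin d)), A.Nonempty → IsOpen A → Bornology.IsBounded A →
    ∀ M' : Ω → ℝ,
      (∀ᵐ ω ∂P, Tendsto (fun t : ℝ =>
          ∫ x in A, (Real.sqrt (2 * (d:ℝ)) * t - X t x ω) *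
            Real.exp (Real.sqrt (2 * (d:ℝ)) * X t x ω - (d:ℝ) * t))
        atTop (nhds (M' ω))) →
      ∫⁻ ω, ENNReal.ofReal (M' ω) ∂P = ⊤ := by
  intro A hA hAo hAb M' hM
  have : Nontrivial (EuclideanSpace ℝ (Fin d)) :=
    Module.nontrivial_of_finrank_pos (R := ℝ) (by rw [finrank_euclideanSpace_fin]; exact hd)
  obtain ⟨L, hkL⟩ := hk1.lipschitzWith_of_hasCompactSupport hksupp one_ne_zero
  have hX : IsStarScaleField P k X :=
    ⟨hXmeas, hXgauss, hXcov, hXcont.mono fun ω h t ↦ h.comp (.prodMk_right t), hXindep⟩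
  refine derivative_measure_infinite_first_moment_general hX hkL hk0 (fun z ↦ le_of_abs_le (hkb z))
    hksupp hAo.measurableSet hAb (hAo.measure_pos volume hA).ne' (hM.mono fun ω h ↦ ?_)
  simpa only [finrank_euclideanSpace_fin, Function.comp_def] using
    h.comp tendsto_natCast_atTop_atTop
end
end

section
/- At the critical parameter γ = √(2d), the standard Gaussian multiplicative chaos vanishes: for every bounded Borel set A ⊂ ℝ^d, almost surely M_t^{√(2d)}(A) = ∫_A e^{√(2d)·X_t(x) − d·t} dx → 0 as t → ∞. -/
/-!
Bias the environment by the chaos density at a point `x`. Under this rooted measure the field at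
`x` acquires the drift `γ s`, and `W s = X s x - γ s` is a Brownian motion, so that `W` exceeds any
given level `a` at one of finitely many lacunary scales with probability close to one. On the other
hand, the mass of the chaos is a nonnegative martingale with bounded mean, so outside an event of
small probability it stays below a constant `K` at all of these scales. When it does, the mass of
the ball of radius `exp (-s)` around `x`, which by Cauchy–Schwarz and the logarithmic correlations
is at least of order `exp (γ W s) * exp (γ ^ 2 / 2 * s) * μ (ball x (exp (-s)))`, is at most `K`;
since `γ ^ 2 / 2` is at least the dimension, this prevents `W s` from being large. Hence the event
`H` that the mass stays below `K` has small rooted probability at every point, i.e. the mass has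
small expectation on `H`, while `H` is likely under the original law. The maximal inequality
started at the last of the scales then shows that the mass tends to zero.
-/

open MeasureTheory ProbabilityTheory Filter

noncomputable section

open scoped ENNReal NNReal Topology

/-! ### Nonnegative supermartingales -/

section Supermartingale

variable {ι Ω : Type*} {m0 : MeasurableSpace Ω} {P : Measure Ω}

/-- A supermartingale with values in `[0, ∞]`, with the supermartingale inequality stated through
integrals over past events. This avoids Bochner integrability and conditional expectations, which
Mathlib's `Supermartingale` is built on. -/
structure ENNRealSupermartingale [Preorder ι] (M : ι → Ω → ℝ≥0∞) (ℱ : Filtration ι m0)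
    (P : Measure Ω) : Prop where
  measurable : ∀ t, Measurable[ℱ t] (M t)
  setLIntegral_le : ∀ ⦃s t : ι⦄, s ≤ t → ∀ ⦃H : Set Ω⦄, MeasurableSet[ℱ s] H →
    ∫⁻ ω in H, M t ω ∂P ≤ ∫⁻ ω in H, M s ω ∂P

namespace ENNRealSupermartingale

variable [LinearOrder ι] {M : ι → Ω → ℝ≥0∞} {ℱ : Filtration ι m0}

theorem mul_measure_exists_mem_finset_le (hM : ENNRealSupermartingale M ℱ P) (l : ℝ≥0∞)
    (T : Finset ι) {s : ι} (hT : ∀ t ∈ T, s ≤ t) {H : Set Ω} (hH : MeasurableSet[ℱ s] H) :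
    l * P (H ∩ {ω | ∃ t ∈ T, l ≤ M t ω}) ≤ ∫⁻ ω in H, M s ω ∂P := by
  induction T using Finset.induction_on_min generalizing s H with
  | empty => simp
  | insert a T hlt ih =>
    have hsa : s ≤ a := hT a (Finset.mem_insert_self a T)
    have hHa : MeasurableSet[ℱ a] H := ℱ.mono hsa _ hH
    set E : Set Ω := {ω | l ≤ M a ω}
    have hE : MeasurableSet[ℱ a] E := measurableSet_le measurable_const (hM.measurable a)
    have hsplit : H ∩ {ω | ∃ t ∈ insert a T, l ≤ M t ω}
        ⊆ (H ∩ E) ∪ ((H \ E) ∩ {ω | ∃ t ∈ T, l ≤ M t ω}) := by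
      rintro ω ⟨hω, t, ht, hle⟩
      by_cases hωE : ω ∈ E
      · exact .inl ⟨hω, hωE⟩
      · obtain rfl | ht := Finset.mem_insert.mp ht
        · exact absurd hle hωE
        · exact .inr ⟨⟨hω, hωE⟩, t, ht, hle⟩
    have hfirst : l * P (H ∩ E) ≤ ∫⁻ ω in H ∩ E, M a ω ∂P := by
      rw [← setLIntegral_const]
      exact setLIntegral_mono ((hM.measurable a).mono (ℱ.le a) le_rfl) fun ω hω => hω.2
    have hrest := ih (fun t ht => (hlt t ht).le) (hHa.diff hE)
    calc l * P (H ∩ {ω | ∃ t ∈ insert a T, l ≤ M t ω})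
        ≤ l * (P (H ∩ E) + P ((H \ E) ∩ {ω | ∃ t ∈ T, l ≤ M t ω})) := by
          gcongr
          exact (measure_mono hsplit).trans (measure_union_le _ _)
      _ ≤ ∫⁻ ω in H ∩ E, M a ω ∂P + ∫⁻ ω in H \ E, M a ω ∂P := by
          rw [mul_add]
          exact add_le_add hfirst hrest
      _ = ∫⁻ ω in H, M a ω ∂P := lintegral_inter_add_sdiff _ _ (ℱ.le a _ hE)
      _ ≤ ∫⁻ ω in H, M s ω ∂P := hM.setLIntegral_le hsa hH

theorem mul_measure_exists_mem_countable_le (hM : ENNRealSupermartingale M ℱ P) (l : ℝ≥0∞)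
    {D : Set ι} (hD : D.Countable) {s : ι} (hs : ∀ t ∈ D, s ≤ t) {H : Set Ω}
    (hH : MeasurableSet[ℱ s] H) :
    l * P (H ∩ {ω | ∃ t ∈ D, l ≤ M t ω}) ≤ ∫⁻ ω in H, M s ω ∂P := by
  obtain rfl | hne := D.eq_empty_or_nonempty
  · simp
  obtain ⟨f, rfl⟩ := hD.exists_eq_range hne
  set B : ℕ → Set Ω := fun n => H ∩ {ω | ∃ t ∈ (Finset.range n).image f, l ≤ M t ω}
  have hB : Monotone B := by
    rintro m n hmn ω ⟨hω, t, ht, hle⟩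
    exact ⟨hω, t, Finset.image_subset_image (Finset.range_mono hmn) ht, hle⟩
  have hUnion : H ∩ {ω | ∃ t ∈ Set.range f, l ≤ M t ω} = ⋃ n, B n := by
    ext ω
    simp only [Set.mem_inter_iff, Set.mem_ofPred_eq, Set.exists_range_iff, B, Set.mem_iUnion,
      Finset.mem_image, Finset.mem_range, exists_exists_and_eq_and]
    exact ⟨fun ⟨hω, n, hn⟩ => ⟨n + 1, hω, n, n.lt_succ_self, hn⟩,
      fun ⟨_, hω, n, _, hn⟩ => ⟨hω, n, hn⟩⟩
  rw [hUnion, hB.measure_iUnion, ENNReal.mul_iSup]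
  refine iSup_le fun n => hM.mul_measure_exists_mem_finset_le l _ (fun t ht => ?_) hH
  obtain ⟨i, -, rfl⟩ := Finset.mem_image.mp ht
  exact hs _ ⟨i, rfl⟩

variable [TopologicalSpace ι] [SecondCountableTopology ι]

theorem mul_measure_exists_ge_lt_le (hM : ENNRealSupermartingale M ℱ P)
    (hlsc : ∀ᵐ ω ∂P, LowerSemicontinuous fun t => M t ω) (l : ℝ≥0∞) {s : ι} {H : Set Ω}
    (hH : MeasurableSet[ℱ s] H) :
    l * P (H ∩ {ω | ∃ t, s ≤ t ∧ l < M t ω}) ≤ ∫⁻ ω in H, M s ω ∂P := by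
  obtain ⟨D, hDcount, hDdense⟩ := TopologicalSpace.exists_countable_dense (Set.Ici s)
  refine le_trans ?_ (hM.mul_measure_exists_mem_countable_le l (hDcount.image Subtype.val)
    (s := s) (by rintro _ ⟨t, -, rfl⟩; exact t.2) hH)
  refine mul_le_mul_right (measure_mono_ae ?_) l
  filter_upwards [hlsc] with ω hω
  rintro ⟨hωH, t, hst, hlt⟩
  have hopen : IsOpen {u : Set.Ici s | l < M u ω} :=
    (lowerSemicontinuous_iff_isOpen_preimage.mp hω l).preimage continuous_subtype_val
  obtain ⟨u, hu, huD⟩ := hDdense.inter_open_nonempty _ hopen ⟨⟨t, hst⟩, hlt⟩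
  exact ⟨hωH, u, ⟨u, huD, rfl⟩, hu.le⟩

theorem ae_tendsto_zero [Nonempty ι] (hM : ENNRealSupermartingale M ℱ P)
    (hlsc : ∀ᵐ ω ∂P, LowerSemicontinuous fun t => M t ω)
    (hsmall : ∀ ε : ℝ≥0, ε ≠ 0 → ∃ s, ∃ H : Set Ω, MeasurableSet[ℱ s] H ∧ P Hᶜ ≤ ε ∧
      ∫⁻ ω in H, M s ω ∂P ≤ ε) :
    ∀ᵐ ω ∂P, Tendsto (fun t => M t ω) atTop (𝓝 0) := by
  have hbad : ∀ l : ℝ≥0∞, l ≠ 0 → ∀ᵐ ω ∂P, ∀ᶠ t in atTop, M t ω ≤ l := by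
    intro l hl
    have hlim : Tendsto (fun ε : ℝ≥0 => (ε : ℝ≥0∞) + ε / l) (𝓝[≠] 0) (𝓝 0) := by
      have hcoe : Tendsto (fun ε : ℝ≥0 => (ε : ℝ≥0∞)) (𝓝[≠] 0) (𝓝 0) :=
        (ENNReal.tendsto_coe.mpr tendsto_id).mono_left nhdsWithin_le_nhds
      simpa using hcoe.add (ENNReal.Tendsto.div_const hcoe (.inr hl))
    refine ae_iff.mpr (le_antisymm (ge_of_tendsto hlim ?_) zero_le)
    filter_upwards [self_mem_nhdsWithin] with ε hε
    obtain ⟨s, H, hH, hPH, hMH⟩ := hsmall ε hε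
    have hcover : {ω | ¬∀ᶠ t in atTop, M t ω ≤ l} ⊆ Hᶜ ∪ H ∩ {ω | ∃ t, s ≤ t ∧ l < M t ω} := by
      intro ω hω
      simp only [eventually_atTop] at hω
      push Not at hω
      by_cases hωH : ω ∈ H
      · exact .inr ⟨hωH, hω s⟩
      · exact .inl hωH
    refine (measure_mono hcover).trans ((measure_union_le _ _).trans (add_le_add hPH ?_))
    rw [ENNReal.le_div_iff_mul_le (.inl hl) (.inr ENNReal.coe_ne_top), mul_comm]
    exact (hM.mul_measure_exists_ge_lt_le hlsc l hH).trans hMH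
  have hall : ∀ᵐ ω ∂P, ∀ n : ℕ, ∀ᶠ t in atTop, M t ω ≤ (n : ℝ≥0∞)⁻¹ :=
    ae_all_iff.mpr fun n => hbad _ (by simp)
  filter_upwards [hall] with ω hω
  rw [ENNReal.tendsto_nhds_zero]
  intro ε hε
  obtain ⟨n, hn⟩ := ENNReal.exists_inv_nat_lt hε.ne'
  filter_upwards [hω n] with t ht using ht.trans hn.le

end ENNRealSupermartingale

end Supermartingale

/-! ### Second moments and measurability -/

section Moments

variable {Ω : Type*} {m0 : MeasurableSpace Ω} {P : Measure Ω}

theorem measure_forall_le_sub_le_of_covariance_le [IsProbabilityMeasure P] {ι : Type*}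
    {s : Finset ι} (hs : s.Nonempty) {V : ι → Ω → ℝ} {m c δ η : ℝ} (hη : 0 < η) (hδ : 0 ≤ δ)
    (hV : ∀ i ∈ s, MemLp (V i) 2 P) (hmean : ∀ i ∈ s, ∫ ω, V i ω ∂P = m)
    (hvar : ∀ i ∈ s, Var[V i; P] ≤ c)
    (hcov : ∀ i ∈ s, ∀ j ∈ s, i ≠ j → cov[V i, V j; P] ≤ δ) :
    P {ω | ∀ i ∈ s, V i ω ≤ m - η} ≤ ENNReal.ofReal ((c / s.card + δ) / η ^ 2) := by
  classical
  set S : Ω → ℝ := fun ω => ∑ i ∈ s, V i ω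
  have hn : (0 : ℝ) < s.card := by exact_mod_cast hs.card_pos
  have hSmean : ∫ ω, S ω ∂P = s.card * m := by
    rw [integral_finsetSum _ fun i hi => (hV i hi).integrable one_le_two,
      Finset.sum_congr rfl hmean, Finset.sum_const, nsmul_eq_mul]
  have hSvar : Var[S; P] ≤ s.card * c + s.card ^ 2 * δ := calc
    Var[S; P] = ∑ i ∈ s, ∑ j ∈ s, cov[V i, V j; P] := variance_fun_sum' hV
    _ ≤ ∑ i ∈ s, ∑ j ∈ s, ((if i = j then c else 0) + δ) := by
        refine Finset.sum_le_sum fun i hi => Finset.sum_le_sum fun j hj => ?_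
        split_ifs with hij
        · subst hij
          rw [covariance_self (hV i hi).aemeasurable]
          linarith [hvar i hi]
        · simpa using hcov i hi j hj hij
    _ = s.card * c + s.card ^ 2 * δ := by
        simp only [Finset.sum_add_distrib, Finset.sum_ite_eq, Finset.sum_ite_mem, Finset.inter_self,
          Finset.sum_const, nsmul_eq_mul]
        ring
  have hdev : {ω | ∀ i ∈ s, V i ω ≤ m - η} ⊆ {ω | s.card * η ≤ |S ω - ∫ ω, S ω ∂P|} := by
    intro ω hω
    have hle : S ω ≤ s.card * (m - η) := by simpa using Finset.sum_le_card_nsmul s _ _ hω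
    rw [Set.mem_ofPred_eq, hSmean]
    exact le_abs.mpr (.inr (by linarith))
  calc P {ω | ∀ i ∈ s, V i ω ≤ m - η}
      ≤ ENNReal.ofReal (Var[S; P] / (s.card * η) ^ 2) :=
        (measure_mono hdev).trans
          (meas_ge_le_variance_div_sq (memLp_finsetSum s hV) (mul_pos hn hη))
    _ ≤ ENNReal.ofReal ((s.card * c + s.card ^ 2 * δ) / (s.card * η) ^ 2) := by gcongr
    _ = ENNReal.ofReal ((c / s.card + δ) / η ^ 2) := by
        congr 1
        field_simp

theorem lintegral_ofReal_exp_of_hasGaussianLaw {Y : Ω → ℝ} (hY : HasGaussianLaw Y P) :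
    ∫⁻ ω, ENNReal.ofReal (Real.exp (Y ω)) ∂P
      = ENNReal.ofReal (Real.exp (∫ ω, Y ω ∂P + Var[Y; P] / 2)) := by
  have hint : Integrable (fun ω => Real.exp (Y ω)) P := by
    have hexp := integrable_exp_mul_gaussianReal (μ := ∫ ω, Y ω ∂P) (v := Var[Y; P].toNNReal) 1
    rw [← hY.map_eq_gaussianReal] at hexp
    simpa only [one_mul, Function.comp_def] using hexp.comp_aemeasurable hY.aemeasurable
  rw [← ofReal_integral_eq_lintegral_ofReal hint (ae_of_all _ fun ω => (Real.exp_pos _).le)]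
  simpa [mgf, variance_nonneg] using
    congrArg ENNReal.ofReal (mgf_gaussianReal hY.map_eq_gaussianReal 1)

end Moments

theorem sq_measure_univ_le_lintegral_mul_lintegral_inv {α : Type*} [MeasurableSpace α]
    {μ : Measure α} {f : α → ℝ≥0∞} (hf : AEMeasurable f μ) (hf0 : ∀ᵐ x ∂μ, f x ≠ 0)
    (hftop : ∀ᵐ x ∂μ, f x ≠ ∞) :
    μ Set.univ ^ 2 ≤ (∫⁻ x, f x ∂μ) * ∫⁻ x, (f x)⁻¹ ∂μ := by
  have hone : ∀ᵐ x ∂μ, 1 = ((fun x => f x ^ (2⁻¹ : ℝ)) * fun x => f⁻¹ x ^ (2⁻¹ : ℝ)) x := by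
    filter_upwards [hf0, hftop] with x hx0 hxtop
    rw [Pi.mul_apply, Pi.inv_apply, ← ENNReal.mul_rpow_of_nonneg _ _ (by norm_num),
      ENNReal.mul_inv_cancel hx0 hxtop, ENNReal.one_rpow]
  have holder := ENNReal.lintegral_mul_le_Lp_mul_Lq μ Real.HolderConjugate.two_two
    (hf.pow_const (2⁻¹ : ℝ)) (hf.inv.pow_const (2⁻¹ : ℝ))
  rw [← lintegral_congr_ae hone, lintegral_one] at holder
  simp only [← ENNReal.rpow_mul, inv_mul_cancel₀ (two_ne_zero' ℝ), ENNReal.rpow_one,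
    Pi.inv_apply] at holder
  calc μ Set.univ ^ 2
      ≤ ((∫⁻ x, f x ∂μ) ^ (1 / 2 : ℝ) * (∫⁻ x, (f x)⁻¹ ∂μ) ^ (1 / 2 : ℝ)) ^ 2 := by gcongr
    _ = (∫⁻ x, f x ∂μ) * ∫⁻ x, (f x)⁻¹ ∂μ := by
        rw [mul_pow, ← ENNReal.rpow_mul_natCast, ← ENNReal.rpow_mul_natCast]
        norm_num

theorem lowerSemicontinuous_lintegral {ι α : Type*} [TopologicalSpace ι]
    [FirstCountableTopology ι] [MeasurableSpace α] {μ : Measure α} {f : ι → α → ℝ≥0∞}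
    (hf : ∀ t, Measurable (f t)) (hlsc : ∀ x, LowerSemicontinuous fun t => f t x) :
    LowerSemicontinuous fun t => ∫⁻ x, f t x ∂μ := by
  refine lowerSemicontinuous_iff_le_liminf.mpr fun t => ?_
  calc ∫⁻ x, f t x ∂μ
      ≤ ∫⁻ x, liminf (fun u => f u x) (𝓝 t) ∂μ :=
        lintegral_mono fun x => lowerSemicontinuousAt_iff_le_liminf.mp (hlsc x t)
    _ ≤ liminf (fun u => ∫⁻ x, f u x ∂μ) (𝓝 t) := lintegral_liminf_le hf

section MeasurableModification

variable {E Ω : Type*} [PseudoEMetricSpace E] [SecondCountableTopology E] [MeasurableSpace E]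
  [BorelSpace E] [Nonempty E]

/-- The pointwise limit superior of a random field `u` along simple-function approximations of its
argument: a jointly measurable version of a field with continuous paths. -/
def measurableModification (u : E → Ω → ℝ) (x : E) (ω : Ω) : ℝ :=
  limsup (fun n => u (SimpleFunc.approxOn id measurable_id Set.univ (Classical.arbitrary E)
    trivial n x) ω) atTop

theorem measurable_uncurry_measurableModification [MeasurableSpace Ω] {u : E → Ω → ℝ}
    (hu : ∀ x, Measurable (u x)) : Measurable (Function.uncurry (measurableModification u)) :=
  .limsup fun n => SimpleFunc.measurable_bind
    ((SimpleFunc.approxOn id measurable_id Set.univ _ trivial n).comp Prod.fst measurable_fst)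
    (fun x p => u x p.2) fun x => (hu x).comp measurable_snd

theorem measurableModification_eq {u : E → Ω → ℝ} {ω : Ω} (hu : Continuous fun x => u x ω)
    (x : E) : measurableModification u x ω = u x ω := by
  have happrox : Tendsto (fun n => SimpleFunc.approxOn id measurable_id Set.univ
      (Classical.arbitrary E) trivial n x) atTop (𝓝 x) :=
    SimpleFunc.tendsto_approxOn measurable_id (Set.mem_univ _) (by simp)
  exact ((hu.tendsto x).comp happrox).limsup_eq

end MeasurableModification

/-! ### Log-correlated fields and their chaos -/

section Chaos

variable {E Ω : Type*}

/-- The density at `x` of the Gaussian multiplicative chaos at scale `t`, for a field with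
variance `t`. -/
def chaosDensity (γ : ℝ) (X : ℝ≥0 → E → Ω → ℝ) (t : ℝ≥0) (x : E) (ω : Ω) : ℝ≥0∞ :=
  ENNReal.ofReal (Real.exp (γ * X t x ω - γ ^ 2 / 2 * t))

theorem chaosDensity_ne_zero (γ : ℝ) (X : ℝ≥0 → E → Ω → ℝ) (t : ℝ≥0) (x : E) (ω : Ω) :
    chaosDensity γ X t x ω ≠ 0 :=
  (ENNReal.ofReal_pos.mpr (Real.exp_pos _)).ne'

theorem chaosDensity_ne_top (γ : ℝ) (X : ℝ≥0 → E → Ω → ℝ) (t : ℝ≥0) (x : E) (ω : Ω) :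
    chaosDensity γ X t x ω ≠ ∞ :=
  ENNReal.ofReal_ne_top

/-- The mass that the Gaussian multiplicative chaos at scale `t` gives to `A`. -/
def chaosMass [MeasurableSpace E] (γ : ℝ) (X : ℝ≥0 → E → Ω → ℝ) (μ : Measure E) (A : Set E)
    (t : ℝ≥0) (ω : Ω) : ℝ≥0∞ :=
  ∫⁻ x in A, chaosDensity γ X t x ω ∂μ

/-- The law of the environment biased by the chaos density at `x` and scale `t`, i.e. seen from a
point sampled from the chaos (the Peyrière measure conditioned on the point `x`). -/
def rootedMeasure [MeasurableSpace Ω] (γ : ℝ) (X : ℝ≥0 → E → Ω → ℝ) (P : Measure Ω) (t : ℝ≥0)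
    (x : E) : Measure Ω :=
  P.withDensity (chaosDensity γ X t x)

/-- The field with the drift it has under `rootedMeasure` removed: by the Cameron–Martin formula
this is a Brownian motion in `s` under the rooted measure at `x`. -/
def driftlessField (γ : ℝ) (X : ℝ≥0 → E → Ω → ℝ) (s : ℝ≥0) (x : E) (ω : Ω) : ℝ :=
  X s x ω - γ * s

/-- The exponential `exp (W (τ ^ 2) / τ)` of the driftless field `W`, normalised so that its law
under the rooted measure does not depend on `τ`. -/
def driftlessExp (γ : ℝ) (X : ℝ≥0 → E → Ω → ℝ) (τ : ℝ≥0) (x : E) (ω : Ω) : ℝ :=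
  Real.exp ((τ : ℝ)⁻¹ * driftlessField γ X (τ ^ 2) x ω)

theorem mul_ofReal_exp_le_chaosDensity_mul {γ : ℝ} (hγ : 0 ≤ γ) {X : ℝ≥0 → E → Ω → ℝ} {s : ℝ≥0}
    {x : E} {ω : Ω} {a : ℝ} (ha : a ≤ driftlessField γ X s x ω) {v b : ℝ≥0∞}
    (hb : v * ENNReal.ofReal (Real.exp (-(γ ^ 2 / 2 * s))) ≤ b) :
    v * ENNReal.ofReal (Real.exp (γ * a)) ≤ chaosDensity γ X s x ω * b := calc
  v * ENNReal.ofReal (Real.exp (γ * a))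
    ≤ v * ENNReal.ofReal (Real.exp (γ * driftlessField γ X s x ω)) := by gcongr
  _ = chaosDensity γ X s x ω * (v * ENNReal.ofReal (Real.exp (-(γ ^ 2 / 2 * s)))) := by
    rw [mul_left_comm, chaosDensity, ← ENNReal.ofReal_mul (Real.exp_pos _).le, ← Real.exp_add,
      driftlessField]
    ring_nf
  _ ≤ chaosDensity γ X s x ω * b := by gcongr

end Chaos

section LogCorrelatedField

variable {E Ω : Type*} [PseudoMetricSpace E] [MeasurableSpace E] {m0 : MeasurableSpace Ω}

/-- A centered Gaussian field `X` whose value at each point is a Brownian motion in the scale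
parameter, adapted to `ℱ`, and such that at scale `t` two points within distance `exp (-t)` are
decorrelated by at most a constant `L`. -/
structure IsLogCorrelatedField (X : ℝ≥0 → E → Ω → ℝ) (ℱ : Filtration ℝ≥0 m0) (L : ℝ)
    (P : Measure Ω) : Prop where
  measurable_uncurry : ∀ t,
    Measurable[MeasurableSpace.prod ‹MeasurableSpace E› (ℱ t)] (Function.uncurry (X t))
  ae_continuous : ∀ᵐ ω ∂P, ∀ x, Continuous fun t => X t x ω
  isGaussianProcess : IsGaussianProcess (fun p : ℝ≥0 × E => X p.1 p.2) P
  integral_eq_zero : ∀ t x, ∫ ω, X t x ω ∂P = 0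
  variance_eq : ∀ t x, Var[X t x; P] = t
  sub_le_covariance : ∀ (t : ℝ≥0) (x y : E), dist x y ≤ Real.exp (-t) →
    t - L ≤ cov[X t x, X t y; P]
  indep_increment : ∀ ⦃s t : ℝ≥0⦄, s ≤ t → ∀ x,
    Indep (MeasurableSpace.comap (fun ω => X t x ω - X s x ω) inferInstance) (ℱ s) P

namespace IsLogCorrelatedField

variable {X : ℝ≥0 → E → Ω → ℝ} {ℱ : Filtration ℝ≥0 m0} {L : ℝ} {P : Measure Ω}

section Measurability

theorem measurable_field (hX : IsLogCorrelatedField X ℱ L P) (t : ℝ≥0) (x : E) :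
    Measurable[ℱ t] (X t x) :=
  (hX.measurable_uncurry t).comp measurable_prodMk_left

theorem measurable_uncurry_chaosDensity (hX : IsLogCorrelatedField X ℱ L P) (γ : ℝ) (t : ℝ≥0) :
    Measurable[MeasurableSpace.prod ‹MeasurableSpace E› (ℱ t)]
      (Function.uncurry (chaosDensity γ X t)) :=
  (((hX.measurable_uncurry t).const_mul γ).sub_const (γ ^ 2 / 2 * t)).exp.ennreal_ofReal

theorem measurable_uncurry_chaosDensity₀ (hX : IsLogCorrelatedField X ℱ L P) (γ : ℝ) (t : ℝ≥0) :
    Measurable (Function.uncurry (chaosDensity γ X t)) :=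
  (hX.measurable_uncurry_chaosDensity γ t).mono
    (sup_le_sup le_rfl (MeasurableSpace.comap_mono (ℱ.le t))) le_rfl

theorem measurable_chaosDensity (hX : IsLogCorrelatedField X ℱ L P) (γ : ℝ) (t : ℝ≥0) (x : E) :
    Measurable[ℱ t] (chaosDensity γ X t x) :=
  (hX.measurable_uncurry_chaosDensity γ t).comp measurable_prodMk_left

theorem measurable_driftlessField (hX : IsLogCorrelatedField X ℱ L P) (γ : ℝ) (s : ℝ≥0) (x : E) :
    Measurable[ℱ s] (driftlessField γ X s x) :=
  (hX.measurable_field s x).sub_const _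

theorem measurable_chaosMass (hX : IsLogCorrelatedField X ℱ L P) (γ : ℝ) (μ : Measure E)
    [SFinite μ] (A : Set E) (t : ℝ≥0) : Measurable[ℱ t] (chaosMass γ X μ A t) :=
  @Measurable.lintegral_prod_left' _ _ _ (ℱ t) _ _ _ (hX.measurable_uncurry_chaosDensity γ t)

end Measurability

theorem memLp_two (hX : IsLogCorrelatedField X ℱ L P) (t : ℝ≥0) (x : E) : MemLp (X t x) 2 P :=
  (hX.isGaussianProcess.hasGaussianLaw_eval (t, x)).memLp_two

theorem variance_increment (hX : IsLogCorrelatedField X ℱ L P) {s t : ℝ≥0} (hst : s ≤ t) (x : E) :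
    Var[fun ω => X t x ω - X s x ω; P] = t - s := by
  have hindep : (fun ω => X t x ω - X s x ω) ⟂ᵢ[P] X s x :=
    (IndepFun_iff_Indep _ _ _).mpr
      (indep_of_indep_of_le_right (hX.indep_increment hst x) (hX.measurable_field s x).comap_le)
  have hadd := hindep.variance_add ((hX.memLp_two t x).sub (hX.memLp_two s x)) (hX.memLp_two s x)
  rw [sub_add_cancel, hX.variance_eq, hX.variance_eq] at hadd
  exact eq_sub_of_add_eq hadd.symm

theorem lintegral_ofReal_exp_mul (hX : IsLogCorrelatedField X ℱ L P) (c : ℝ) (t : ℝ≥0) (x : E) :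
    ∫⁻ ω, ENNReal.ofReal (Real.exp (c * X t x ω)) ∂P
      = ENNReal.ofReal (Real.exp (c ^ 2 / 2 * t)) := by
  have hgauss : HasGaussianLaw (fun ω => c * X t x ω) P :=
    (hX.isGaussianProcess.hasGaussianLaw_eval (t, x)).fun_smul c
  rw [lintegral_ofReal_exp_of_hasGaussianLaw hgauss, integral_const_mul, hX.integral_eq_zero,
    variance_const_mul, hX.variance_eq]
  congr 2
  ring

theorem lintegral_mul_ofReal_exp_increment (hX : IsLogCorrelatedField X ℱ L P) (c : ℝ)
    {s t : ℝ≥0} (hst : s ≤ t) (x : E) {f : Ω → ℝ≥0∞} (hf : Measurable[ℱ s] f) :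
    ∫⁻ ω, f ω * ENNReal.ofReal (Real.exp (c * (X t x ω - X s x ω))) ∂P
      = (∫⁻ ω, f ω ∂P) * ENNReal.ofReal (Real.exp (c ^ 2 / 2 * (t - s))) := by
  have hgauss : HasGaussianLaw (fun ω => c * (X t x ω - X s x ω)) P :=
    (hX.isGaussianProcess.hasGaussianLaw_fun_sub (s := (t, x)) (t := (s, x))).fun_smul c
  have hmeas : Measurable fun ω => X t x ω - X s x ω :=
    ((hX.measurable_field t x).mono (ℱ.le t) le_rfl).sub
      ((hX.measurable_field s x).mono (ℱ.le s) le_rfl)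
  rw [lintegral_mul_eq_lintegral_mul_lintegral_of_independent_measurableSpace (ℱ.le s)
    hmeas.comap_le (hX.indep_increment hst x).symm hf
    ((comap_measurable _).const_mul c).exp.ennreal_ofReal,
    lintegral_ofReal_exp_of_hasGaussianLaw hgauss, integral_const_mul,
    integral_sub (hX.isGaussianProcess.hasGaussianLaw_eval (t, x)).integrable
      (hX.isGaussianProcess.hasGaussianLaw_eval (s, x)).integrable,
    hX.integral_eq_zero, hX.integral_eq_zero, variance_const_mul, hX.variance_increment hst]
  congr 3
  ring

section RootedMeasure

theorem lintegral_rootedMeasure (hX : IsLogCorrelatedField X ℱ L P) (γ : ℝ) (t : ℝ≥0) (x : E)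
    {f : Ω → ℝ≥0∞} (hf : Measurable f) :
    ∫⁻ ω, f ω ∂rootedMeasure γ X P t x = ∫⁻ ω, f ω * chaosDensity γ X t x ω ∂P := by
  rw [rootedMeasure, lintegral_withDensity_eq_lintegral_mul _
    ((hX.measurable_chaosDensity γ t x).mono (ℱ.le t) le_rfl) hf]
  simp only [Pi.mul_apply, mul_comm]

theorem lintegral_rootedMeasure_of_le (hX : IsLogCorrelatedField X ℱ L P) (γ : ℝ) {s t : ℝ≥0}
    (hst : s ≤ t) (x : E) {f : Ω → ℝ≥0∞} (hf : Measurable[ℱ s] f) :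
    ∫⁻ ω, f ω ∂rootedMeasure γ X P t x = ∫⁻ ω, f ω ∂rootedMeasure γ X P s x := by
  have hf0 : Measurable f := hf.mono (ℱ.le s) le_rfl
  set c : ℝ := γ ^ 2 / 2 * (t - s)
  have hdensity : ∀ ω, chaosDensity γ X t x ω = ENNReal.ofReal (Real.exp (-c)) *
      chaosDensity γ X s x ω * ENNReal.ofReal (Real.exp (γ * (X t x ω - X s x ω))) := by
    intro ω
    simp only [chaosDensity, ← ENNReal.ofReal_mul (Real.exp_pos _).le,
      ← Real.exp_add]
    congr 2
    ring
  have hcancel : ENNReal.ofReal (Real.exp (-c)) * ENNReal.ofReal (Real.exp c) = 1 := by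
    rw [← ENNReal.ofReal_mul (Real.exp_pos _).le, ← Real.exp_add]
    simp
  rw [hX.lintegral_rootedMeasure γ t x hf0, hX.lintegral_rootedMeasure γ s x hf0]
  calc ∫⁻ ω, f ω * chaosDensity γ X t x ω ∂P
      = ∫⁻ ω, ENNReal.ofReal (Real.exp (-c)) * (f ω * chaosDensity γ X s x ω) *
          ENNReal.ofReal (Real.exp (γ * (X t x ω - X s x ω))) ∂P := by
        simp only [hdensity, mul_assoc, mul_left_comm]
    _ = (∫⁻ ω, f ω * chaosDensity γ X s x ω ∂P) *
          (ENNReal.ofReal (Real.exp (-c)) * ENNReal.ofReal (Real.exp c)) := by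
        have hfZ : Measurable[ℱ s] fun ω => f ω * chaosDensity γ X s x ω :=
          hf.mul (hX.measurable_chaosDensity γ s x)
        rw [hX.lintegral_mul_ofReal_exp_increment γ hst x (hfZ.const_mul _),
          lintegral_const_mul _ (hfZ.mono (ℱ.le s) le_rfl)]
        ring
    _ = ∫⁻ ω, f ω * chaosDensity γ X s x ω ∂P := by rw [hcancel, mul_one]

theorem rootedMeasure_apply_of_le (hX : IsLogCorrelatedField X ℱ L P) (γ : ℝ) {s t : ℝ≥0}
    (hst : s ≤ t) (x : E) {H : Set Ω} (hH : MeasurableSet[ℱ s] H) :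
    rootedMeasure γ X P t x H = rootedMeasure γ X P s x H := by
  simpa only [lintegral_indicator_const (ℱ.le s _ hH), one_mul] using
    hX.lintegral_rootedMeasure_of_le γ hst x ((measurable_const (a := 1)).indicator hH)

theorem lintegral_exp_driftlessField (hX : IsLogCorrelatedField X ℱ L P) (γ p q : ℝ)
    {s u t : ℝ≥0} (hsu : s ≤ u) (hut : u ≤ t) (x : E) :
    ∫⁻ ω, ENNReal.ofReal (Real.exp (p * driftlessField γ X u x ω + q * driftlessField γ X s x ω))
        ∂rootedMeasure γ X P t x
      = ENNReal.ofReal (Real.exp ((p ^ 2 * u + 2 * p * q * s + q ^ 2 * s) / 2)) := by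
  have hmeas : Measurable[ℱ u] fun ω => ENNReal.ofReal (Real.exp
      (p * driftlessField γ X u x ω + q * driftlessField γ X s x ω)) :=
    (((hX.measurable_driftlessField γ u x).const_mul p).add (((hX.measurable_driftlessField
      γ s x).mono (ℱ.mono hsu) le_rfl).const_mul q)).exp.ennreal_ofReal
  have hpast : Measurable[ℱ s] fun ω => ENNReal.ofReal (Real.exp ((γ + p + q) * X s x ω)) :=
    ((hX.measurable_field s x).const_mul _).exp.ennreal_ofReal
  set c : ℝ := -(p * γ * u + q * γ * s + γ ^ 2 / 2 * u)
  rw [hX.lintegral_rootedMeasure_of_le γ hut x hmeas,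
    hX.lintegral_rootedMeasure γ u x (hmeas.mono (ℱ.le u) le_rfl)]
  calc ∫⁻ ω, ENNReal.ofReal (Real.exp
          (p * driftlessField γ X u x ω + q * driftlessField γ X s x ω)) *
          chaosDensity γ X u x ω ∂P
      = ∫⁻ ω, ENNReal.ofReal (Real.exp c) * ENNReal.ofReal (Real.exp ((γ + p + q) * X s x ω)) *
          ENNReal.ofReal (Real.exp ((γ + p) * (X u x ω - X s x ω))) ∂P := by
        refine lintegral_congr fun ω => ?_
        simp only [chaosDensity, driftlessField, ← ENNReal.ofReal_mul (Real.exp_pos _).le,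
          ← Real.exp_add, c]
        congr 2
        ring
    _ = ENNReal.ofReal (Real.exp ((p ^ 2 * u + 2 * p * q * s + q ^ 2 * s) / 2)) := by
        rw [hX.lintegral_mul_ofReal_exp_increment _ hsu x (hpast.const_mul _),
          lintegral_const_mul _ (hpast.mono (ℱ.le s) le_rfl), hX.lintegral_ofReal_exp_mul]
        simp only [← ENNReal.ofReal_mul (Real.exp_pos _).le,
          ← Real.exp_add, c]
        congr 2
        ring

theorem isProbabilityMeasure_rootedMeasure (hX : IsLogCorrelatedField X ℱ L P) (γ : ℝ) (t : ℝ≥0)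
    (x : E) : IsProbabilityMeasure (rootedMeasure γ X P t x) where
  measure_univ := by
    simpa using hX.lintegral_exp_driftlessField γ 0 0 le_rfl (le_refl t) x

end RootedMeasure

theorem ae_lowerSemicontinuous_chaosMass (hX : IsLogCorrelatedField X ℱ L P) (γ : ℝ) (μ : Measure E)
    (A : Set E) :
    ∀ᵐ ω ∂P, LowerSemicontinuous fun t => chaosMass γ X μ A t ω := by
  filter_upwards [hX.ae_continuous] with ω hω
  refine lowerSemicontinuous_lintegral (fun t => ?_) fun x => Continuous.lowerSemicontinuous ?_
  · exact (hX.measurable_uncurry_chaosDensity₀ γ t).of_uncurry_right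
  · have hcont := hω x
    exact ENNReal.continuous_ofReal.comp (by fun_prop)

section ChaosMass

variable (μ : Measure E) [SFinite μ]

theorem setLIntegral_chaosMass (hX : IsLogCorrelatedField X ℱ L P) (γ : ℝ) (A : Set E) (t : ℝ≥0)
    {H : Set Ω} (hH : MeasurableSet H) :
    ∫⁻ ω in H, chaosMass γ X μ A t ω ∂P = ∫⁻ x in A, rootedMeasure γ X P t x H ∂μ := by
  have := hX.isGaussianProcess.isProbabilityMeasure
  calc ∫⁻ ω in H, chaosMass γ X μ A t ω ∂P
      = ∫⁻ x in A, ∫⁻ ω in H, chaosDensity γ X t x ω ∂P ∂μ :=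
        lintegral_lintegral_swap
          ((hX.measurable_uncurry_chaosDensity₀ γ t).comp measurable_swap).aemeasurable
    _ = ∫⁻ x in A, rootedMeasure γ X P t x H ∂μ := by
        simp only [rootedMeasure, withDensity_apply _ hH]

theorem ennrealSupermartingale_chaosMass (hX : IsLogCorrelatedField X ℱ L P) (γ : ℝ) (A : Set E) :
    ENNRealSupermartingale (chaosMass γ X μ A) ℱ P where
  measurable := hX.measurable_chaosMass γ μ A
  setLIntegral_le s t hst H hH := by
    rw [hX.setLIntegral_chaosMass μ γ A t (ℱ.le s _ hH),
      hX.setLIntegral_chaosMass μ γ A s (ℱ.le s _ hH)]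
    simp only [hX.rootedMeasure_apply_of_le γ hst _ hH, le_refl]

theorem lintegral_chaosMass (hX : IsLogCorrelatedField X ℱ L P) (γ : ℝ) (A : Set E) (t : ℝ≥0) :
    ∫⁻ ω, chaosMass γ X μ A t ω ∂P = μ A := by
  have hprob := hX.isProbabilityMeasure_rootedMeasure γ t
  simpa using hX.setLIntegral_chaosMass μ γ A t MeasurableSet.univ

end ChaosMass

section LacunaryScales

theorem measurable_exp_driftlessField (hX : IsLogCorrelatedField X ℱ L P) (γ p q : ℝ)
    (s u : ℝ≥0) (x : E) :
    Measurable fun ω => Real.exp (p * driftlessField γ X u x ω + q * driftlessField γ X s x ω) :=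
  ((((hX.measurable_driftlessField γ u x).mono (ℱ.le u) le_rfl).const_mul p).add
    (((hX.measurable_driftlessField γ s x).mono (ℱ.le s) le_rfl).const_mul q)).exp

theorem integrable_exp_driftlessField (hX : IsLogCorrelatedField X ℱ L P) (γ p q : ℝ)
    {s u t : ℝ≥0} (hsu : s ≤ u) (hut : u ≤ t) (x : E) :
    Integrable (fun ω => Real.exp
      (p * driftlessField γ X u x ω + q * driftlessField γ X s x ω)) (rootedMeasure γ X P t x) := by
  refine (lintegral_ofReal_ne_top_iff_integrable
    (hX.measurable_exp_driftlessField γ p q s u x).aestronglyMeasurable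
    (ae_of_all _ fun ω => (Real.exp_pos _).le)).mp ?_
  rw [hX.lintegral_exp_driftlessField γ p q hsu hut]
  exact ENNReal.ofReal_ne_top

theorem integral_exp_driftlessField (hX : IsLogCorrelatedField X ℱ L P) (γ p q : ℝ)
    {s u t : ℝ≥0} (hsu : s ≤ u) (hut : u ≤ t) (x : E) :
    ∫ ω, Real.exp (p * driftlessField γ X u x ω + q * driftlessField γ X s x ω)
        ∂rootedMeasure γ X P t x
      = Real.exp ((p ^ 2 * u + 2 * p * q * s + q ^ 2 * s) / 2) := by
  rw [integral_eq_lintegral_of_nonneg_ae (ae_of_all _ fun ω => (Real.exp_pos _).le)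
    (hX.measurable_exp_driftlessField γ p q s u x).aestronglyMeasurable,
    hX.lintegral_exp_driftlessField γ p q hsu hut, ENNReal.toReal_ofReal (Real.exp_pos _).le]

theorem integral_exp_mul_driftlessField (hX : IsLogCorrelatedField X ℱ L P) (γ p : ℝ)
    {u t : ℝ≥0} (hut : u ≤ t) (x : E) :
    ∫ ω, Real.exp (p * driftlessField γ X u x ω) ∂rootedMeasure γ X P t x
      = Real.exp (p ^ 2 * u / 2) := by
  simpa using hX.integral_exp_driftlessField γ p 0 le_rfl hut x

theorem memLp_two_exp_driftlessField (hX : IsLogCorrelatedField X ℱ L P) (γ p : ℝ)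
    {u t : ℝ≥0} (hut : u ≤ t) (x : E) :
    MemLp (fun ω => Real.exp (p * driftlessField γ X u x ω)) 2 (rootedMeasure γ X P t x) := by
  have hmeas := hX.measurable_exp_driftlessField γ p 0 u u x
  simp only [zero_mul, add_zero] at hmeas
  refine (memLp_two_iff_integrable_sq hmeas.aestronglyMeasurable).mpr ?_
  simpa only [sq, ← Real.exp_add] using hX.integrable_exp_driftlessField γ p p le_rfl hut x

theorem covariance_exp_driftlessField (hX : IsLogCorrelatedField X ℱ L P) (γ p q : ℝ)
    {s u t : ℝ≥0} (hsu : s ≤ u) (hut : u ≤ t) (x : E) :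
    cov[fun ω => Real.exp (p * driftlessField γ X u x ω),
        fun ω => Real.exp (q * driftlessField γ X s x ω); rootedMeasure γ X P t x]
      = Real.exp ((p ^ 2 * u + 2 * p * q * s + q ^ 2 * s) / 2)
        - Real.exp (p ^ 2 * u / 2) * Real.exp (q ^ 2 * s / 2) := by
  have := hX.isProbabilityMeasure_rootedMeasure γ t x
  rw [covariance_eq_sub (hX.memLp_two_exp_driftlessField γ p hut x)
    (hX.memLp_two_exp_driftlessField γ q (hsu.trans hut) x),
    hX.integral_exp_mul_driftlessField γ p hut,
    hX.integral_exp_mul_driftlessField γ q (hsu.trans hut),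
    ← hX.integral_exp_driftlessField γ p q hsu hut x]
  simp only [Pi.mul_apply, Real.exp_add]

theorem memLp_two_driftlessExp (hX : IsLogCorrelatedField X ℱ L P) (γ : ℝ) {τ t : ℝ≥0}
    (hτt : τ ^ 2 ≤ t) (x : E) : MemLp (driftlessExp γ X τ x) 2 (rootedMeasure γ X P t x) :=
  hX.memLp_two_exp_driftlessField γ _ hτt x

theorem integral_driftlessExp (hX : IsLogCorrelatedField X ℱ L P) (γ : ℝ) {τ t : ℝ≥0}
    (hτ : 0 < τ) (hτt : τ ^ 2 ≤ t) (x : E) :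
    ∫ ω, driftlessExp γ X τ x ω ∂rootedMeasure γ X P t x = Real.exp (1 / 2) := by
  have : (0 : ℝ) < τ := hτ
  simp only [driftlessExp]
  rw [hX.integral_exp_mul_driftlessField γ _ hτt]
  push_cast
  congr 1
  field_simp

theorem covariance_driftlessExp (hX : IsLogCorrelatedField X ℱ L P) (γ : ℝ) {ρ τ t : ℝ≥0}
    (hρ : 0 < ρ) (hρτ : ρ ≤ τ) (hτt : τ ^ 2 ≤ t) (x : E) :
    cov[driftlessExp γ X τ x, driftlessExp γ X ρ x; rootedMeasure γ X P t x]
      = Real.exp (1 + ρ / τ) - Real.exp 1 := by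
  have : (0 : ℝ) < ρ := hρ
  have : (0 : ℝ) < τ := hρ.trans_le hρτ
  unfold driftlessExp
  rw [hX.covariance_exp_driftlessField γ _ _ (pow_le_pow_left₀ hρ.le hρτ 2) hτt, ← Real.exp_add]
  push_cast
  congr 2 <;> field_simp <;> ring

theorem variance_driftlessExp_le (hX : IsLogCorrelatedField X ℱ L P) (γ : ℝ) {τ t : ℝ≥0}
    (hτ : 0 < τ) (hτt : τ ^ 2 ≤ t) (x : E) :
    Var[driftlessExp γ X τ x; rootedMeasure γ X P t x] ≤ Real.exp 2 := by
  rw [← covariance_self (hX.memLp_two_driftlessExp γ hτt x).aemeasurable,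
    hX.covariance_driftlessExp γ hτ le_rfl hτt, div_self (NNReal.coe_ne_zero.mpr hτ.ne'),
    one_add_one_eq_two]
  exact sub_le_self _ (Real.exp_pos _).le

theorem covariance_driftlessExp_pow_le (hX : IsLogCorrelatedField X ℱ L P) (γ : ℝ) {r t : ℝ≥0}
    (hr : 1 ≤ r) {m n : ℕ} (hmn : m < n) (hn : (r ^ n) ^ 2 ≤ t) (x : E) :
    cov[driftlessExp γ X (r ^ n) x, driftlessExp γ X (r ^ m) x; rootedMeasure γ X P t x]
      ≤ Real.exp (1 + 1 / r) - Real.exp 1 := by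
  have hr0 : 0 < r := zero_lt_one.trans_le hr
  have hratio : ((r ^ m : ℝ≥0) : ℝ) / (r ^ n : ℝ≥0) ≤ 1 / r := by
    rw [div_le_div_iff₀ (NNReal.coe_pos.mpr (pow_pos hr0 n)) (NNReal.coe_pos.mpr hr0), one_mul]
    exact_mod_cast (pow_succ r m).symm.trans_le (pow_le_pow_right₀ hr hmn)
  rw [hX.covariance_driftlessExp γ (pow_pos hr0 m) (pow_le_pow_right₀ hr hmn.le) hn]
  gcongr

theorem rootedMeasure_forall_driftlessField_le_le (hX : IsLogCorrelatedField X ℱ L P) (γ : ℝ)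
    {N : ℕ} (hN : N ≠ 0) {a : ℝ} (ha : 0 ≤ a) {r : ℝ≥0} (hr : 1 ≤ r)
    (har : Real.exp (a / r) ≤ 5 / 4) {t : ℝ≥0} (ht : ∀ n < N, (r ^ (n + 1)) ^ 2 ≤ t) (x : E) :
    rootedMeasure γ X P t x {ω | ∀ n < N, driftlessField γ X ((r ^ (n + 1)) ^ 2) x ω ≤ a}
      ≤ ENNReal.ofReal (16 * (Real.exp 2 / N + (Real.exp (1 + 1 / r) - Real.exp 1))) := by
  have := hX.isProbabilityMeasure_rootedMeasure γ t x
  have hpos : ∀ n, 0 < r ^ (n + 1) := fun n => pow_pos (zero_lt_one.trans_le hr) _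
  have hscale : ∀ n ∈ Finset.range N, (r ^ (n + 1)) ^ 2 ≤ t := fun n hn =>
    ht n (Finset.mem_range.mp hn)
  have hcov : ∀ m ∈ Finset.range N, ∀ n ∈ Finset.range N, m ≠ n →
      cov[driftlessExp γ X (r ^ (m + 1)) x, driftlessExp γ X (r ^ (n + 1)) x;
        rootedMeasure γ X P t x] ≤ Real.exp (1 + 1 / r) - Real.exp 1 := by
    intro m hm n hn hmn
    obtain hlt | hlt := hmn.lt_or_gt
    · rw [covariance_comm]
      exact hX.covariance_driftlessExp_pow_le γ hr (by lia) (hscale n hn) x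
    · exact hX.covariance_driftlessExp_pow_le γ hr (by lia) (hscale m hm) x
  -- The mean `exp (1 / 2) ≥ 3 / 2` exceeds `5 / 4` by `1 / 4`; hence the factor `16`.
  have hsub : {ω | ∀ n < N, driftlessField γ X ((r ^ (n + 1)) ^ 2) x ω ≤ a} ⊆ {ω | ∀ n ∈
      Finset.range N, driftlessExp γ X (r ^ (n + 1)) x ω ≤ Real.exp (1 / 2) - 1 / 4} := by
    intro ω hω n hn
    have hexponent : ((r ^ (n + 1) : ℝ≥0) : ℝ)⁻¹ * driftlessField γ X ((r ^ (n + 1)) ^ 2) x ω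
        ≤ a / r := by
      rw [inv_mul_eq_div]
      gcongr
      · exact hω n (Finset.mem_range.mp hn)
      · exact_mod_cast le_self_pow₀ hr n.succ_ne_zero
    calc driftlessExp γ X (r ^ (n + 1)) x ω ≤ 5 / 4 := (Real.exp_le_exp.mpr hexponent).trans har
      _ ≤ Real.exp (1 / 2) - 1 / 4 := by linarith [Real.add_one_le_exp (1 / 2 : ℝ)]
  refine (measure_mono hsub).trans ((measure_forall_le_sub_le_of_covariance_le
    (by simpa using hN) (by norm_num) ?_ (fun n hn => hX.memLp_two_driftlessExp γ (hscale n hn) x)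
    (fun n hn => hX.integral_driftlessExp γ (hpos n) (hscale n hn) x)
    (fun n hn => hX.variance_driftlessExp_le γ (hpos n) (hscale n hn) x) hcov).trans_eq ?_)
  · exact sub_nonneg.mpr (Real.exp_le_exp.mpr (by simp))
  · rw [Finset.card_range]
    congr 1
    ring

theorem exists_finset_rootedMeasure_forall_driftlessField_le_le
    (hX : IsLogCorrelatedField X ℱ L P) (γ : ℝ) {ε : ℝ≥0} (hε : 0 < ε) :
    ∃ N : ℕ, ∀ a : ℝ, 0 ≤ a → ∃ T : Finset ℝ≥0, T.card ≤ N ∧ ∀ t, (∀ s ∈ T, s ≤ t) → ∀ x,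
      rootedMeasure γ X P t x {ω | ∀ s ∈ T, driftlessField γ X s x ω ≤ a} ≤ ε := by
  have hN : Tendsto (fun N : ℕ => 16 * (Real.exp 2 / N)) atTop (𝓝 (16 * 0)) :=
    (tendsto_const_div_atTop_nhds_zero_nat _).const_mul _
  rw [mul_zero] at hN
  obtain ⟨N, hNε, hN0⟩ := ((hN.eventually_lt_const (half_pos hε : (0 : ℝ) < ε / 2)).and
    (eventually_ne_atTop 0)).exists
  refine ⟨N, fun a ha => ?_⟩
  have hinv : ∀ b : ℝ, Tendsto (fun r : ℝ≥0 => b / r) atTop (𝓝 0) := fun b =>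
    (NNReal.tendsto_coe_atTop.mpr tendsto_id).const_div_atTop b
  have hr1 : Tendsto (fun r : ℝ≥0 => Real.exp (a / r)) atTop (𝓝 1) := by
    simpa [Function.comp_def] using (Real.continuous_exp.tendsto 0).comp (hinv a)
  have hr2 : Tendsto (fun r : ℝ≥0 => 16 * (Real.exp (1 + 1 / r) - Real.exp 1)) atTop (𝓝 0) := by
    have := (Real.continuous_exp.tendsto (1 + 0)).comp ((hinv 1).const_add 1)
    simpa using (this.sub_const (Real.exp 1)).const_mul 16
  obtain ⟨r, hr, har, hrε⟩ := ((eventually_ge_atTop 1).and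
    ((hr1.eventually_le_const (by norm_num : (1 : ℝ) < 5 / 4)).and
      (hr2.eventually_lt_const (half_pos hε : (0 : ℝ) < ε / 2)))).exists
  refine ⟨(Finset.range N).image fun n => (r ^ (n + 1)) ^ 2,
    Finset.card_image_le.trans_eq (Finset.card_range N), fun t ht x => ?_⟩
  simp only [Finset.forall_mem_image, Finset.mem_range] at ht ⊢
  exact (hX.rootedMeasure_forall_driftlessField_le_le γ hN0 ha hr har ht x).trans
    (ENNReal.ofReal_le_coe.mpr (by linarith))

end LacunaryScales

section LocalMass

theorem lintegral_chaosDensity_mul_inv_le (hX : IsLogCorrelatedField X ℱ L P) (γ : ℝ) (s : ℝ≥0)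
    {x y : E} (hxy : dist x y ≤ Real.exp (-s)) :
    ∫⁻ ω, chaosDensity γ X s x ω * (chaosDensity γ X s y ω)⁻¹ ∂rootedMeasure γ X P s x
      ≤ ENNReal.ofReal (Real.exp (2 * γ ^ 2 * L)) := by
  have := hX.isGaussianProcess.isProbabilityMeasure
  have hZ : ∀ z, Measurable (chaosDensity γ X s z) := fun z =>
    (hX.measurable_chaosDensity γ s z).mono (ℱ.le s) le_rfl
  set D : Ω → ℝ := fun ω => 2 * γ * X s x ω - γ * X s y ω
  have hD : HasGaussianLaw D P :=
    (hX.isGaussianProcess.hasGaussianLaw_prodMk (s := (s, x)) (t := (s, y))).map_fun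
      ((2 * γ) • ContinuousLinearMap.fst ℝ ℝ ℝ - γ • ContinuousLinearMap.snd ℝ ℝ ℝ)
  have hDmean : ∫ ω, D ω ∂P = 0 := by
    rw [integral_sub (((hX.memLp_two s x).integrable one_le_two).const_mul _)
      (((hX.memLp_two s y).integrable one_le_two).const_mul _), integral_const_mul,
      integral_const_mul, hX.integral_eq_zero, hX.integral_eq_zero]
    ring
  have hDvar : Var[D; P] ≤ γ ^ 2 * (s + 4 * L) := by
    rw [variance_fun_sub ((hX.memLp_two s x).const_mul _) ((hX.memLp_two s y).const_mul _),
      covariance_const_mul_left, covariance_const_mul_right, variance_const_mul,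
      variance_const_mul, hX.variance_eq, hX.variance_eq]
    nlinarith [mul_le_mul_of_nonneg_left (hX.sub_le_covariance s x y hxy) (sq_nonneg γ)]
  have hratio : Measurable fun ω => chaosDensity γ X s x ω * (chaosDensity γ X s y ω)⁻¹ :=
    (hZ x).mul (hZ y).inv
  rw [hX.lintegral_rootedMeasure γ s x hratio]
  calc ∫⁻ ω, chaosDensity γ X s x ω * (chaosDensity γ X s y ω)⁻¹ * chaosDensity γ X s x ω ∂P
      = ∫⁻ ω, ENNReal.ofReal (Real.exp (-(γ ^ 2 / 2 * s))) *
          ENNReal.ofReal (Real.exp (D ω)) ∂P := by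
        refine lintegral_congr fun ω => ?_
        simp only [chaosDensity, ← ENNReal.ofReal_inv_of_pos (Real.exp_pos _), ← Real.exp_neg,
          ← ENNReal.ofReal_mul (Real.exp_pos _).le, ← Real.exp_add, D]
        congr 2
        ring
    _ = ENNReal.ofReal (Real.exp (-(γ ^ 2 / 2 * s) + Var[D; P] / 2)) := by
        rw [lintegral_const_mul' _ _ ENNReal.ofReal_ne_top,
          lintegral_ofReal_exp_of_hasGaussianLaw hD, hDmean, zero_add,
          ← ENNReal.ofReal_mul (Real.exp_pos _).le, ← Real.exp_add]
    _ ≤ ENNReal.ofReal (Real.exp (2 * γ ^ 2 * L)) := by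
        gcongr
        linarith

variable {μ : Measure E}

theorem chaosDensity_mul_measure_sq_le (hX : IsLogCorrelatedField X ℱ L P) (γ : ℝ) (s : ℝ≥0)
    (x : E) (B : Set E) (ω : Ω) :
    chaosDensity γ X s x ω * μ B ^ 2 ≤ chaosMass γ X μ B s ω *
      ∫⁻ y in B, chaosDensity γ X s x ω * (chaosDensity γ X s y ω)⁻¹ ∂μ := by
  have hcauchySchwarz := sq_measure_univ_le_lintegral_mul_lintegral_inv (μ := μ.restrict B)
    (hX.measurable_uncurry_chaosDensity₀ γ s).of_uncurry_right.aemeasurable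
    (ae_of_all _ fun y => chaosDensity_ne_zero γ X s y ω)
    (ae_of_all _ fun y => chaosDensity_ne_top γ X s y ω)
  rw [Measure.restrict_apply_univ] at hcauchySchwarz
  rw [lintegral_const_mul' _ _ (chaosDensity_ne_top γ X s x ω), mul_left_comm]
  gcongr
  exact hcauchySchwarz

variable [SFinite μ] [OpensMeasurableSpace E]

theorem setLIntegral_chaosDensity_mul_measure_ball_le (hX : IsLogCorrelatedField X ℱ L P) (γ : ℝ)
    {s : ℝ≥0} {x : E} (hμ : μ (Metric.ball x (Real.exp (-s))) ≠ ∞) {K : ℝ≥0∞} {H : Set Ω}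
    (hH : MeasurableSet H)
    (hmass : ∀ ω ∈ H, chaosMass γ X μ (Metric.ball x (Real.exp (-s))) s ω ≤ K) :
    (∫⁻ ω in H, chaosDensity γ X s x ω ∂rootedMeasure γ X P s x) *
      μ (Metric.ball x (Real.exp (-s))) ≤ K * ENNReal.ofReal (Real.exp (2 * γ ^ 2 * L)) := by
  have := hX.isProbabilityMeasure_rootedMeasure γ s x
  set B : Set E := Metric.ball x (Real.exp (-s))
  set Q : Measure Ω := rootedMeasure γ X P s x
  set R : Ω → E → ℝ≥0∞ := fun ω y => chaosDensity γ X s x ω * (chaosDensity γ X s y ω)⁻¹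
  have hZ : Measurable (chaosDensity γ X s x) :=
    (hX.measurable_chaosDensity γ s x).mono (ℱ.le s) le_rfl
  have hR : Measurable (Function.uncurry R) := (hZ.comp measurable_fst).mul
    ((hX.measurable_uncurry_chaosDensity₀ γ s).comp measurable_swap).inv
  have hRint : Measurable fun ω => ∫⁻ y in B, R ω y ∂μ := hR.lintegral_prod_right'
  obtain hB | hB := eq_or_ne (μ B) 0
  · simp [hB]
  suffices hsq : (∫⁻ ω in H, chaosDensity γ X s x ω ∂Q) * μ B ^ 2
      ≤ K * ENNReal.ofReal (Real.exp (2 * γ ^ 2 * L)) * μ B by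
    rw [sq, ← mul_assoc] at hsq
    exact (ENNReal.mul_le_mul_iff_left hB hμ).mp hsq
  calc (∫⁻ ω in H, chaosDensity γ X s x ω ∂Q) * μ B ^ 2
      = ∫⁻ ω in H, chaosDensity γ X s x ω * μ B ^ 2 ∂Q := (lintegral_mul_const _ hZ).symm
    _ ≤ ∫⁻ ω in H, K * ∫⁻ y in B, R ω y ∂μ ∂Q :=
        setLIntegral_mono' hH fun ω hω =>
          (hX.chaosDensity_mul_measure_sq_le γ s x B ω).trans (by gcongr; exact hmass ω hω)
    _ ≤ ∫⁻ ω, K * ∫⁻ y in B, R ω y ∂μ ∂Q := setLIntegral_le_lintegral _ _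
    _ = K * ∫⁻ y in B, ∫⁻ ω, R ω y ∂Q ∂μ := by
        rw [lintegral_const_mul _ hRint,
          lintegral_lintegral_swap hR.aemeasurable]
    _ ≤ K * ∫⁻ _ in B, ENNReal.ofReal (Real.exp (2 * γ ^ 2 * L)) ∂μ := by
        gcongr K * ?_
        refine setLIntegral_mono' Metric.isOpen_ball.measurableSet fun y hy => ?_
        exact hX.lintegral_chaosDensity_mul_inv_le γ s (Metric.mem_ball'.mp hy).le
    _ = K * ENNReal.ofReal (Real.exp (2 * γ ^ 2 * L)) * μ B := by
        rw [setLIntegral_const, ← mul_assoc]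

theorem rootedMeasure_inter_lt_driftlessField_le (hX : IsLogCorrelatedField X ℱ L P) {γ : ℝ}
    (hγ : 0 < γ) {s t : ℝ≥0} (hst : s ≤ t) {x : E} {v K : ℝ≥0∞} (hv : v ≠ 0) (hK : K ≠ ∞)
    {A : Set E} (hsub : Metric.ball x (Real.exp (-s)) ⊆ A) (hA : μ A ≠ ∞)
    (hball : v * ENNReal.ofReal (Real.exp (-(γ ^ 2 / 2 * s))) ≤ μ (Metric.ball x (Real.exp (-s))))
    (a : ℝ) :
    rootedMeasure γ X P t x ({ω | chaosMass γ X μ A s ω < K} ∩ {ω | a < driftlessField γ X s x ω})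
      ≤ K * ENNReal.ofReal (Real.exp (2 * γ ^ 2 * L)) / v *
        ENNReal.ofReal (Real.exp (-(γ * a))) := by
  set H : Set Ω := {ω | chaosMass γ X μ A s ω < K}
  set G : Set Ω := {ω | a < driftlessField γ X s x ω}
  set Q : Measure Ω := rootedMeasure γ X P s x
  set B : Set E := Metric.ball x (Real.exp (-s))
  have hH : MeasurableSet[ℱ s] H :=
    measurableSet_lt (hX.measurable_chaosMass γ μ A s) measurable_const
  have hG : MeasurableSet[ℱ s] G :=
    measurableSet_lt measurable_const (hX.measurable_driftlessField γ s x)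
  have hZ : Measurable (chaosDensity γ X s x) :=
    (hX.measurable_chaosDensity γ s x).mono (ℱ.le s) le_rfl
  have hmarkov : v * ENNReal.ofReal (Real.exp (γ * a)) * Q (H ∩ G)
      ≤ K * ENNReal.ofReal (Real.exp (2 * γ ^ 2 * L)) := calc
    v * ENNReal.ofReal (Real.exp (γ * a)) * Q (H ∩ G)
      = ∫⁻ _ in H ∩ G, v * ENNReal.ofReal (Real.exp (γ * a)) ∂Q := (setLIntegral_const _ _).symm
    _ ≤ ∫⁻ ω in H ∩ G, chaosDensity γ X s x ω * μ B ∂Q :=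
      setLIntegral_mono' (ℱ.le s _ (hH.inter hG)) fun ω hω =>
        mul_ofReal_exp_le_chaosDensity_mul hγ.le (le_of_lt hω.2) hball
    _ ≤ ∫⁻ ω in H, chaosDensity γ X s x ω * μ B ∂Q := lintegral_mono_set Set.inter_subset_left
    _ = (∫⁻ ω in H, chaosDensity γ X s x ω ∂Q) * μ B := lintegral_mul_const _ hZ
    _ ≤ K * ENNReal.ofReal (Real.exp (2 * γ ^ 2 * L)) :=
      hX.setLIntegral_chaosDensity_mul_measure_ball_le γ (measure_ne_top_of_subset hsub hA)
        (ℱ.le s _ hH) fun ω hω => (lintegral_mono_set hsub).trans (le_of_lt hω)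
  rw [hX.rootedMeasure_apply_of_le γ hst x (hH.inter hG), Real.exp_neg,
    ENNReal.ofReal_inv_of_pos (Real.exp_pos _), ← div_eq_mul_inv,
    ENNReal.le_div_iff_mul_le (by simp [Real.exp_pos]) (by simp),
    ENNReal.le_div_iff_mul_le (.inl hv) (.inr (ENNReal.mul_ne_top hK ENNReal.ofReal_ne_top))]
  exact (by ring : _ = _).trans_le hmarkov

end LocalMass

section Vanishing

variable {μ : Measure E} [SFinite μ] {γ : ℝ}

theorem exists_forall_finset_measure_exists_le_chaosMass_le (hX : IsLogCorrelatedField X ℱ L P)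
    (γ : ℝ) {A : Set E} (hA : μ A ≠ ∞) {ε : ℝ≥0} (hε : ε ≠ 0) :
    ∃ K : ℝ≥0∞, K ≠ ∞ ∧
      ∀ T : Finset ℝ≥0, P {ω | ∃ s ∈ T, K ≤ chaosMass γ X μ A s ω} ≤ ε := by
  have hε' : (ε : ℝ≥0∞) ≠ 0 := ENNReal.coe_ne_zero.mpr hε
  set K : ℝ≥0∞ := μ A / ε + 1
  have hK : K ≠ ∞ := ENNReal.add_ne_top.mpr ⟨ENNReal.div_ne_top hA hε', ENNReal.one_ne_top⟩
  refine ⟨K, hK, fun T => (ENNReal.mul_le_mul_iff_right (by simp [K]) hK).mp ?_⟩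
  calc K * P {ω | ∃ s ∈ T, K ≤ chaosMass γ X μ A s ω}
      ≤ ∫⁻ ω, chaosMass γ X μ A 0 ω ∂P := by
        simpa using (hX.ennrealSupermartingale_chaosMass μ γ A).mul_measure_exists_mem_finset_le
          K T (fun _ _ => zero_le) MeasurableSet.univ
    _ = μ A := hX.lintegral_chaosMass μ γ A 0
    _ = μ A / ε * ε := (ENNReal.div_mul_cancel hε' ENNReal.coe_ne_top).symm
    _ ≤ K * ε := by
        gcongr
        exact le_self_add

variable [OpensMeasurableSpace E]

theorem rootedMeasure_forall_chaosMass_lt_le (hX : IsLogCorrelatedField X ℱ L P) (hγ : 0 < γ)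
    {v K : ℝ≥0∞} (hv : v ≠ 0) (hK : K ≠ ∞) {A : Set E} (hA : μ A ≠ ∞) {x : E}
    (hsub : Metric.ball x 1 ⊆ A)
    (hball : ∀ s : ℝ≥0, v * ENNReal.ofReal (Real.exp (-(γ ^ 2 / 2 * s)))
      ≤ μ (Metric.ball x (Real.exp (-s))))
    {T : Finset ℝ≥0} {t : ℝ≥0} (hT : ∀ s ∈ T, s ≤ t) (a : ℝ) :
    rootedMeasure γ X P t x {ω | ∀ s ∈ T, chaosMass γ X μ A s ω < K}
      ≤ rootedMeasure γ X P t x {ω | ∀ s ∈ T, driftlessField γ X s x ω ≤ a} +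
        T.card * (K * ENNReal.ofReal (Real.exp (2 * γ ^ 2 * L)) / v *
          ENNReal.ofReal (Real.exp (-(γ * a)))) := by
  set bad : ℝ≥0 → Set Ω := fun s =>
    {ω | chaosMass γ X μ A s ω < K} ∩ {ω | a < driftlessField γ X s x ω}
  have hcover : {ω | ∀ s ∈ T, chaosMass γ X μ A s ω < K}
      ⊆ {ω | ∀ s ∈ T, driftlessField γ X s x ω ≤ a} ∪ ⋃ s ∈ T, bad s := by
    intro ω hω
    by_cases hlow : ∀ s ∈ T, driftlessField γ X s x ω ≤ a
    · exact .inl hlow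
    · push Not at hlow
      obtain ⟨s, hs, has⟩ := hlow
      exact .inr (Set.mem_biUnion hs ⟨hω s hs, has⟩)
  have hbad : ∀ s ∈ T, rootedMeasure γ X P t x (bad s)
      ≤ K * ENNReal.ofReal (Real.exp (2 * γ ^ 2 * L)) / v *
        ENNReal.ofReal (Real.exp (-(γ * a))) := fun s hs =>
    hX.rootedMeasure_inter_lt_driftlessField_le hγ (hT s hs) hv hK
      ((Metric.ball_subset_ball (Real.exp_le_one_iff.mpr (by simp))).trans hsub) hA (hball s) a
  refine (measure_mono hcover).trans ((measure_union_le _ _).trans ?_)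
  gcongr
  refine (measure_biUnion_finset_le T bad).trans ((Finset.sum_le_card_nsmul _ _ _ hbad).trans_eq ?_)
  rw [nsmul_eq_mul]

theorem exists_finset_rootedMeasure_forall_chaosMass_lt_le (hX : IsLogCorrelatedField X ℱ L P)
    (hγ : 0 < γ) {v K : ℝ≥0∞} (hv : v ≠ 0) (hK : K ≠ ∞) {A : Set E} (hA : μ A ≠ ∞)
    {ε : ℝ≥0} (hε : 0 < ε) :
    ∃ T : Finset ℝ≥0, ∀ t, (∀ s ∈ T, s ≤ t) → ∀ x, Metric.ball x 1 ⊆ A →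
      (∀ s : ℝ≥0, v * ENNReal.ofReal (Real.exp (-(γ ^ 2 / 2 * s)))
        ≤ μ (Metric.ball x (Real.exp (-s)))) →
      rootedMeasure γ X P t x {ω | ∀ s ∈ T, chaosMass γ X μ A s ω < K} ≤ ε := by
  obtain ⟨N, hN⟩ := hX.exists_finset_rootedMeasure_forall_driftlessField_le_le γ (half_pos hε)
  set C : ℝ≥0∞ := K * ENNReal.ofReal (Real.exp (2 * γ ^ 2 * L)) / v
  have hC : C ≠ ∞ := ENNReal.div_ne_top (ENNReal.mul_ne_top hK ENNReal.ofReal_ne_top) hv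
  have hlim : Tendsto (fun a : ℝ => N * (C * ENNReal.ofReal (Real.exp (-(γ * a))))) atTop
      (𝓝 (N * (C * ENNReal.ofReal 0))) := by
    refine ENNReal.Tendsto.const_mul (ENNReal.Tendsto.const_mul ?_ (.inr hC)) (.inr (by simp))
    exact (ENNReal.continuous_ofReal.tendsto 0).comp
      (Real.tendsto_exp_neg_atTop_nhds_zero.comp (tendsto_id.const_mul_atTop hγ))
  rw [ENNReal.ofReal_zero, mul_zero, mul_zero] at hlim
  obtain ⟨a, haε, ha0⟩ := ((hlim.eventually_le_const
    (ENNReal.coe_pos.mpr (half_pos hε))).and (eventually_ge_atTop 0)).exists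
  obtain ⟨T, hcard, hT⟩ := hN a ha0
  refine ⟨T, fun t ht x hsub hball => ?_⟩
  calc rootedMeasure γ X P t x {ω | ∀ s ∈ T, chaosMass γ X μ A s ω < K}
      ≤ rootedMeasure γ X P t x {ω | ∀ s ∈ T, driftlessField γ X s x ω ≤ a} +
          T.card * (C * ENNReal.ofReal (Real.exp (-(γ * a)))) :=
        hX.rootedMeasure_forall_chaosMass_lt_le hγ hv hK hA hsub hball ht a
    _ ≤ ↑(ε / 2) + ↑(ε / 2) := by
        refine add_le_add (hT t ht x) (le_trans ?_ haε)
        gcongr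
    _ = ε := by rw [← ENNReal.coe_add, add_halves]

theorem exists_setLIntegral_chaosMass_le (hX : IsLogCorrelatedField X ℱ L P) (hγ : 0 < γ)
    {v : ℝ≥0∞} (hv : v ≠ 0) {A : Set E} (hAm : MeasurableSet A)
    (hA : μ (Metric.thickening 1 A) ≠ ∞)
    (hball : ∀ x ∈ A, ∀ s : ℝ≥0, v * ENNReal.ofReal (Real.exp (-(γ ^ 2 / 2 * s)))
      ≤ μ (Metric.ball x (Real.exp (-s))))
    {ε : ℝ≥0} (hε : ε ≠ 0) :
    ∃ t, ∃ H : Set Ω, MeasurableSet[ℱ t] H ∧ P Hᶜ ≤ ε ∧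
      ∫⁻ ω in H, chaosMass γ X μ A t ω ∂P ≤ ε := by
  obtain ⟨K, hK, htight⟩ := hX.exists_forall_finset_measure_exists_le_chaosMass_le γ hA hε
  have hAfin : μ A ≠ ∞ := measure_ne_top_of_subset (Metric.self_subset_thickening one_pos A) hA
  obtain ⟨δ, hδ0, hδ⟩ := ENNReal.exists_nnreal_pos_mul_lt hAfin (ENNReal.coe_ne_zero.mpr hε)
  obtain ⟨T, hT⟩ := hX.exists_finset_rootedMeasure_forall_chaosMass_lt_le hγ hv hK hA hδ0
  set t : ℝ≥0 := T.sup id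
  have ht : ∀ s ∈ T, s ≤ t := fun s hs => Finset.le_sup (f := id) hs
  set H : Set Ω := {ω | ∀ s ∈ T, chaosMass γ X μ (Metric.thickening 1 A) s ω < K}
  have hH : MeasurableSet[ℱ t] H := by
    simp only [H, Set.ofPred_forall]
    exact T.measurableSet_biInter fun s hs => ℱ.mono (ht s hs) _
      (measurableSet_lt (hX.measurable_chaosMass γ μ _ s) measurable_const)
  refine ⟨t, H, hH, ?_, ?_⟩
  · simpa [H, Set.compl_ofPred] using htight T
  · calc ∫⁻ ω in H, chaosMass γ X μ A t ω ∂P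
        = ∫⁻ x in A, rootedMeasure γ X P t x H ∂μ :=
          hX.setLIntegral_chaosMass μ γ A t (ℱ.le t _ hH)
      _ ≤ ∫⁻ _ in A, δ ∂μ := setLIntegral_mono' hAm fun x hx =>
          hT t ht x (Metric.ball_subset_thickening hx 1) (hball x hx)
      _ = δ * μ A := setLIntegral_const _ _
      _ ≤ ε := hδ.le

theorem ae_tendsto_chaosMass_zero (hX : IsLogCorrelatedField X ℱ L P) (hγ : 0 < γ)
    {v : ℝ≥0∞} (hv : v ≠ 0) {A : Set E} (hAm : MeasurableSet A)
    (hA : μ (Metric.thickening 1 A) ≠ ∞)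
    (hball : ∀ x ∈ A, ∀ s : ℝ≥0, v * ENNReal.ofReal (Real.exp (-(γ ^ 2 / 2 * s)))
      ≤ μ (Metric.ball x (Real.exp (-s)))) :
    ∀ᵐ ω ∂P, Tendsto (fun t => chaosMass γ X μ A t ω) atTop (𝓝 0) :=
  (hX.ennrealSupermartingale_chaosMass μ γ A).ae_tendsto_zero
    (hX.ae_lowerSemicontinuous_chaosMass γ μ A)
    fun _ hε => hX.exists_setLIntegral_chaosMass_le hγ hv hAm hA hball hε

end Vanishing

end IsLogCorrelatedField

end LogCorrelatedField

/-! ### Star-scale invariant covariances -/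

theorem indep_comap_congr {Ω β : Type*} [mβ : MeasurableSpace β] {m m0 : MeasurableSpace Ω}
    {P : Measure Ω} {f g : Ω → β} (hf : Indep (mβ.comap f) m P) (hfg : f =ᵐ[P] g) :
    Indep (mβ.comap g) m P := by
  rw [Indep_iff] at hf ⊢
  rintro _ H ⟨s, hs, rfl⟩ hH
  have hpreimage : f ⁻¹' s =ᵐ[P] g ⁻¹' s := hfg.preimage s
  have hinter : (f ⁻¹' s ∩ H : Set Ω) =ᵐ[P] (g ⁻¹' s ∩ H : Set Ω) := hpreimage.inter .rfl
  rw [← measure_congr hpreimage, ← measure_congr hinter]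
  exact hf _ H ⟨s, hs, rfl⟩ hH

theorem isGaussianProcess_of_hasGaussianLaw_sum {T Ω : Type*} {m0 : MeasurableSpace Ω}
    {P : Measure Ω} {X : T → Ω → ℝ} (hX : ∀ t, AEMeasurable (X t) P)
    (hsum : ∀ (n : ℕ) (c : Fin n → ℝ) (t : Fin n → T),
      HasGaussianLaw (fun ω => ∑ i, c i * X (t i) ω) P) :
    IsGaussianProcess X P where
  hasGaussianLaw I := by
    classical
    refine ⟨isGaussian_of_isGaussian_map fun l => ?_⟩
    have hrestrict : AEMeasurable (fun ω => I.restrict (X · ω)) P :=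
      aemeasurable_pi_lambda _ fun i => hX i
    have hlinear : ⇑l ∘ (fun ω => I.restrict (X · ω)) = fun ω =>
        ∑ i, l (fun j => if I.equivFin.symm i = j then 1 else 0) * X (I.equivFin.symm i) ω := by
      ext ω
      rw [Function.comp_apply, ← ContinuousLinearMap.coe_coe, LinearMap.pi_apply_eq_sum_univ,
        ← I.equivFin.symm.sum_comp]
      simp only [Finset.restrict, smul_eq_mul, ContinuousLinearMap.coe_coe, mul_comm]
    rw [AEMeasurable.map_map_of_aemeasurable l.continuous.aemeasurable hrestrict, hlinear]
    exact (hsum _ _ _).isGaussian_map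

section DilationIntegral

theorem setIntegral_one_div_Icc_one_exp {t : ℝ} (ht : 0 ≤ t) :
    ∫ u in Set.Icc 1 (Real.exp t), 1 / u = t := by
  rw [integral_Icc_eq_integral_Ioc, ← intervalIntegral.integral_of_le (Real.one_le_exp ht),
    integral_one_div_of_pos one_pos (Real.exp_pos t), div_one, Real.log_exp]

variable {E : Type*} [NormedAddCommGroup E] [NormedSpace ℝ E]

theorem integrableOn_dilation_div_Icc {k : E → ℝ} (hk : Continuous k) (z : E) (T : ℝ) :
    IntegrableOn (fun u : ℝ => k (u • z) / u) (Set.Icc 1 T) :=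
  ((by fun_prop : Continuous fun u : ℝ => k (u • z)).continuousOn.div continuousOn_id
    fun _ hu => (one_pos.trans_le hu.1).ne').integrableOn_Icc

theorem one_div_sub_le_dilation_div {k : E → ℝ} {C : ℝ≥0}
    (hC : LipschitzOnWith C k (Metric.closedBall 0 1)) (hk0 : k 0 = 1) {u : ℝ} (hu : 0 < u)
    {z : E} (huz : u * ‖z‖ ≤ 1) : 1 / u - C * ‖z‖ ≤ k (u • z) / u := by
  have hnorm : ‖u • z‖ = u * ‖z‖ := by rw [norm_smul, Real.norm_of_nonneg hu.le]
  have hlip := hC.dist_le_mul 0 (Metric.mem_closedBall_self zero_le_one) (u • z)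
    (mem_closedBall_zero_iff.mpr (hnorm.trans_le huz))
  rw [dist_zero_left, Real.dist_eq, hk0, hnorm] at hlip
  rw [le_div_iff₀ hu, sub_mul, one_div_mul_cancel hu.ne']
  linarith [le_abs_self (1 - k (u • z))]

theorem exists_sub_le_setIntegral_dilation_div [ProperSpace E] {k : E → ℝ}
    (hk : LocallyLipschitz k) (hk0 : k 0 = 1) :
    ∃ L : ℝ, ∀ t, 0 ≤ t → ∀ z : E, ‖z‖ ≤ Real.exp (-t) →
      t - L ≤ ∫ u in Set.Icc 1 (Real.exp t), k (u • z) / u := by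
  obtain ⟨C, hC⟩ := (hk.locallyLipschitzOn (s := Metric.closedBall 0 1))
    |>.exists_lipschitzOnWith_of_compact (isCompact_closedBall 0 1)
  refine ⟨C, fun t ht z hz => ?_⟩
  have hscale : Real.exp t * ‖z‖ ≤ 1 := calc
    Real.exp t * ‖z‖ ≤ Real.exp t * Real.exp (-t) := by gcongr
    _ = 1 := by rw [← Real.exp_add, add_neg_cancel, Real.exp_zero]
  have hint : IntegrableOn (fun u : ℝ => 1 / u) (Set.Icc 1 (Real.exp t)) :=
    integrableOn_dilation_div_Icc (continuous_const (y := 1)) z _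
  have hconst : IntegrableOn (fun _ : ℝ => C * ‖z‖) (Set.Icc 1 (Real.exp t)) :=
    integrableOn_const (by simp)
  calc t - C
      ≤ t - (Real.exp t - 1) * (C * ‖z‖) := by
        nlinarith [C.coe_nonneg, mul_nonneg C.coe_nonneg (norm_nonneg z)]
    _ = ∫ u in Set.Icc 1 (Real.exp t), (1 / u - C * ‖z‖) := by
        rw [integral_sub hint hconst, setIntegral_one_div_Icc_one_exp ht, setIntegral_const,
          Real.volume_real_Icc_of_le (Real.one_le_exp ht), smul_eq_mul]
    _ ≤ ∫ u in Set.Icc 1 (Real.exp t), k (u • z) / u :=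
        setIntegral_mono_on (hint.sub hconst) (integrableOn_dilation_div_Icc hk.continuous z _)
          measurableSet_Icc fun u hu => one_div_sub_le_dilation_div hC hk0
            (one_pos.trans_le hu.1) ((by gcongr; exact hu.2 : _ ≤ _).trans hscale)

end DilationIntegral

theorem covariance_congr_ae {Ω : Type*} {m0 : MeasurableSpace Ω} {P : Measure Ω}
    {X X' Y Y' : Ω → ℝ} (hX : X =ᵐ[P] X') (hY : Y =ᵐ[P] Y') : cov[X, Y; P] = cov[X', Y'; P] := by
  rw [covariance, covariance, integral_congr_ae hX, integral_congr_ae hY]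
  exact integral_congr_ae <| by filter_upwards [hX, hY] with ω hωX hωY using by rw [hωX, hωY]

section Modification

variable {E Ω : Type*} {m0 : MeasurableSpace Ω} {P : Measure Ω} {X : ℝ → E → Ω → ℝ}

/-- The filtration, indexed by the scales `0 ≤ s`, generated by the fields `X u` with
`0 ≤ u ≤ s`. -/
def fieldFiltration (X : ℝ → E → Ω → ℝ) (hX : ∀ t x, Measurable (X t x)) :
    Filtration ℝ≥0 m0 where
  seq s := ⨆ u ∈ Set.Icc (0 : ℝ) s, ⨆ x, MeasurableSpace.comap (X u x) inferInstance
  mono' _ _ hst := biSup_mono fun _ hu => ⟨hu.1, hu.2.trans hst⟩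
  le' _ := iSup₂_le fun u _ => iSup_le fun x => (hX u x).comap_le

theorem measurable_fieldFiltration (hX : ∀ t x, Measurable (X t x)) (s : ℝ≥0) (x : E) :
    Measurable[fieldFiltration X hX s] (X s x) :=
  Measurable.of_comap_le <| le_iSup₂_of_le (s : ℝ) ⟨s.coe_nonneg, le_rfl⟩ <|
    le_iSup (fun x => MeasurableSpace.comap (X s x) inferInstance) x

theorem indep_increment_fieldFiltration [IsProbabilityMeasure P]
    (hX : ∀ t x, Measurable (X t x))
    (hindep : ∀ s t : ℝ, 0 ≤ s → s < t →
      Indep (⨆ x, MeasurableSpace.comap (fun ω => X t x ω - X s x ω) inferInstance)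
        (⨆ u ∈ Set.Icc (0 : ℝ) s, ⨆ x, MeasurableSpace.comap (X u x) inferInstance) P)
    {s t : ℝ≥0} (hst : s ≤ t) (x : E) :
    Indep (MeasurableSpace.comap (fun ω => X t x ω - X s x ω) inferInstance)
      (fieldFiltration X hX s) P := by
  obtain rfl | hlt := hst.eq_or_lt
  · simp only [sub_self, MeasurableSpace.comap_const]
    exact indep_bot_left _
  · exact indep_of_indep_of_le_left (hindep s t s.coe_nonneg hlt)
      (le_iSup (fun x => MeasurableSpace.comap (fun ω => X t x ω - X s x ω) inferInstance) x)

variable [PseudoMetricSpace E] [SecondCountableTopology E] [MeasurableSpace E] [BorelSpace E]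
  [Nonempty E]

theorem ae_measurableModification_eq
    (hcont : ∀ᵐ ω ∂P, Continuous fun p : ℝ × E => X p.1 p.2 ω) :
    ∀ᵐ ω ∂P, ∀ t x, measurableModification (X t) x ω = X t x ω := by
  filter_upwards [hcont] with ω hω t x
  exact measurableModification_eq (hω.comp (Continuous.prodMk_right t)) x

theorem isLogCorrelatedField_measurableModification {L : ℝ}
    (hX : ∀ t x, Measurable (X t x))
    (hgauss : IsGaussianProcess (fun p : ℝ × E => X p.1 p.2) P)
    (hmean : ∀ t x, ∫ ω, X t x ω ∂P = 0)
    (hvar : ∀ t, 0 ≤ t → ∀ x, Var[X t x; P] = t)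
    (hcov : ∀ t, 0 ≤ t → ∀ x y, dist x y ≤ Real.exp (-t) → t - L ≤ cov[X t x, X t y; P])
    (hcont : ∀ᵐ ω ∂P, Continuous fun p : ℝ × E => X p.1 p.2 ω)
    (hindep : ∀ s t : ℝ, 0 ≤ s → s < t →
      Indep (⨆ x, MeasurableSpace.comap (fun ω => X t x ω - X s x ω) inferInstance)
        (⨆ u ∈ Set.Icc (0 : ℝ) s, ⨆ x, MeasurableSpace.comap (X u x) inferInstance) P) :
    IsLogCorrelatedField (fun t : ℝ≥0 => measurableModification (X t)) (fieldFiltration X hX)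
      L P := by
  have := hgauss.isProbabilityMeasure
  have hmod := ae_measurableModification_eq hcont
  have heq : ∀ (t : ℝ) x, measurableModification (X t) x =ᵐ[P] X t x := fun t x =>
    hmod.mono fun ω hω => hω t x
  exact
  { measurable_uncurry := fun t =>
      @measurable_uncurry_measurableModification _ _ _ _ _ _ _ (fieldFiltration X hX t) _
        (measurable_fieldFiltration hX t)
    ae_continuous := by
      filter_upwards [hmod, hcont] with ω hω hωcont x
      simp only [hω]
      exact hωcont.comp (by fun_prop : Continuous fun t : ℝ≥0 => ((t : ℝ), x))
    isGaussianProcess :=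
      (hgauss.comp_right fun p : ℝ≥0 × E => ((p.1 : ℝ), p.2)).congr fun p => (heq p.1 p.2).symm
    integral_eq_zero := fun t x => (integral_congr_ae (heq t x)).trans (hmean t x)
    variance_eq := fun t x => (variance_congr (heq t x)).trans (hvar t t.coe_nonneg x)
    sub_le_covariance := fun t x y hxy =>
      (hcov t t.coe_nonneg x y hxy).trans_eq (covariance_congr_ae (heq t x) (heq t y)).symm
    indep_increment := fun s t hst x =>
      indep_comap_congr (indep_increment_fieldFiltration hX hindep hst x)
        ((heq t x).sub (heq s x)).symm }

end Modification

section StarScaleInvariant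

variable {E Ω : Type*} [NormedAddCommGroup E] [NormedSpace ℝ E] [FiniteDimensional ℝ E]
  [MeasurableSpace E] [BorelSpace E]

theorem addHaar_ball_exp_neg_ge (μ : Measure E) [μ.IsAddHaarMeasure] {c s : ℝ} (hs : 0 ≤ s)
    (hc : Module.finrank ℝ E ≤ c) (x : E) :
    μ (Metric.ball 0 1) * ENNReal.ofReal (Real.exp (-(c * s)))
      ≤ μ (Metric.ball x (Real.exp (-s))) := by
  rw [Measure.addHaar_ball_of_pos μ x (Real.exp_pos _), mul_comm, ← Real.exp_nat_mul]
  gcongr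
  nlinarith

theorem ae_tendsto_setIntegral_chaos_zero {m0 : MeasurableSpace Ω} {P : Measure Ω}
    {X : ℝ → E → Ω → ℝ} {μ : Measure E} {A : Set E} {γ : ℝ}
    (hcont : ∀ᵐ ω ∂P, Continuous fun p : ℝ × E => X p.1 p.2 ω)
    (hlim : ∀ᵐ ω ∂P, Tendsto
      (fun t => chaosMass γ (fun t : ℝ≥0 => measurableModification (X t)) μ A t ω) atTop (𝓝 0)) :
    ∀ᵐ ω ∂P, Tendsto (fun t : ℝ => ∫ x in A, Real.exp (γ * X t x ω - γ ^ 2 / 2 * t) ∂μ)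
      atTop (𝓝 0) := by
  filter_upwards [hcont, hlim, ae_measurableModification_eq hcont] with ω hω hωlim hmod
  have htoReal : Tendsto (fun t : ℝ => (chaosMass γ (fun t : ℝ≥0 => measurableModification (X t))
      μ A t.toNNReal ω).toReal) atTop (𝓝 0) :=
    (ENNReal.tendsto_toReal ENNReal.zero_ne_top).comp
      (hωlim.comp tendsto_real_toNNReal_atTop)
  refine htoReal.congr' ?_
  filter_upwards [eventually_ge_atTop 0] with t ht
  have hpath : Continuous fun x => Real.exp (γ * X t x ω - γ ^ 2 / 2 * t) := by
    have := hω.comp (Continuous.prodMk_right t)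
    fun_prop
  rw [integral_eq_lintegral_of_nonneg_ae (ae_of_all _ fun _ => (Real.exp_pos _).le)
    hpath.aestronglyMeasurable]
  simp only [chaosMass, chaosDensity, hmod, Real.coe_toNNReal t ht]

theorem critical_gmc_vanishes_general {m0 : MeasurableSpace Ω} {P : Measure Ω} (μ : Measure E)
    [μ.IsAddHaarMeasure] {γ : ℝ} (hγ : 0 < γ) (hγd : 2 * Module.finrank ℝ E ≤ γ ^ 2)
    {k : E → ℝ} (hk : LocallyLipschitz k) (hk0 : k 0 = 1) {X : ℝ → E → Ω → ℝ}
    (hXmeas : ∀ t x, Measurable (X t x))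
    (hXgauss : ∀ (n : ℕ) (c : Fin n → ℝ) (t : Fin n → ℝ) (x : Fin n → E),
      ∃ v : ℝ≥0, P.map (fun ω => ∑ i, c i * X (t i) (x i) ω) = gaussianReal 0 v)
    (hXcent : ∀ t x, ∫ ω, X t x ω ∂P = 0)
    (hXcov : ∀ t, 0 ≤ t → ∀ x y,
      ∫ ω, X t x ω * X t y ω ∂P = ∫ u in Set.Icc 1 (Real.exp t), k (u • (x - y)) / u)
    (hXcont : ∀ᵐ ω ∂P, Continuous fun p : ℝ × E => X p.1 p.2 ω)
    (hXindep : ∀ s t : ℝ, 0 ≤ s → s < t →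
      Indep (⨆ x, MeasurableSpace.comap (fun ω => X t x ω - X s x ω) inferInstance)
        (⨆ u ∈ Set.Icc (0 : ℝ) s, ⨆ x, MeasurableSpace.comap (X u x) inferInstance) P)
    {A : Set E} (hAm : MeasurableSet A) (hA : Bornology.IsBounded A) :
    ∀ᵐ ω ∂P, Tendsto (fun t : ℝ => ∫ x in A, Real.exp (γ * X t x ω - γ ^ 2 / 2 * t) ∂μ)
      atTop (𝓝 0) := by
  have hgauss : IsGaussianProcess (fun p : ℝ × E => X p.1 p.2) P := by
    refine isGaussianProcess_of_hasGaussianLaw_sum (fun p => (hXmeas p.1 p.2).aemeasurable)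
      fun n c p => ⟨?_⟩
    obtain ⟨v, hv⟩ := hXgauss n c (fun i => (p i).1) fun i => (p i).2
    exact hv ▸ inferInstance
  have hcov : ∀ t, 0 ≤ t → ∀ x y,
      cov[X t x, X t y; P] = ∫ u in Set.Icc 1 (Real.exp t), k (u • (x - y)) / u := by
    intro t ht x y
    simp only [covariance, hXcent, sub_zero, hXcov t ht]
  have hvar : ∀ t, 0 ≤ t → ∀ x, Var[X t x; P] = t := by
    intro t ht x
    rw [← covariance_self (hXmeas t x).aemeasurable, hcov t ht]
    simp only [sub_self, smul_zero, hk0, setIntegral_one_div_Icc_one_exp ht]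
  obtain ⟨L, hL⟩ := exists_sub_le_setIntegral_dilation_div hk hk0
  have hfield := isLogCorrelatedField_measurableModification hXmeas hgauss hXcent hvar
    (fun t ht x y hxy => (hL t ht (x - y) (dist_eq_norm x y ▸ hxy)).trans_eq (hcov t ht x y).symm)
    hXcont hXindep
  exact ae_tendsto_setIntegral_chaos_zero hXcont <| hfield.ae_tendsto_chaosMass_zero hγ
    (Metric.measure_ball_pos μ 0 one_pos).ne' hAm hA.thickening.measure_lt_top.ne
    fun x _ s => addHaar_ball_exp_neg_ge μ s.coe_nonneg (by linarith) x

end StarScaleInvariant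

theorem critical_gmc_vanishes
    {d : ℕ} (hd : 1 ≤ d)
    {Ω : Type*} [m0 : MeasurableSpace Ω] (P : Measure Ω) [IsProbabilityMeasure P]
    (k : EuclideanSpace ℝ (Fin d) → ℝ)
    (hk1 : ContDiff ℝ 1 k) (hk0 : k 0 = 1) (hkb : ∀ z, |k z| ≤ 1)
    (hksupp : HasCompactSupport k)
    (hkpd : ∀ (n : ℕ) (z : Fin n → EuclideanSpace ℝ (Fin d)) (c : Fin n → ℝ),
      0 ≤ ∑ i, ∑ j, c i * c j * k (z i - z j))
    (X : ℝ → EuclideanSpace ℝ (Fin d) → Ω → ℝ)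
    (hXmeas : ∀ t x, Measurable (X t x))
    (hXgauss : ∀ (n : ℕ) (c : Fin n → ℝ) (t : Fin n → ℝ)
        (x : Fin n → EuclideanSpace ℝ (Fin d)),
      ∃ v : NNReal,
        Measure.map (fun ω => ∑ i, c i * X (t i) (x i) ω) P = gaussianReal 0 v)
    (hXcent : ∀ t x, ∫ ω, X t x ω ∂P = 0)
    (hXcov : ∀ t, 0 ≤ t → ∀ x y : EuclideanSpace ℝ (Fin d),
      ∫ ω, X t x ω * X t y ω ∂P = ∫ u in Set.Icc (1:ℝ) (Real.exp t), k (u • (x - y)) / u)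
    (hXcont : ∀ᵐ ω ∂P, Continuous fun p : ℝ × EuclideanSpace ℝ (Fin d) => X p.1 p.2 ω)
    (hXindep : ∀ s t : ℝ, 0 ≤ s → s < t →
      Indep (⨆ x : EuclideanSpace ℝ (Fin d),
          MeasurableSpace.comap (fun ω => X t x ω - X s x ω) inferInstance)
        (⨆ u ∈ Set.Icc (0:ℝ) s, ⨆ x : EuclideanSpace ℝ (Fin d),
          MeasurableSpace.comap (X u x) inferInstance) P)
    :
    ∀ A : Set (EuclideanSpace ℝ (Fin d)), MeasurableSet A → Bornology.IsBounded A →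
    ∀ᵐ ω ∂P, Tendsto (fun t : ℝ =>
        ∫ x in A, Real.exp (Real.sqrt (2 * (d:ℝ)) * X t x ω - (d:ℝ) * t))
      atTop (nhds 0) := by
  intro A hAm hA
  have hd0 : (0 : ℝ) < 2 * d := by positivity
  have hsq : √(2 * (d : ℝ)) ^ 2 = 2 * d := Real.sq_sqrt hd0.le
  have hlim := critical_gmc_vanishes_general volume (Real.sqrt_pos.mpr hd0)
    (by rw [hsq, finrank_euclideanSpace_fin]) hk1.locallyLipschitz hk0 hXmeas hXgauss hXcent hXcov
    hXcont hXindep hAm hA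
  simpa only [hsq, mul_div_cancel_left₀ (d : ℝ) two_ne_zero] using hlim
end
end
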